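/- Every circulant scheme of prime power degree (i.e., every circulant scheme on a finite cyclic group of order p^n, p prime, n ≥ 1) is sesquiseparable. -/

import Mathlib

open Set

universe u

/-- A coherent configuration on a finite set `Ω`: a partition `S` of `Ω × Ω`
satisfying (C1) the diagonal is a union of classes, (C2) closure under converse,
(C3) well-defined intersection numbers. -/
structure CohCfg (Ω : Type u) : Type u where
  S : Set (Set (Ω × Ω))
  finite : Finite Ω
  cover : ∀ p : Ω × Ω, ∃ s ∈ S, p ∈ s
  disj : ∀ s ∈ S, ∀ t ∈ S, s ≠ t → s ∩ t = ∅
  nonemp : ∀ s ∈ S, s.Nonempty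
  diag : ∀ s ∈ S, (∃ p ∈ s, p.1 = p.2) → ∀ p ∈ s, p.1 = p.2
  conv : ∀ s ∈ S, {p : Ω × Ω | (p.2, p.1) ∈ s} ∈ S
  inum : ∀ r ∈ S, ∀ s ∈ S, ∀ t ∈ S, ∀ p ∈ t, ∀ q ∈ t,
    {γ : Ω | (p.1, γ) ∈ r ∧ (γ, p.2) ∈ s}.ncard =
    {γ : Ω | (q.1, γ) ∈ r ∧ (γ, q.2) ∈ s}.ncard

namespace CohCfg

variable {Ω Ω' : Type u}

/-- The intersection number `c^t_{rs}` computed at the pair `p`. -/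
noncomputable def cnum (r s : Set (Ω × Ω)) (p : Ω × Ω) : ℕ :=
  {γ : Ω | (p.1, γ) ∈ r ∧ (γ, p.2) ∈ s}.ncard

/-- `X` is a scheme (homogeneous) if the full diagonal is a basis relation. -/
def IsScheme (X : CohCfg Ω) : Prop := {p : Ω × Ω | p.1 = p.2} ∈ X.S

/-- Commutativity: `c^t_{rs} = c^t_{sr}`. -/
def IsCommutative (X : CohCfg Ω) : Prop :=
  ∀ r ∈ X.S, ∀ s ∈ X.S, ∀ p : Ω × Ω, cnum r s p = cnum s r p

/-- `s` is a relation of `X`, i.e. a union of basis relations. -/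
def IsRelationOf (X : CohCfg Ω) (s : Set (Ω × Ω)) : Prop :=
  ∀ t ∈ X.S, (t ∩ s).Nonempty → t ⊆ s

/-- `X ≤ Y`: every (basis) relation of `X` is a relation of `Y`. -/
def le (X Y : CohCfg Ω) : Prop := ∀ s ∈ X.S, IsRelationOf Y s

/-- The diagonal relation `1_Δ` of a subset `Δ`. -/
def diagRel (Δ : Set Ω) : Set (Ω × Ω) := {p | p.1 = p.2 ∧ p.1 ∈ Δ}

/-- `Δ` is a fiber of `X`. -/
def IsFiber (X : CohCfg Ω) (Δ : Set Ω) : Prop := diagRel Δ ∈ X.S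

/-- `αs = {β | (α,β) ∈ s}`. -/
def pointSet (s : Set (Ω × Ω)) (α : Ω) : Set Ω := {β | (α, β) ∈ s}

/-- `X` is partly regular: some point `α` has `|αs| ≤ 1` for all basis relations. -/
def PartlyRegular (X : CohCfg Ω) : Prop :=
  ∃ α : Ω, ∀ s ∈ X.S, (pointSet s α).ncard ≤ 1

/-- The image `s^f` of a relation under a map of points. -/
def relImage (f : Ω → Ω') (s : Set (Ω × Ω)) : Set (Ω' × Ω') :=
  (fun p : Ω × Ω => (f p.1, f p.2)) '' s

/-- `φ` is an algebraic isomorphism from `X` to `X'`. -/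
structure IsAlgIso (X : CohCfg Ω) (X' : CohCfg Ω')
    (φ : Set (Ω × Ω) → Set (Ω' × Ω')) : Prop where
  bijOn : Set.BijOn φ X.S X'.S
  cnum_eq : ∀ r ∈ X.S, ∀ s ∈ X.S, ∀ t ∈ X.S, ∀ p ∈ t, ∀ q ∈ φ t,
    cnum r s p = cnum (φ r) (φ s) q

/-- The natural extension of an algebraic isomorphism to unions of basis relations. -/
def algImage (X : CohCfg Ω) (φ : Set (Ω × Ω) → Set (Ω' × Ω')) (s : Set (Ω × Ω)) :
    Set (Ω' × Ω') := ⋃₀ (φ '' {t | t ∈ X.S ∧ t ⊆ s})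

/-- The image `Δ^φ` of a fiber under an algebraic isomorphism. -/
def fiberImage (X : CohCfg Ω) (φ : Set (Ω × Ω) → Set (Ω' × Ω')) (Δ : Set Ω) : Set Ω' :=
  {α' | (α', α') ∈ φ (diagRel Δ)}

/-- `Y` is the point extension `X_α`: the smallest coherent configuration `≥ X`
having `1_α` as a basis relation. -/
def IsPointExt (X : CohCfg Ω) (α : Ω) (Y : CohCfg Ω) : Prop :=
  le X Y ∧ ({(α, α)} : Set (Ω × Ω)) ∈ Y.S ∧
    ∀ Z : CohCfg Ω, le X Z → ({(α, α)} : Set (Ω × Ω)) ∈ Z.S → le Y Z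

/-- `φ` has an `(α,α')`-extension: an algebraic isomorphism `X_α → X'_{α'}`
extending `φ` and sending `1_α` to `1_{α'}`. -/
def HasExtension (X : CohCfg Ω) (X' : CohCfg Ω') (φ : Set (Ω × Ω) → Set (Ω' × Ω'))
    (α : Ω) (α' : Ω') : Prop :=
  ∃ (Y : CohCfg Ω) (Y' : CohCfg Ω') (ψ : Set (Ω × Ω) → Set (Ω' × Ω')),
    IsPointExt X α Y ∧ IsPointExt X' α' Y' ∧ IsAlgIso Y Y' ψ ∧
    (∀ s ∈ X.S, algImage Y ψ s = φ s) ∧ ψ {(α, α)} = {(α', α')}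

/-- A sesquiclosed algebraic isomorphism: has an `(α,α')`-extension for all
`α ∈ Δ ∈ F(X)` and `α' ∈ Δ^φ`. -/
def SesquiclosedIso (X : CohCfg Ω) (X' : CohCfg Ω')
    (φ : Set (Ω × Ω) → Set (Ω' × Ω')) : Prop :=
  IsAlgIso X X' φ ∧
  ∀ Δ : Set Ω, IsFiber X Δ → ∀ α ∈ Δ, ∀ α' ∈ fiberImage X φ Δ, HasExtension X X' φ α α'

/-- `φ` is induced by the combinatorial isomorphism `f`. -/
def InducedBy (X : CohCfg Ω) (X' : CohCfg Ω') (φ : Set (Ω × Ω) → Set (Ω' × Ω'))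
    (f : Ω → Ω') : Prop :=
  Function.Bijective f ∧ ∀ s ∈ X.S, φ s = relImage f s

/-- `X` is separable: every algebraic isomorphism from `X` is induced by an isomorphism. -/
def Separable (X : CohCfg Ω) : Prop :=
  ∀ (Ω'' : Type u) (X' : CohCfg Ω'') (φ : Set (Ω × Ω) → Set (Ω'' × Ω'')),
    IsAlgIso X X' φ → ∃ f : Ω → Ω'', InducedBy X X' φ f

/-- `X` is sesquiseparable: every sesquiclosed algebraic isomorphism from `X`
is induced by an isomorphism. -/
def Sesquiseparable (X : CohCfg Ω) : Prop :=
  ∀ (Ω'' : Type u) (X' : CohCfg Ω'') (φ : Set (Ω × Ω) → Set (Ω'' × Ω'')),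
    SesquiclosedIso X X' φ → ∃ f : Ω → Ω'', InducedBy X X' φ f

/-- A sesquiclosed coherent configuration: (S1) the fibers of every one-point
extension `X_α` are the nonempty sets `αs`, and (S2) the identity algebraic
automorphism is sesquiclosed. -/
def SesquiclosedCfg (X : CohCfg Ω) : Prop :=
  (∀ α : Ω, ∀ Y : CohCfg Ω, IsPointExt X α Y →
     ∀ Δ : Set Ω, (IsFiber Y Δ ↔ ∃ s ∈ X.S, Δ = pointSet s α ∧ Δ.Nonempty)) ∧
  SesquiclosedIso X X id

/-- A parabolic of `X`: a relation that is an equivalence relation on `Ω`. -/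
def IsParabolic (X : CohCfg Ω) (e : Set (Ω × Ω)) : Prop :=
  IsRelationOf X e ∧ (∀ a : Ω, (a, a) ∈ e) ∧ (∀ p ∈ e, (p.2, p.1) ∈ e) ∧
    ∀ a b c : Ω, (a, b) ∈ e → (b, c) ∈ e → (a, c) ∈ e

/-- The class of `a` modulo the equivalence relation `e`. -/
def eClass (e : Set (Ω × Ω)) (a : Ω) : Set Ω := {b | (a, b) ∈ e}

/-- `Δ/e` is a section of `X`: `e` is a parabolic and `Δ` is a class of a
parabolic containing `e`. -/
def IsSection (X : CohCfg Ω) (Δ : Set Ω) (e : Set (Ω × Ω)) : Prop :=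
  IsParabolic X e ∧ ∃ d : Set (Ω × Ω), IsParabolic X d ∧ e ⊆ d ∧ ∃ a : Ω, Δ = eClass d a

/-- The point set of the section `Δ/e`: the `e`-classes of points of `Δ`. -/
abbrev Sec (Δ : Set Ω) (e : Set (Ω × Ω)) : Type u :=
  {Γ : Set Ω // ∃ a ∈ Δ, Γ = eClass e a}

/-- The relation `s_𝔖` on the section `𝔖 = Δ/e`. -/
def secRel (Δ : Set Ω) (e : Set (Ω × Ω)) (s : Set (Ω × Ω)) :
    Set (Sec Δ e × Sec Δ e) :=
  {p | ∃ a ∈ p.1.1, ∃ b ∈ p.2.1, (a, b) ∈ s}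

/-- `Y` is the coherent configuration `X_𝔖` on the section `𝔖 = Δ/e`. -/
def IsSectionCfg (X : CohCfg Ω) (Δ : Set Ω) (e : Set (Ω × Ω))
    (Y : CohCfg (Sec Δ e)) : Prop :=
  Y.S = {t | ∃ s ∈ X.S, t = secRel Δ e s ∧ t.Nonempty}

/-- The restriction `s_Δ` of a relation to a subset `Δ`. -/
def restRel (Δ : Set Ω) (s : Set (Ω × Ω)) : Set (↥Δ × ↥Δ) := {p | (p.1.1, p.2.1) ∈ s}

/-- `Y` is the restriction `X_Δ` of `X` to `Δ`. -/
def IsRestrictionCfg (X : CohCfg Ω) (Δ : Set Ω) (Y : CohCfg ↥Δ) : Prop :=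
  Y.S = {t | ∃ s ∈ X.S, t = restRel Δ s ∧ t.Nonempty}

/-- `Iso(X, X', φ)`: isomorphisms inducing the algebraic isomorphism `φ`. -/
def IsoSet (X : CohCfg Ω) (X' : CohCfg Ω') (φ : Set (Ω × Ω) → Set (Ω' × Ω')) :
    Set (Ω → Ω') :=
  {f | Function.Bijective f ∧ ∀ s ∈ X.S, relImage f s = φ s}

/-- `X` is schurian: its basis relations are the orbits of `Aut(X)` on `Ω × Ω`. -/
def Schurian (X : CohCfg Ω) : Prop :=
  ∀ s ∈ X.S, ∀ p ∈ s, ∀ q ∈ s, ∃ f : Ω → Ω,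
    (Function.Bijective f ∧ ∀ t ∈ X.S, relImage f t = t) ∧ (f p.1, f p.2) = q

/-- `e ⊆ rad(s)`: `s` is a union of products of pairs of `e`-classes it meets. -/
def RadGE (e s : Set (Ω × Ω)) : Prop :=
  ∀ p ∈ s, ∀ a b : Ω, (p.1, a) ∈ e → (p.2, b) ∈ e → (a, b) ∈ s

/-- The `e₁/e₀`-condition: every basis relation disjoint from `e₁` has `e₀` in
its radical. -/
def WedgeCond (X : CohCfg Ω) (e0 e1 : Set (Ω × Ω)) : Prop :=
  ∀ s ∈ X.S, s ∩ e1 = ∅ → RadGE e0 s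

/-- A circulant coherent configuration on a group `G`: right translations are
automorphisms. -/
def IsCirculant {G : Type u} [Group G] (X : CohCfg G) : Prop :=
  ∀ g : G, ∀ s ∈ X.S, relImage (fun x => x * g) s = s

/-- The equivalence relation `e(H)` whose classes are the cosets of `H`. -/
def eRelSet {G : Type u} [Group G] (H : Subgroup G) : Set (G × G) :=
  {p | p.1⁻¹ * p.2 ∈ H}

/-- `H` is an `X`-group. -/
def IsXGroup {G : Type u} [Group G] (X : CohCfg G) (H : Subgroup G) : Prop :=
  IsParabolic X (eRelSet H)

/-- A normal circulant scheme: every automorphism fixing the identity is a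
group automorphism. -/
def IsNormalCirc {G : Type u} [Group G] (X : CohCfg G) : Prop :=
  ∀ f : G → G, Function.Bijective f → (∀ s ∈ X.S, relImage f s = s) → f 1 = 1 →
    ∀ a b : G, f (a * b) = f a * f b

/-- Normality of a circulant scheme presented on a section `Δ/e` of a group `G`
(the points are cosets): every automorphism fixing the class of `1` respects the
coset multiplication. -/
def IsNormalSec {G : Type u} [Group G] (Δ : Set G) (e : Set (G × G))
    (Y : CohCfg (Sec Δ e)) : Prop :=
  ∀ F : Sec Δ e → Sec Δ e, Function.Bijective F → (∀ t ∈ Y.S, relImage F t = t) →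
    (∀ Γ : Sec Δ e, (1 : G) ∈ Γ.1 → F Γ = Γ) →
    ∀ Γ Γ' Γ'' : Sec Δ e, Γ''.1 = Set.image2 (· * ·) Γ.1 Γ'.1 →
      (F Γ'').1 = Set.image2 (· * ·) (F Γ).1 (F Γ').1

/-- Normality of a circulant scheme presented on (the subtype of) a subgroup `U ⊆ G`. -/
def IsNormalRest {G : Type u} [Group G] (U : Set G) (Y : CohCfg ↥U) : Prop :=
  ∀ F : ↥U → ↥U, Function.Bijective F → (∀ t ∈ Y.S, relImage F t = t) →
    (∀ x : ↥U, x.1 = 1 → F x = x) →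
    ∀ x y z : ↥U, z.1 = x.1 * y.1 → (F z).1 = (F x).1 * (F y).1

/-- `N` is an `X_U`-group: `N ≤ U` and the restriction of `e(N)` to `U` is a
relation of the restriction `X_U`. -/
def SubXGroup {G : Type u} [Group G] (X : CohCfg G) (U N : Subgroup G) : Prop :=
  N ≤ U ∧ ∀ s ∈ X.S, (∃ p ∈ s, p.1 ∈ U ∧ p.2 ∈ U ∧ p.1⁻¹ * p.2 ∈ N) →
    ∀ p ∈ s, p.1 ∈ U → p.2 ∈ U → p.1⁻¹ * p.2 ∈ N

end CohCfg

set_option linter.unusedSectionVars false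
set_option linter.deprecated false
namespace Circ

/-- two colourings with the same intersection numbers -/
def Match {Ω Ω' κ : Type*} (c : Ω → Ω → κ) (c' : Ω' → Ω' → κ) : Prop :=
  ∀ a b a' b', c a b = c' a' b' → ∀ r s,
    {z | c a z = r ∧ c z b = s}.ncard = {z' | c' a' z' = r ∧ c' z' b' = s}.ncard

lemma exists_equiv_of_fibers {Ω Ω' ι : Type*} [Finite Ω] [Finite Ω'] (f : Ω → ι) (f' : Ω' → ι)
    (h : ∀ i, {z | f z = i}.ncard = {z' | f' z' = i}.ncard) :
    ∃ e : Ω ≃ Ω', ∀ z, f' (e z) = f z := by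
  have h1 : ∀ i, Nonempty ({z // f z = i} ≃ {z' // f' z' = i}) := by
    intro i
    have := h i
    rw [← Nat.card_coe_set_eq, ← Nat.card_coe_set_eq] at this
    exact (Finite.card_eq (α := {z // f z = i}) (β := {z' // f' z' = i})).1 this
  refine ⟨(Equiv.sigmaFiberEquiv f).symm.trans
    ((Equiv.sigmaCongrRight fun i => (h1 i).some).trans (Equiv.sigmaFiberEquiv f')), ?_⟩
  intro z
  simp only [Equiv.trans_apply]
  exact ((h1 (f z)).some ⟨z, rfl⟩).2

lemma Match.equiv {Ω Ω' κ : Type*} [Finite Ω] [Finite Ω'] {c : Ω → Ω → κ} {c' : Ω' → Ω' → κ}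
    (h : Match c c') {a b : Ω} {a' b' : Ω'} (hab : c a b = c' a' b') :
    ∃ e : Ω ≃ Ω', ∀ z, c' a' (e z) = c a z ∧ c' (e z) b' = c z b := by
  obtain ⟨e, he⟩ := exists_equiv_of_fibers (fun z => (c a z, c z b))
    (fun z' => (c' a' z', c' z' b')) (by
      rintro ⟨r, s⟩
      simpa [Prod.ext_iff] using h a b a' b' hab r s)
  exact ⟨e, fun z => by simpa [Prod.ext_iff] using he z⟩

/-- the diagonal is preserved -/
lemma Match.diag {Ω Ω' κ : Type*} [Finite Ω] [Finite Ω'] {c : Ω → Ω → κ} {c' : Ω' → Ω' → κ}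
    (h : Match c c') (hd : ∀ a b x, c a b = c x x → a = b)
    (hd' : ∀ a b x, c' a b = c' x x → a = b) (x : Ω) (y y' : Ω') (hx : c x x = c' y y') :
    y = y' := by
  obtain ⟨e, he⟩ := h.equiv hx
  obtain ⟨h1, h2⟩ := he (e.symm y)
  rw [e.apply_symm_apply] at h1 h2
  have h3 : e.symm y = x := hd _ _ x (by rw [← h2, hx])
  rw [h3] at h1
  exact (hd' y y' y (by rw [h1, hx]))

/-- transposition is compatible with matching -/
lemma Match.inv {Ω Ω' κ : Type*} [Finite Ω] [Finite Ω'] {c : Ω → Ω → κ} {c' : Ω' → Ω' → κ}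
    (h : Match c c') (hd : ∀ a b x, c a b = c x x → a = b)
    (hd' : ∀ a b x, c' a b = c' x x → a = b)
    (hi : ∀ a b a1 b1, c a b = c a1 b1 → c b a = c b1 a1)
    {a b : Ω} {a' b' : Ω'} (hab : c a b = c' a' b') :
    c b a = c' b' a' := by
  obtain ⟨e, he⟩ := h.equiv hab
  obtain ⟨h1, h2⟩ := he a
  have h3 := h.diag hd hd' _ _ _ h1.symm
  rw [← h3] at h1
  obtain ⟨e2, he2⟩ := h.equiv h1.symm
  obtain ⟨h6, h7⟩ := he2 (e2.symm b')
  rw [e2.apply_symm_apply] at h6 h7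
  have h8 : c a (e2.symm b') = c a b := by rw [← h6, hab]
  rw [h7]
  exact (hi _ _ _ _ h8).symm

/-! ### arithmetic in `ZMod (p^n)` -/

section Arith
variable {p n : ℕ} [hp : Fact p.Prime]


lemma pn_zero : (p : (ZMod (p ^ n))) ^ n = 0 := by
  have := ZMod.natCast_self (p ^ n)
  push_cast at this; exact this

lemma pow_dvd_zero {a : ℕ} (h : n ≤ a) {z : (ZMod (p ^ n))} (hz : (p : (ZMod (p ^ n))) ^ a ∣ z) : z = 0 := by
  obtain ⟨b, rfl⟩ := Nat.exists_eq_add_of_le h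
  rw [pow_add, pn_zero, zero_mul, zero_dvd_iff] at hz
  exact hz

lemma dvd_val {a : ℕ} (h : a ≤ n) (z : ℤ) : (p : (ZMod (p ^ n))) ^ a ∣ (z : (ZMod (p ^ n))) ↔ (p : ℤ) ^ a ∣ z := by
  constructor
  · rintro ⟨c, hc⟩
    obtain ⟨c, rfl⟩ := ZMod.intCast_surjective c
    have : (((z - p ^ a * c : ℤ)) : (ZMod (p ^ n))) = 0 := by push_cast; rw [hc]; ring
    rw [ZMod.intCast_zmod_eq_zero_iff_dvd] at this
    have h2 : (p : ℤ) ^ a ∣ ((p ^ n : ℕ) : ℤ) := by push_cast; exact pow_dvd_pow _ h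
    have h3 := (h2.trans this)
    have := dvd_add h3 (dvd_mul_right ((p : ℤ) ^ a) c)
    simpa using this
  · rintro ⟨c, rfl⟩
    push_cast
    exact dvd_mul_right _ _

lemma isUnit_iff (hn : 0 < n) (k : (ZMod (p ^ n))) : IsUnit k ↔ ¬ (p : (ZMod (p ^ n))) ∣ k := by
  obtain ⟨m, rfl⟩ := ZMod.natCast_zmod_surjective k
  rw [ZMod.isUnit_iff_coprime]
  have := dvd_val (p := p) (n := n) (a := 1) hn (m : ℤ)
  simp only [pow_one] at this
  push_cast at this
  rw [this, Int.natCast_dvd_natCast, Nat.coprime_comm, Nat.coprime_pow_left_iff hn,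
    Nat.Prime.coprime_iff_not_dvd hp.out]

/-- exact valuation -/
def V (v : ℕ) (z : (ZMod (p ^ n))) : Prop := (p : (ZMod (p ^ n))) ^ v ∣ z ∧ ¬ (p : (ZMod (p ^ n))) ^ (v + 1) ∣ z

lemma V.lt {v : ℕ} {z : (ZMod (p ^ n))} (h : V v z) : v < n := by
  by_contra hv
  apply h.2
  rw [pow_dvd_zero (not_lt.1 hv) h.1]
  exact dvd_zero _

lemma V.eq_unit {v : ℕ} {z : (ZMod (p ^ n))} (h : V v z) : ∃ k : (ZMod (p ^ n)), IsUnit k ∧ z = p ^ v * k := by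
  obtain ⟨⟨k, rfl⟩, h2⟩ := h
  have hn : 0 < n := lt_of_le_of_lt (Nat.zero_le _) (V.lt ⟨dvd_mul_right _ k, h2⟩)
  refine ⟨k, (isUnit_iff hn k).2 fun hk => h2 ?_, rfl⟩
  rw [pow_succ]
  exact mul_dvd_mul_left _ hk

lemma pow_dvd_pow_iff' {a v : ℕ} (hv : v < n) : (p : (ZMod (p ^ n))) ^ a ∣ (p : (ZMod (p ^ n))) ^ v ↔ a ≤ v := by
  constructor
  · intro h
    by_contra hav
    have h1 : (p : (ZMod (p ^ n))) ^ (v + 1) ∣ ((p ^ v : ℤ) : (ZMod (p ^ n))) := by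
      push_cast
      exact (pow_dvd_pow _ (by omega)).trans h
    rw [dvd_val (by omega)] at h1
    have := (Int.natCast_dvd_natCast (m := p ^ (v + 1)) (n := p ^ v)).1 (by push_cast; exact h1)
    have := (Nat.pow_dvd_pow_iff_le_right hp.out.one_lt).1 this
    omega
  · exact fun h => pow_dvd_pow _ h

lemma V_pow {v : ℕ} (hv : v < n) : V v ((p : (ZMod (p ^ n))) ^ v) :=
  ⟨dvd_rfl, fun h => by rw [pow_dvd_pow_iff' hv] at h; omega⟩

lemma dvd_unit_mul {k : (ZMod (p ^ n))} (hk : IsUnit k) (a z : (ZMod (p ^ n))) : a ∣ k * z ↔ a ∣ z := hk.dvd_mul_left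

lemma V.mul {v : ℕ} {z k : (ZMod (p ^ n))} (h : V v z) (hk : IsUnit k) : V v (k * z) :=
  ⟨(dvd_unit_mul hk _ _).2 h.1, fun h2 => h.2 ((dvd_unit_mul hk _ _).1 h2)⟩

lemma V.neg {v : ℕ} {z : (ZMod (p ^ n))} (h : V v z) : V v (-z) :=
  ⟨(dvd_neg).2 h.1, fun h2 => h.2 ((dvd_neg).1 h2)⟩

lemma V.add {v w : ℕ} {z x : (ZMod (p ^ n))} (h : V v z) (hx : (p : (ZMod (p ^ n))) ^ w ∣ x) (hw : v < w) : V v (z + x) := by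
  have h1 : (p : (ZMod (p ^ n))) ^ (v + 1) ∣ x := (pow_dvd_pow _ hw).trans hx
  exact ⟨dvd_add h.1 ((pow_dvd_pow _ (by omega)).trans h1),
    fun h2 => h.2 ((dvd_add_left h1).1 h2)⟩

lemma V.dvd_iff {v a : ℕ} {z : (ZMod (p ^ n))} (h : V v z) : (p : (ZMod (p ^ n))) ^ a ∣ z ↔ a ≤ v := by
  constructor
  · intro h1
    by_contra h2
    exact h.2 ((pow_dvd_pow _ (by omega)).trans h1)
  · exact fun h1 => (pow_dvd_pow _ h1).trans h.1

lemma exists_V {a u : ℕ} {z : (ZMod (p ^ n))} (h : (p : (ZMod (p ^ n))) ^ a ∣ z) (h' : ¬ (p : (ZMod (p ^ n))) ^ u ∣ z) :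
    ∃ v, a ≤ v ∧ v < u ∧ V v z := by
  classical
  have hex : ∃ w, ¬ (p : (ZMod (p ^ n))) ^ w ∣ z := ⟨u, h'⟩
  have h1 := Nat.find_spec hex
  have h2 : Nat.find hex ≤ u := Nat.find_min' hex h'
  have h3 : a < Nat.find hex := by
    by_contra h3
    exact h1 ((pow_dvd_pow _ (not_lt.1 h3)).trans h)
  refine ⟨Nat.find hex - 1, by omega, by omega, ?_, ?_⟩
  · by_contra h4
    have := Nat.find_min' hex h4
    omega
  · have : Nat.find hex - 1 + 1 = Nat.find hex := by omega
    rwa [this]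

/-- cancellation -/
lemma V.cancel {v j : ℕ} {y k : (ZMod (p ^ n))} (hy : V v y) (hj : v + j ≤ n) (h : (p : (ZMod (p ^ n))) ^ (v + j) ∣ k * y) :
    (p : (ZMod (p ^ n))) ^ j ∣ k := by
  by_contra h1
  obtain ⟨w, -, hw, hk⟩ := exists_V (a := 0) (by simp) h1
  obtain ⟨s, hs, rfl⟩ := hk.eq_unit
  obtain ⟨t, ht, rfl⟩ := hy.eq_unit
  have h2 : (p : (ZMod (p ^ n))) ^ (v + j) ∣ (s * t) * p ^ (v + w) := by
    convert h using 1; ring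
  rw [dvd_unit_mul (hs.mul ht), pow_dvd_pow_iff' (by omega)] at h2
  omega

lemma V.ratio {v : ℕ} {y z : (ZMod (p ^ n))} (hy : V v y) (hz : (p : (ZMod (p ^ n))) ^ v ∣ z) : ∃ k : (ZMod (p ^ n)), z = k * y := by
  obtain ⟨s, hs, rfl⟩ := hy.eq_unit
  obtain ⟨t, rfl⟩ := hz
  obtain ⟨s, rfl⟩ := hs
  refine ⟨t * ↑s⁻¹, ?_⟩
  calc (p : (ZMod (p ^ n))) ^ v * t = p ^ v * t * (↑s⁻¹ * ↑s) := by simp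
    _ = _ := by ring

lemma V.ratio_unit {v : ℕ} {y z : (ZMod (p ^ n))} (hy : V v y) (hz : V v z) :
    ∃ k : (ZMod (p ^ n)), IsUnit k ∧ z = k * y := by
  obtain ⟨k, rfl⟩ := hy.ratio hz.1
  refine ⟨k, ?_, rfl⟩
  rw [isUnit_iff (by have := hy.lt; omega)]
  rintro ⟨t, rfl⟩
  apply hz.2
  obtain ⟨s, rfl⟩ := hy.1
  exact ⟨t * s, by ring⟩

lemma V.ratio_mul {v j : ℕ} {y z : (ZMod (p ^ n))} (hy : V v y) (hz : (p : (ZMod (p ^ n))) ^ (v + j) ∣ z) :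
    ∃ k : (ZMod (p ^ n)), z = p ^ j * k * y := by
  obtain ⟨t, rfl⟩ := hz
  obtain ⟨k, hk⟩ := hy.ratio (dvd_mul_right _ t)
  exact ⟨k, by rw [pow_add, mul_assoc, mul_left_comm, hk]; ring⟩

lemma card_dvd {a : ℕ} (ha : a ≤ n) : {z : (ZMod (p ^ n)) | (p : (ZMod (p ^ n))) ^ a ∣ z}.ncard = p ^ (n - a) := by
  have h0 : (0 : ℕ) < p := hp.out.pos
  have h1 : {z : (ZMod (p ^ n)) | (p : (ZMod (p ^ n))) ^ a ∣ z} = (fun i : ℕ => ((p ^ a * i : ℕ) : (ZMod (p ^ n)))) '' (Finset.range (p ^ (n - a)) : Set ℕ) := by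
    ext z
    simp only [mem_setOf_eq, mem_image, Finset.coe_range, mem_Iio]
    constructor
    · intro hz
      have hz2 : (p : (ZMod (p ^ n))) ^ a ∣ ((z.val : ℤ) : (ZMod (p ^ n))) := by simpa using hz
      rw [dvd_val ha] at hz2
      have hz3 : p ^ a ∣ z.val := by exact_mod_cast hz2
      obtain ⟨i, hi⟩ := hz3
      refine ⟨i, ?_, ?_⟩
      · have := ZMod.val_lt z
        rw [hi] at this
        have h4 : p ^ n = p ^ a * p ^ (n - a) := by rw [← pow_add]; congr 1; omega
        rw [h4] at this
        exact lt_of_mul_lt_mul_left this (Nat.zero_le _)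
      · rw [← hi]; simp
    · rintro ⟨i, -, rfl⟩
      push_cast
      exact dvd_mul_right _ _
  rw [h1, ncard_image_of_injOn, ncard_coe_finset, Finset.card_range]
  intro i hi j hj hij
  simp only [Finset.coe_range, mem_Iio] at hi hj
  have h4 : p ^ n = p ^ a * p ^ (n - a) := by rw [← pow_add]; congr 1; omega
  simp only [] at hij
  rw [ZMod.natCast_eq_natCast_iff', Nat.mod_eq_of_lt, Nat.mod_eq_of_lt] at hij
  · exact Nat.eq_of_mul_eq_mul_left (by positivity) hij
  · rw [h4]; exact Nat.mul_lt_mul_of_pos_left hj (by positivity)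
  · rw [h4]; exact Nat.mul_lt_mul_of_pos_left hi (by positivity)

/-- exact `p`-power lifting -/
def nu (p : ℕ) : ℕ := if p = 2 then 2 else 1

lemma nu_pos (p : ℕ) : 1 ≤ nu p := by unfold nu; split <;> omega
lemma nu_le (p : ℕ) : nu p ≤ 2 := by unfold nu; split <;> omega

lemma powlift {k : (ZMod (p ^ n))} {s : ℕ} (hs : s ≤ n) (h1 : (p : (ZMod (p ^ n))) ^ (nu p) ∣ k - 1)
    (h2 : ¬ (p : (ZMod (p ^ n))) ^ s ∣ k - 1) : ∃ r : ℕ, V (s - 1) (k ^ r - 1) := by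
  obtain ⟨j, hj1, hj2, hj⟩ := exists_V h1 h2
  obtain ⟨K, rfl⟩ := ZMod.intCast_surjective k
  have hd : ∀ a ≤ n, ∀ r : ℕ, (p : (ZMod (p ^ n))) ^ a ∣ (K : (ZMod (p ^ n))) ^ r - 1 ↔ (p : ℤ) ^ a ∣ K ^ r - 1 := by
    intro a ha r
    have := dvd_val (p := p) ha (K ^ r - 1)
    push_cast at this
    exact this
  have hd1 : ∀ a ≤ n, ((p : (ZMod (p ^ n))) ^ a ∣ (K : (ZMod (p ^ n))) - 1 ↔ (p : ℤ) ^ a ∣ K - 1) := by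
    intro a ha; simpa using hd a ha 1
  have hνn : nu p ≤ n := by have := hj.lt; omega
  have hn1 := nu_pos p
  have hm : emultiplicity (p : ℤ) (K - 1) = j := by
    rw [emultiplicity_eq_coe]
    exact ⟨(hd1 j (by omega)).1 hj.1, fun h => hj.2 ((hd1 _ (by omega)).2 h)⟩
  have hp1 : (p : ℤ) ∣ K - 1 := by
    have := (hd1 1 (by omega)).1 ((pow_dvd_pow _ hn1).trans h1)
    simpa using this
  have hpK : ¬ (p : ℤ) ∣ K := by
    intro h
    have : (p : ℤ) ∣ 1 := by simpa using dvd_sub h hp1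
    have := Int.natCast_dvd_natCast.1 (by exact_mod_cast this : (p : ℤ) ∣ ((1 : ℕ) : ℤ))
    exact hp.out.one_lt.ne' (Nat.dvd_one.1 this)
  obtain ⟨r, hr⟩ : ∃ r, s - 1 = j + r := ⟨s - 1 - j, by omega⟩
  have hpr : emultiplicity (p : ℤ) ((p ^ r : ℕ) : ℤ) = r := by
    have := emultiplicity_pow_self_of_prime (Nat.prime_iff_prime_int.1 hp.out) r
    push_cast; exact this
  have hm2 : emultiplicity (p : ℤ) (K ^ (p ^ r) - 1) = ((s - 1 : ℕ) : ℕ∞) := by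
    have key : emultiplicity (p : ℤ) (K ^ (p ^ r) - 1 ^ (p ^ r)) =
        emultiplicity (p : ℤ) (K - 1) + emultiplicity (p : ℤ) ((p ^ r : ℕ) : ℤ) := by
      rcases hp.out.eq_two_or_odd' with h | h
      · subst h
        rcases Nat.eq_zero_or_pos r with rfl | hr0
        · rw [hpr]; simp
        · exact_mod_cast Int.two_pow_sub_pow' (x := K) (y := 1) (2 ^ r) (by
            have := (hd1 2 (by simp [nu] at hνn; omega)).1 (by simpa [nu] using h1)
            norm_num at this; exact this) (by exact_mod_cast hpK)
      · rw [Int.emultiplicity_pow_sub_pow hp.out h hp1 hpK]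
        rw [Int.natCast_emultiplicity]
    rw [one_pow] at key
    rw [key, hm, hpr, hr]; push_cast; rfl
  rw [emultiplicity_eq_coe] at hm2
  exact ⟨p ^ r, (hd _ (by omega) _).2 hm2.1, fun h => hm2.2 ((hd _ (by omega) _).1 h)⟩

end Arith
end Circ

namespace Circ
section SRsec
variable {p n : ℕ} [hp : Fact p.Prime] {κ : Type*}


/-- The colouring of `ZMod (p^n)` behind a Schur ring. -/
structure SR (D : (ZMod (p ^ n)) → κ) : Prop where
  bij : ∀ z z', D z = D z' → ∃ e : (ZMod (p ^ n)) ≃ (ZMod (p ^ n)), ∀ v, D (e v) = D v ∧ D (z' - e v) = D (z - v)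
  neg : ∀ z z', D z = D z' → D (-z) = D (-z')
  zero : ∀ z, D z = D 0 → z = 0

variable {D : (ZMod (p ^ n)) → κ}

lemma SR.shift (S : SR D) {g g' : (ZMod (p ^ n))} (h : D g = D g') :
    ∃ e : (ZMod (p ^ n)) ≃ (ZMod (p ^ n)), ∀ v, D (e v) = D v ∧ D (e v + g') = D (v + g) := by
  obtain ⟨e, he⟩ := S.bij _ _ (S.neg _ _ h)
  refine ⟨e, fun v => ⟨(he v).1, ?_⟩⟩
  have := S.neg _ _ (he v).2
  convert this using 2 <;> ring

lemma SR.ext (S : SR D) {z z' : (ZMod (p ^ n))} (h : D z = D z') (w : (ZMod (p ^ n))) :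
    ∃ w', D w' = D w ∧ D (z' + w') = D (z + w) := by
  obtain ⟨e, he⟩ := S.shift h
  exact ⟨e w, (he w).1, by rw [add_comm, (he w).2, add_comm]⟩

lemma SR.split (S : SR D) {z a b : (ZMod (p ^ n))} (h : D z = D (a + b)) :
    ∃ a' b', z = a' + b' ∧ D a' = D a ∧ D b' = D b := by
  obtain ⟨e, he⟩ := S.bij _ _ h.symm
  refine ⟨e a, z - e a, by ring, (he a).1, ?_⟩
  rw [(he a).2]; congr 1; ring

lemma SR.mult_prime (S : SR D) (q : ℕ) (hq : q.Prime) {k : (ZMod (p ^ n))} (hk : k * q = 1) {z z' : (ZMod (p ^ n))}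
    (h : D z = D z') : D (k * z) = D (k * z') := by
  classical
  haveI : Fact q.Prime := ⟨hq⟩
  let Meas : AddMonoidAlgebra (ZMod q) (ZMod (p ^ n)) → Prop := fun x => ∀ z z', D z = D z' → x.coeff z = x.coeff z'
  have hmul : ∀ x y, Meas x → Meas y → Meas (x * y) := by
    intro x y hx hy z z' hz
    have hc : ∀ z, (x * y).coeff z = ∑ v : (ZMod (p ^ n)), x.coeff v * y.coeff (z - v) := by
      intro z
      rw [AddMonoidAlgebra.coeff_mul_antidiag x y z (Finset.univ.image fun v => (v, z - v)) (by
        rintro ⟨a, b⟩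
        simp only [Finset.mem_image, Finset.mem_univ, true_and, Prod.mk.injEq]
        constructor
        · rintro ⟨a, rfl, rfl⟩; ring
        · rintro rfl; exact ⟨a, rfl, by ring⟩), Finset.sum_image]
      intro a _ b _ hab
      simpa using congrArg Prod.fst hab
    rw [hc, hc]
    obtain ⟨e, he⟩ := S.bij _ _ hz
    rw [← Equiv.sum_comp e (fun v => x.coeff v * y.coeff (z' - v))]
    symm
    exact Finset.sum_congr rfl fun v _ => by
      rw [hx _ _ (he v).1, hy _ _ (he v).2]
  set τ := D (k * z)
  let x : AddMonoidAlgebra (ZMod q) (ZMod (p ^ n)) := ∑ a : (ZMod (p ^ n)), AddMonoidAlgebra.single a (if D a = τ then 1 else 0)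
  have hxc : ∀ z, x.coeff z = if D z = τ then 1 else 0 := by
    intro z
    simp only [x, AddMonoidAlgebra.coeff_sum]
    rw [Finsupp.finset_sum_apply]
    rw [Finset.sum_eq_single z]
    · simp
    · intro b _ hb
      simp [AddMonoidAlgebra.coeff_single, hb]
    · simp
  have hx : Meas x := by
    intro z z' hz; rw [hxc, hxc, hz]
  have hpow : ∀ m : ℕ, Meas (x ^ (m + 1)) := by
    intro m
    induction m with
    | zero => simpa using hx
    | succ m ih => rw [pow_succ]; exact hmul _ _ ih hx
  have hq1 : q - 1 + 1 = q := Nat.sub_add_cancel hq.one_le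
  have hM := hpow (q - 1)
  rw [hq1] at hM
  have hxq : ∀ z, (x ^ q).coeff z = if D (k * z) = τ then 1 else 0 := by
    intro z
    haveI : CharP (AddMonoidAlgebra (ZMod q) (ZMod (p ^ n))) q :=
      charP_of_injective_ringHom (f := (AddMonoidAlgebra.singleZeroRingHom : ZMod q →+* AddMonoidAlgebra (ZMod q) (ZMod (p ^ n)))) (RingHom.injective _) q
    simp only [x]
    rw [sum_pow_char]
    simp only [AddMonoidAlgebra.single_pow, AddMonoidAlgebra.coeff_sum]
    rw [Finsupp.finset_sum_apply]
    rw [Finset.sum_eq_single (k * z)]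
    · have : q • (k * z) = z := by
        rw [nsmul_eq_mul, ← mul_assoc, mul_comm (q : (ZMod (p ^ n))), hk, one_mul]
      rw [this]
      by_cases h : D (k * z) = τ
      · simp [h]
      · simp [h, hq.ne_zero]
    · intro b _ hb
      have : q • b ≠ z := by
        rintro rfl
        apply hb
        rw [nsmul_eq_mul, ← mul_assoc, hk, one_mul]
      rw [AddMonoidAlgebra.coeff_single, Finsupp.single_eq_of_ne (Ne.symm this)]
    · simp
  have := hM _ _ h
  rw [hxq, hxq] at this
  simp only [τ, if_true] at this
  by_contra hne
  rw [if_neg (fun h => hne h.symm)] at this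
  exact one_ne_zero this

lemma SR.mult1 (S : SR D) (k : (ZMod (p ^ n))) (hk : IsUnit k) : ∀ z z', D z = D z' → D (k * z) = D (k * z') := by
  rcases Nat.eq_zero_or_pos n with hn | hn
  · subst hn
    intro z z' _
    congr 1
    haveI : Subsingleton (ZMod (p ^ 0)) := by rw [pow_zero]; infer_instance
    exact Subsingleton.elim _ _
  let Gd : Submonoid (ZMod (p ^ n))ˣ :=
    { carrier := {k | ∀ z z', D z = D z' → D (k * z) = D (k * z')}
      mul_mem' := by
        intro a b ha hb z z' h
        have := ha _ _ (hb _ _ h)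
        simpa [mul_assoc] using this
      one_mem' := by intro z z' h; simpa using h }
  have hinv : ∀ k ∈ Gd, k⁻¹ ∈ Gd := by
    intro k hk
    have h1 : k ^ (orderOf k - 1) = k⁻¹ := by
      rw [eq_inv_iff_mul_eq_one, ← pow_succ, Nat.sub_add_cancel (orderOf_pos k), pow_orderOf_eq_one]
    rw [← h1]
    exact Gd.pow_mem hk _
  have hnat : ∀ m : ℕ, ∀ hm : m.Coprime (p ^ n), ZMod.unitOfCoprime m hm ∈ Gd := by
    intro m
    induction m using induction_on_primes with
    | zero =>
      intro hm
      exfalso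
      rw [Nat.coprime_zero_left] at hm
      exact (Nat.one_lt_pow hn.ne' hp.out.one_lt).ne' hm
    | one =>
      intro hm
      convert Gd.one_mem
      ext; simp
    | prime_mul q m hq ih =>
      intro hm
      have h1 : q.Coprime (p ^ n) := Nat.Coprime.coprime_mul_right hm
      have h2 : m.Coprime (p ^ n) := Nat.Coprime.coprime_mul_left hm
      have h3 : ZMod.unitOfCoprime (q * m) hm = ZMod.unitOfCoprime q h1 * ZMod.unitOfCoprime m h2 := by
        ext; simp
      rw [h3]
      refine Gd.mul_mem ?_ (ih h2)
      rw [← inv_inv (ZMod.unitOfCoprime q h1)]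
      refine hinv _ ?_
      intro z z' h
      refine S.mult_prime q hq ?_ h
      have := Units.inv_mul (ZMod.unitOfCoprime q h1)
      simpa using this
  obtain ⟨k, rfl⟩ := hk
  have h := hnat _ (ZMod.val_coe_unit_coprime k)
  have h2 : ZMod.unitOfCoprime _ (ZMod.val_coe_unit_coprime k) = k := by ext; simp
  rw [h2] at h
  exact h

lemma SR.mult (S : SR D) {k : (ZMod (p ^ n))} (hk : IsUnit k) {z z' : (ZMod (p ^ n))} :
    D (k * z) = D (k * z') ↔ D z = D z' := by
  refine ⟨fun h => ?_, S.mult1 k hk z z'⟩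
  obtain ⟨k, rfl⟩ := hk
  have := S.mult1 (↑k⁻¹) (Units.isUnit _) _ _ h
  simpa [← mul_assoc] using this

/-- `p^a` generates an `X`-group -/
def Xg (D : (ZMod (p ^ n)) → κ) (a : ℕ) : Prop := ∀ z z', D z = D z' → (p : (ZMod (p ^ n))) ^ a ∣ z → (p : (ZMod (p ^ n))) ^ a ∣ z'

lemma Xg_zero : Xg D 0 := fun _ _ _ _ => by simp

lemma SR.Xg_n (S : SR D) : Xg D n := by
  intro z z' h hz
  rw [pow_dvd_zero le_rfl hz] at h
  rw [S.zero _ h.symm]; exact dvd_zero _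

lemma Xg.iff {a : ℕ} (h : Xg D a) {z z' : (ZMod (p ^ n))} (hz : D z = D z') :
    (p : (ZMod (p ^ n))) ^ a ∣ z ↔ (p : (ZMod (p ^ n))) ^ a ∣ z' := ⟨h _ _ hz, h _ _ hz.symm⟩

/-- `m` is in the radical range -/
def RadAt (D : (ZMod (p ^ n)) → κ) (a u m : ℕ) : Prop :=
  ∀ z w, (p : (ZMod (p ^ n))) ^ a ∣ z → ¬ (p : (ZMod (p ^ n))) ^ u ∣ z → (p : (ZMod (p ^ n))) ^ m ∣ w → D (z + w) = D z

structure Level (D : (ZMod (p ^ n)) → κ) (a u l : ℕ) : Prop where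
  xa : Xg D a
  lt : a < u
  un : u ≤ n
  xu : Xg D u
  nxt : ∀ b, a < b → b < u → ¬ Xg D b
  ul : u ≤ l
  ln : l ≤ n
  rad : RadAt D a u l
  min : ∀ m, u ≤ m → RadAt D a u m → l ≤ m

lemma SR.exists_level (S : SR D) {a : ℕ} (ha : Xg D a) (han : a < n) :
    ∃ u l, Level D a u l := by
  classical
  have hu : ∃ u, a < u ∧ Xg D u := ⟨n, han, S.Xg_n⟩
  have h1 := Nat.find_spec hu
  have h2 : Nat.find hu ≤ n := Nat.find_min' hu ⟨han, S.Xg_n⟩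
  have hn : RadAt D a (Nat.find hu) n := by
    intro z w _ _ hw
    rw [pow_dvd_zero le_rfl hw, add_zero]
  have hl : ∃ l, Nat.find hu ≤ l ∧ RadAt D a (Nat.find hu) l := ⟨n, h2, hn⟩
  have h3 := Nat.find_spec hl
  refine ⟨Nat.find hu, Nat.find hl, ha, h1.1, h2, h1.2, ?_, h3.1, Nat.find_min' hl ⟨h2, hn⟩, h3.2, ?_⟩
  · intro b hb hb2 hb3
    have := Nat.find_min' hu ⟨hb, hb3⟩
    omega
  · intro m hm hm2
    exact Nat.find_min' hl ⟨hm, hm2⟩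

variable {a u l : ℕ}

lemma Level.not_dvd (L : Level D a u l) {z z' : (ZMod (p ^ n))} (h : D z = D z') :
    ((p : (ZMod (p ^ n))) ^ u ∣ z ↔ (p : (ZMod (p ^ n))) ^ u ∣ z') := L.xu.iff h

lemma dvd_nat_mul_of {w x : (ZMod (p ^ n))} (h : ∃ k, x = k * w) : ∃ m : ℕ, x = m * w := by
  obtain ⟨k, rfl⟩ := h
  obtain ⟨m, rfl⟩ := ZMod.natCast_zmod_surjective k
  exact ⟨m, rfl⟩

lemma SR.Xg_l (S : SR D) (L : Level D a u l) : Xg D l := by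
  -- the radical set
  let M : (ZMod (p ^ n)) → Prop := fun w => (p : (ZMod (p ^ n))) ^ u ∣ w ∧
    ∀ z, (p : (ZMod (p ^ n))) ^ a ∣ z → ¬ (p : (ZMod (p ^ n))) ^ u ∣ z → D (z + w) = D z
  have hMa : ∀ w w', M w → M w' → M (w + w') := by
    intro w w' h h'
    refine ⟨dvd_add h.1 h'.1, fun z hz hz' => ?_⟩
    rw [← add_assoc, h'.2, h.2 z hz hz']
    · exact dvd_add hz ((pow_dvd_pow _ L.lt.le).trans h.1)
    · rwa [dvd_add_left h.1]
  have hM0 : M 0 := ⟨dvd_zero _, fun z _ _ => by rw [add_zero]⟩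
  have hMn : ∀ (m : ℕ) w, M w → M (m * w) := by
    intro m w h
    induction m with
    | zero => simpa using hM0
    | succ m ih => push_cast; rw [add_mul, one_mul]; exact hMa _ _ ih h
  have hML : ∀ w, M w → (p : (ZMod (p ^ n))) ^ l ∣ w := by
    intro w hw
    by_contra hl
    obtain ⟨m, hm1, hm2, hm⟩ := exists_V hw.1 hl
    have := L.min m hm1 (by
      intro z w' hz hz' hw'
      obtain ⟨k, rfl⟩ := dvd_nat_mul_of (hm.ratio hw')
      exact (hMn k w hw).2 z hz hz')
    omega
  intro w w' h hw
  have hMw : M w := ⟨(pow_dvd_pow _ L.ul).trans hw, fun z hz hz' => L.rad z w hz hz' hw⟩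
  refine hML w' ⟨L.xu _ _ h hMw.1, fun z hz hz' => ?_⟩
  obtain ⟨e, he⟩ := S.shift h
  obtain ⟨h1, h2⟩ := he (e.symm z)
  rw [e.apply_symm_apply] at h1 h2
  rw [h2, h1]
  exact hMw.2 _ (L.xa _ _ h1 hz) (fun h3 => hz' (L.xu _ _ h1.symm h3))

/-- equality of colours up to `p^l` -/
def Ap (D : (ZMod (p ^ n)) → κ) (l : ℕ) (z z' : (ZMod (p ^ n))) : Prop := ∃ w, (p : (ZMod (p ^ n))) ^ l ∣ w ∧ D (z + w) = D z'

lemma Ap.refl (z : (ZMod (p ^ n))) : Ap D l z z := ⟨0, dvd_zero _, by rw [add_zero]⟩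

lemma Ap.of_eq {z z' : (ZMod (p ^ n))} (h : D z = D z') : Ap D l z z' := ⟨0, dvd_zero _, by rw [add_zero, h]⟩

lemma Ap.of_dvd {z z' : (ZMod (p ^ n))} (h : (p : (ZMod (p ^ n))) ^ l ∣ z' - z) : Ap D l z z' := ⟨z' - z, h, by ring_nf⟩

lemma Ap.symm (S : SR D) (X : Xg D l) {z z' : (ZMod (p ^ n))} (h : Ap D l z z') : Ap D l z' z := by
  obtain ⟨w, hw, h⟩ := h
  obtain ⟨w', h1, h2⟩ := S.ext h (-w)
  exact ⟨w', X _ _ h1.symm ((dvd_neg).2 hw), by rw [h2]; ring_nf⟩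

lemma Ap.trans (S : SR D) (X : Xg D l) {z z' z'' : (ZMod (p ^ n))} (h : Ap D l z z') (h' : Ap D l z' z'') :
    Ap D l z z'' := by
  obtain ⟨w, hw, h⟩ := h
  obtain ⟨w', hw', h'⟩ := h'
  obtain ⟨w1, h1, h2⟩ := S.ext h.symm w'
  exact ⟨w + w1, dvd_add hw (X _ _ h1.symm hw'), by rw [← add_assoc, h2, h']⟩

lemma Ap.mul (S : SR D) {k z z' : (ZMod (p ^ n))} (hk : IsUnit k) (h : Ap D l z z') :
    Ap D l (k * z) (k * z') := by
  obtain ⟨w, hw, h⟩ := h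
  exact ⟨k * w, hw.mul_left _, by rw [← mul_add, S.mult hk, h]⟩

lemma Ap.neg (S : SR D) {z z' : (ZMod (p ^ n))} (h : Ap D l z z') : Ap D l (-z) (-z') := by
  obtain ⟨w, hw, h⟩ := h
  exact ⟨-w, (dvd_neg).2 hw, by rw [← neg_add]; exact S.neg _ _ h⟩

lemma Ap.dvd {b : ℕ} (hb : b ≤ l) (X : Xg D b) {z z' : (ZMod (p ^ n))} (h : Ap D l z z')
    (hz : (p : (ZMod (p ^ n))) ^ b ∣ z) : (p : (ZMod (p ^ n))) ^ b ∣ z' := by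
  obtain ⟨w, hw, h⟩ := h
  exact X _ _ h (dvd_add hz ((pow_dvd_pow _ hb).trans hw))

/-- on `H \ U`, the relation `Ap` is equality of colours -/
lemma Level.ap_eq (L : Level D a u l) {z z' : (ZMod (p ^ n))} (h : Ap D l z z') (h1 : (p : (ZMod (p ^ n))) ^ a ∣ z)
    (h2 : ¬ (p : (ZMod (p ^ n))) ^ u ∣ z) : D z = D z' := by
  obtain ⟨w, hw, h⟩ := h
  rw [← h, L.rad z w h1 h2 hw]

lemma Ap.mono {l l' : ℕ} (h : l ≤ l') {z z' : (ZMod (p ^ n))} (hh : Ap D l' z z') : Ap D l z z' := by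
  obtain ⟨w, hw, hh⟩ := hh
  exact ⟨w, (pow_dvd_pow _ h).trans hw, hh⟩

/-- powers of multipliers -/
lemma SR.mult_pow (S : SR D) {k y : (ZMod (p ^ n))} (hk : IsUnit k) (h : D (k * y) = D y) (i : ℕ) :
    D (k ^ i * y) = D y := by
  induction i with
  | zero => simp
  | succ i ih => rw [pow_succ', mul_assoc, ← h, S.mult hk, ih]

lemma SR.KL0 (S : SR D) (L : Level D a u l) {v : ℕ} {y : (ZMod (p ^ n))} (hy : V v y) (hav : a ≤ v) (hvu : v < u)
    (ht : ∃ t, D (y + p ^ (l - 1) * t) ≠ D y) {k : (ZMod (p ^ n))} (hk : IsUnit k) (hD : D (k * y) = D y)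
    (hl : v + 2 ≤ l) (h1 : (p : (ZMod (p ^ n))) ^ (l - v - 1) ∣ k - 1) : (p : (ZMod (p ^ n))) ^ (l - v) ∣ k - 1 := by
  by_contra h2
  obtain ⟨t, ht⟩ := ht
  apply ht
  have hln := L.ln
  obtain ⟨j, rfl⟩ : ∃ j, l = v + j + 2 := ⟨l - v - 2, by omega⟩
  have e1 : v + j + 2 - v - 1 = j + 1 := by omega
  have e2 : v + j + 2 - v = j + 2 := by omega
  have e3 : v + j + 2 - 1 = v + (j + 1) := by omega
  rw [e1] at h1
  rw [e2] at h2
  rw [e3]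
  obtain ⟨x, hx, hkx⟩ := (show V (j + 1) (k - 1) from ⟨h1, h2⟩).eq_unit
  obtain ⟨s, hs⟩ := hy.ratio_mul (dvd_mul_right (p ^ (v + (j + 1)) : (ZMod (p ^ n))) t)
  obtain ⟨x, rfl⟩ := hx
  obtain ⟨i, hi⟩ := ZMod.natCast_zmod_surjective (s * (↑x⁻¹ : (ZMod (p ^ n))))
  have hpow : ∀ i : ℕ, (p : (ZMod (p ^ n))) ^ (j + 2) ∣ k ^ i - (1 + i * (k - 1)) := by
    intro i
    induction i with
    | zero => simp
    | succ i ih =>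
      have : k ^ (i + 1) - (1 + ((i + 1 : ℕ) : (ZMod (p ^ n))) * (k - 1)) =
        k * (k ^ i - (1 + i * (k - 1))) + i * ((k - 1) * (k - 1)) := by push_cast; ring
      rw [this]
      refine dvd_add (ih.mul_left _) (Dvd.dvd.mul_left ?_ _)
      refine (pow_dvd_pow _ (by omega : j + 2 ≤ (j + 1) + (j + 1))).trans ?_
      rw [pow_add]
      exact mul_dvd_mul h1 h1
  have h3 : D (k ^ i * y) = D y := S.mult_pow hk hD i
  rw [hs, ← h3]
  have h4 : y + p ^ (j + 1) * s * y = k ^ i * y + -((k ^ i - (1 + i * (k - 1))) * y) := by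
    rw [hkx, hi]
    have : (s * ↑x⁻¹) * (p ^ (j + 1) * (x : (ZMod (p ^ n)))) = p ^ (j + 1) * s := by
      calc _ = p ^ (j + 1) * s * (↑x⁻¹ * (x : (ZMod (p ^ n)))) := by ring
        _ = _ := by simp
    rw [this]
    ring
  rw [h4]
  refine L.rad _ _ ?_ ?_ ?_
  · rw [dvd_unit_mul (hk.pow i)]; exact (pow_dvd_pow _ hav).trans hy.1
  · rw [dvd_unit_mul (hk.pow i), hy.dvd_iff]; omega
  · rw [dvd_neg, show v + j + 2 = (j + 2) + v by omega, pow_add]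
    exact mul_dvd_mul (hpow i) hy.1

lemma SR.KL (S : SR D) (L : Level D a u l) {v : ℕ} {y : (ZMod (p ^ n))} (hy : V v y) (hav : a ≤ v) (hvu : v < u)
    (ht : ∃ t, D (y + p ^ (l - 1) * t) ≠ D y) {k : (ZMod (p ^ n))} (hk : IsUnit k) (hD : D (k * y) = D y)
    (h1 : (p : (ZMod (p ^ n))) ^ (nu p) ∣ k - 1) : (p : (ZMod (p ^ n))) ^ (l - v) ∣ k - 1 := by
  by_contra h2
  have hln := L.ln
  have h3 : nu p < l - v := by
    by_contra h3
    exact h2 ((pow_dvd_pow _ (not_lt.1 h3)).trans h1)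
  have := nu_pos p
  obtain ⟨r, hr⟩ := powlift (by omega) h1 h2
  have := S.KL0 L hy hav hvu ht (hk.pow r) (S.mult_pow hk hD r) (by omega) hr.1
  rw [hr.dvd_iff] at this
  omega

lemma SR.mult_ratio (S : SR D) {k k' y : (ZMod (p ^ n))} (hk' : IsUnit k') (h : D (k * y) = D y)
    (h' : D (k' * y) = D y) : ∃ m, k = k' * m ∧ D (m * y) = D y := by
  obtain ⟨k', rfl⟩ := hk'
  refine ⟨↑k'⁻¹ * k, by simp, ?_⟩
  rw [← S.mult (Units.isUnit k'), h', ← h]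
  congr 1
  rw [← mul_assoc, ← mul_assoc]; simp

lemma SR.KLc (S : SR D) (L : Level D a u l) {v : ℕ} {y : (ZMod (p ^ n))} (hy : V v y) (hav : a ≤ v) (hvu : v < u)
    (ht : ∃ t, D (y + p ^ (l - 1) * t) ≠ D y) {k k' : (ZMod (p ^ n))} (hk : IsUnit k) (hk' : IsUnit k')
    (hD : D (k * y) = D y) (hD' : D (k' * y) = D y)
    (h1 : (p : (ZMod (p ^ n))) ^ (nu p) ∣ k - k') : (p : (ZMod (p ^ n))) ^ (l - v) ∣ k - k' := by
  obtain ⟨m, rfl, hm⟩ := S.mult_ratio hk' hD hD'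
  have e : k' * m - k' = k' * (m - 1) := by ring
  rw [e, dvd_unit_mul hk'] at h1 ⊢
  exact S.KL L hy hav hvu ht (isUnit_of_mul_isUnit_right hk) hm h1

end SRsec
end Circ

namespace Circ
section ClassSec
variable {p n : ℕ} [hp : Fact p.Prime] {κ : Type*}
variable {D : (ZMod (p ^ n)) → κ} {a u l : ℕ}

lemma two_unit (h2 : p = 2) (hn : 0 < n) {k : (ZMod (p ^ n))} (hk : IsUnit k) : (p : (ZMod (p ^ n))) ∣ k - 1 := by
  rw [isUnit_iff hn] at hk
  obtain ⟨K, rfl⟩ := ZMod.intCast_surjective k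
  have h1 := dvd_val (p := p) (n := n) (a := 1) hn K
  have h3 := dvd_val (p := p) (n := n) (a := 1) hn (K - 1)
  simp only [pow_one] at h1 h3
  push_cast at h3
  rw [h3]
  rw [h1] at hk
  subst h2
  push_cast at hk ⊢
  omega

lemma two_V (h2 : p = 2) {v : ℕ} {x y : (ZMod (p ^ n))} (hx : V v x) (hy : V v y) : (p : (ZMod (p ^ n))) ^ (v + 1) ∣ x - y := by
  obtain ⟨k, hk, rfl⟩ := hy.ratio_unit hx
  have := two_unit h2 (by have := hx.lt; omega) hk
  have e : k * y - y = y * (k - 1) := by ring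
  rw [e, pow_succ]
  exact mul_dvd_mul hy.1 this

lemma SR.minval (S : SR D) (L : Level D a u l) {z : (ZMod (p ^ n))} (hz : (p : (ZMod (p ^ n))) ^ a ∣ z)
    (hz' : ¬ (p : (ZMod (p ^ n))) ^ u ∣ z) : ∃ z1, D z1 = D z ∧ V a z1 := by
  classical
  have hex : ∃ b, ∃ z1, D z1 = D z ∧ V b z1 := by
    obtain ⟨v, _, _, hv⟩ := exists_V hz hz'
    exact ⟨v, z, rfl, hv⟩
  obtain ⟨z1, hz1, hV⟩ := Nat.find_spec hex
  set b := Nat.find hex with hb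
  have hab : a ≤ b := hV.dvd_iff.1 (L.xa _ _ hz1.symm hz)
  have hbu : b < u := by
    by_contra h
    exact hz' (L.xu _ _ hz1 (hV.dvd_iff.2 (not_lt.1 h)))
  have hall : ∀ w, D w = D z → (p : (ZMod (p ^ n))) ^ b ∣ w := by
    intro w hw
    obtain ⟨v, hv1, hv2, hv⟩ := exists_V (L.xa _ _ hw.symm hz) (fun h => hz' (L.xu _ _ hw h))
    have : b ≤ v := Nat.find_min' hex ⟨w, hw, hv⟩
    exact hv.dvd_iff.2 this
  rcases hab.eq_or_lt with h | h
  · exact ⟨z1, hz1, h ▸ hV⟩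
  exfalso
  refine L.nxt b h hbu ?_
  have key : ∀ m : ℕ, ∀ w, D w = D (m * z1) → (p : (ZMod (p ^ n))) ^ b ∣ w := by
    intro m
    induction m with
    | zero =>
      intro w hw
      rw [Nat.cast_zero, zero_mul] at hw
      rw [S.zero _ hw]; exact dvd_zero _
    | succ m ih =>
      intro w hw
      push_cast at hw
      rw [add_mul, one_mul] at hw
      obtain ⟨x, y, rfl, hx, hy⟩ := S.split hw
      exact dvd_add (ih _ hx) (hall _ (hy.trans hz1))
  intro w w' hw hwb
  obtain ⟨m, rfl⟩ := dvd_nat_mul_of (hV.ratio hwb)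
  exact key m w' hw.symm

lemma SR.allval (S : SR D) (L : Level D a u l) {z : (ZMod (p ^ n))} (hz : (p : (ZMod (p ^ n))) ^ a ∣ z)
    (hz' : ¬ (p : (ZMod (p ^ n))) ^ u ∣ z) {v : ℕ} (hav : a ≤ v) (hvu : v < u) : ∃ z1, D z1 = D z ∧ V v z1 := by
  have hv : V v ((p : (ZMod (p ^ n))) ^ v) := V_pow (lt_of_lt_of_le hvu L.un)
  obtain ⟨x, hx, hVx⟩ := S.minval L (hv.dvd_iff.2 hav) (fun h => by rw [hv.dvd_iff] at h; omega)
  obtain ⟨z1, hz1, hVz⟩ := S.minval L hz hz'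
  obtain ⟨k, hk, rfl⟩ := hVx.ratio_unit hVz
  exact ⟨k * p ^ v, by rw [← hz1, S.mult hk, hx], hv.mul hk⟩

lemma V.in_H {v : ℕ} {z : (ZMod (p ^ n))} (h : V v z) (hav : a ≤ v) : (p : (ZMod (p ^ n))) ^ a ∣ z := h.dvd_iff.2 hav
lemma V.not_U {v : ℕ} {z : (ZMod (p ^ n))} (h : V v z) (hvu : v < u) : ¬ (p : (ZMod (p ^ n))) ^ u ∣ z := by
  rw [h.dvd_iff]; omega

lemma SR.ap_mul (S : SR D) (L : Level D a u l) {k y : (ZMod (p ^ n))} (hk : IsUnit k) (hk1 : (p : (ZMod (p ^ n))) ∣ k - 1)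
    (hy : (p : (ZMod (p ^ n))) ^ a ∣ y) (hy' : ¬ (p : (ZMod (p ^ n))) ^ u ∣ y) : Ap D u (k * y) y := by
  have := L.lt
  obtain ⟨y0, h0, hV⟩ := S.allval L hy hy' (v := u - 1) (by omega) (by omega)
  have h1 : Ap D u (k * y) (k * y0) := Ap.of_eq ((S.mult hk).2 h0.symm)
  have h2 : Ap D u (k * y0) y0 := Ap.of_dvd (by
    have : y0 - k * y0 = -(y0 * (k - 1)) := by ring
    rw [this, dvd_neg]
    obtain ⟨m, rfl⟩ : ∃ m, u = m + 1 := ⟨u - 1, by omega⟩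
    rw [pow_succ]
    exact mul_dvd_mul hV.1 hk1)
  exact (h1.trans S L.xu h2).trans S L.xu (Ap.of_eq h0)

lemma SR.ap_add (S : SR D) (L : Level D a u l) {y g : (ZMod (p ^ n))} {v : ℕ} (hV : V v y) (hav : a ≤ v)
    (hvu : v + 1 < u) (hg : (p : (ZMod (p ^ n))) ^ (u - 1) ∣ g) : Ap D u (y + g) y := by
  have e : y + g = (1 + p ^ 0 * 0) * y + g := by simp
  obtain ⟨s, hs⟩ := hV.ratio_mul (j := 1) ((pow_dvd_pow _ (by omega)).trans hg)
  have hk : IsUnit (1 + (p : (ZMod (p ^ n))) * s) := by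
    rw [isUnit_iff (by have := L.un; omega)]
    intro h
    have h1 := (dvd_add_left (dvd_mul_right (p : (ZMod (p ^ n))) s)).1 h
    have h2 : (p : (ZMod (p ^ n))) ^ 1 ∣ (p : (ZMod (p ^ n))) ^ 0 := by simpa using h1
    rw [pow_dvd_pow_iff' (by have := L.un; omega)] at h2
    omega
  have := S.ap_mul L hk (by simp) (hV.in_H hav) (hV.not_U (by omega))
  convert this using 1
  rw [hs]; ring

open Classical in
lemma SR.half (S : SR D) (L : Level D a u l) (h2 : a + 2 ≤ u) {x : (ZMod (p ^ n))}
    (hx : (p : (ZMod (p ^ n))) ^ a ∣ x) (hx' : ¬ (p : (ZMod (p ^ n))) ^ u ∣ x) :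
    (Finset.univ.filter fun z : (ZMod (p ^ n)) => (p : (ZMod (p ^ n))) ^ a ∣ z ∧ ¬ (p : (ZMod (p ^ n))) ^ u ∣ z).card <
      2 * (Finset.univ.filter fun z : (ZMod (p ^ n)) => Ap D u x z).card := by
  set T := Finset.univ.filter fun z : (ZMod (p ^ n)) => Ap D u x z with hT
  set A := Finset.univ.filter fun z : (ZMod (p ^ n)) => (p : (ZMod (p ^ n))) ^ a ∣ z ∧ ¬ (p : (ZMod (p ^ n))) ^ u ∣ z with hA
  set H := Finset.univ.filter fun z : (ZMod (p ^ n)) => (p : (ZMod (p ^ n))) ^ a ∣ z with hH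
  set P := Finset.univ.filter fun z : (ZMod (p ^ n)) => (p : (ZMod (p ^ n))) ^ (u - 1) ∣ z with hP
  have mT : ∀ z, z ∈ T ↔ Ap D u x z := fun z => by simp [hT]
  have hTA : ∀ z ∈ T, z ∈ A := by
    intro z hz
    rw [mT] at hz
    simp only [hA, Finset.mem_filter, Finset.mem_univ, true_and]
    exact ⟨hz.dvd (by omega) L.xa hx, fun h => hx' ((hz.symm S L.xu).dvd le_rfl L.xu h)⟩
  have hTs : ∀ z z', z ∈ T → Ap D u z z' → z' ∈ T := by
    intro z z' hz hz'
    rw [mT] at hz ⊢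
    exact hz.trans S L.xu hz'
  -- boundary bound
  have hbd : ∀ g ∈ A, (T.filter fun v => v + g ∉ T).card ≤ (T ∩ P).card := by
    intro g hg
    simp only [hA, Finset.mem_filter, Finset.mem_univ, true_and] at hg
    obtain ⟨g', hg', hV⟩ := S.allval L hg.1 hg.2 (v := u - 1) (by omega) (by omega)
    obtain ⟨e, he⟩ := S.shift hg'.symm
    refine Finset.card_le_card_of_injOn e ?_ e.injective.injOn
    intro v hv
    simp only [Finset.coe_filter, mem_setOf_eq] at hv
    have h1 : e v ∈ T := hTs _ _ hv.1 (Ap.of_eq (he v).1.symm)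
    have h3 : e v + g' ∉ T := fun h => hv.2 (hTs _ _ h (Ap.of_eq (he v).2))
    simp only [Finset.coe_inter, mem_inter_iff, Finset.mem_coe]
    refine ⟨h1, ?_⟩
    simp only [hP, Finset.mem_filter, Finset.mem_univ, true_and]
    by_contra h4
    have h5 := hTA _ h1
    simp only [hA, Finset.mem_filter, Finset.mem_univ, true_and] at h5
    obtain ⟨w, hw1, hw2, hw⟩ := exists_V h5.1 h4
    exact h3 (hTs _ _ h1 ((S.ap_add L hw hw1 (by omega) hV.1).symm S L.xu))
  have hsum : ∑ g ∈ A, (T.filter fun v => v + g ∉ T).card = ∑ v ∈ T, (A.filter fun g => v + g ∉ T).card := by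
    simp only [Finset.card_filter]
    exact Finset.sum_comm
  have hlow : ∀ v ∈ T, (H \ T).card ≤ (A.filter fun g => v + g ∉ T).card := by
    intro v hv
    refine Finset.card_le_card_of_injOn (fun z => z - v) ?_ (sub_left_injective.injOn)
    intro z hz
    simp only [Finset.coe_sdiff, mem_diff, Finset.mem_coe, hH, Finset.mem_filter, Finset.mem_univ,
      true_and] at hz
    have hvA := hTA _ hv
    simp only [hA, Finset.mem_filter, Finset.mem_univ, true_and] at hvA
    simp only [Finset.coe_filter, mem_setOf_eq, hA, Finset.mem_filter, Finset.mem_univ, true_and]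
    refine ⟨⟨dvd_sub hz.1 hvA.1, fun h => hz.2 (hTs _ _ hv (Ap.of_dvd h))⟩, ?_⟩
    rw [add_sub_cancel]; exact hz.2
  have hmain : T.card * (H \ T).card ≤ A.card * (T ∩ P).card := by
    calc T.card * (H \ T).card = ∑ v ∈ T, (H \ T).card := by simp
      _ ≤ ∑ v ∈ T, (A.filter fun g => v + g ∉ T).card := Finset.sum_le_sum hlow
      _ = ∑ g ∈ A, (T.filter fun v => v + g ∉ T).card := hsum.symm
      _ ≤ ∑ g ∈ A, (T ∩ P).card := Finset.sum_le_sum hbd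
      _ = _ := by simp
  have hTP : (T ∩ P).card < P.card := by
    refine Finset.card_lt_card ⟨Finset.inter_subset_right, fun h => ?_⟩
    have h0 : (0 : (ZMod (p ^ n))) ∈ P := by simp [hP]
    have h1 := hTA _ (Finset.mem_inter.1 (h h0)).1
    simp [hA] at h1
  have hPT : P.card ≤ (T \ P).card := by
    obtain ⟨z, hz, hV⟩ := S.minval L hx hx'
    refine Finset.card_le_card_of_injOn (fun g => z + g) ?_ (add_right_injective _).injOn
    intro g hg
    simp only [Finset.mem_coe, hP, Finset.mem_filter, Finset.mem_univ, true_and] at hg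
    simp only [Finset.coe_sdiff, mem_diff, Finset.mem_coe]
    refine ⟨?_, ?_⟩
    · rw [mT]
      exact (Ap.of_eq hz.symm).trans S L.xu ((S.ap_add L hV le_rfl (by omega) hg).symm S L.xu)
    · simp only [hP, Finset.mem_filter, Finset.mem_univ, true_and]
      rw [dvd_add_left hg, hV.dvd_iff]; omega
  have hsplit : (T \ P).card + (T ∩ P).card = T.card := Finset.card_sdiff_add_card_inter T P
  have hTH : T ⊆ H := by
    intro z hz
    have := hTA z hz
    simp only [hA, hH, Finset.mem_filter, Finset.mem_univ, true_and] at this ⊢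
    exact this.1
  have hHT : (H \ T).card + T.card = H.card := Finset.card_sdiff_add_card_eq_card hTH
  have hAH : A.card ≤ H.card := Finset.card_le_card (by
    intro z hz
    simp only [hA, hH, Finset.mem_filter, Finset.mem_univ, true_and] at hz ⊢
    exact hz.1)
  by_contra hcon
  have h1 : 2 * T.card ≤ A.card := not_lt.1 hcon
  have h3 : A.card ≤ 2 * (H \ T).card := by omega
  have h4 : 2 * (T ∩ P).card < T.card := by omega
  have h5 : 0 < A.card := by omega
  have h6 : T.card * A.card ≤ T.card * (2 * (H \ T).card) := Nat.mul_le_mul_left _ h3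
  have h7 : A.card * (2 * (T ∩ P).card) < A.card * T.card := Nat.mul_lt_mul_of_pos_left h4 h5
  nlinarith

lemma SR.one_class (S : SR D) (L : Level D a u l) (h2 : a + 2 ≤ u) {x x' : (ZMod (p ^ n))}
    (hx : (p : (ZMod (p ^ n))) ^ a ∣ x) (hx' : ¬ (p : (ZMod (p ^ n))) ^ u ∣ x) (hy : (p : (ZMod (p ^ n))) ^ a ∣ x')
    (hy' : ¬ (p : (ZMod (p ^ n))) ^ u ∣ x') : Ap D u x x' := by
  classical
  by_contra hne
  have h1 := S.half L h2 hx hx'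
  have h3 := S.half L h2 hy hy'
  have hsub : ∀ x : (ZMod (p ^ n)), (p : (ZMod (p ^ n))) ^ a ∣ x → ¬ (p : (ZMod (p ^ n))) ^ u ∣ x → ∀ z, Ap D u x z →
      (p : (ZMod (p ^ n))) ^ a ∣ z ∧ ¬ (p : (ZMod (p ^ n))) ^ u ∣ z := by
    intro x hx hx' z hz
    exact ⟨hz.dvd (by omega) L.xa hx, fun h => hx' ((hz.symm S L.xu).dvd le_rfl L.xu h)⟩
  have hd : Disjoint (Finset.univ.filter fun z : (ZMod (p ^ n)) => Ap D u x z)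
      (Finset.univ.filter fun z : (ZMod (p ^ n)) => Ap D u x' z) := by
    rw [Finset.disjoint_left]
    intro z hz hz'
    simp only [Finset.mem_filter, Finset.mem_univ, true_and] at hz hz'
    exact hne (hz.trans S L.xu (hz'.symm S L.xu))
  have h4 := Finset.card_union_of_disjoint hd
  have h5 : ((Finset.univ.filter fun z : (ZMod (p ^ n)) => Ap D u x z) ∪
      (Finset.univ.filter fun z : (ZMod (p ^ n)) => Ap D u x' z)).card ≤
      (Finset.univ.filter fun z : (ZMod (p ^ n)) => (p : (ZMod (p ^ n))) ^ a ∣ z ∧ ¬ (p : (ZMod (p ^ n))) ^ u ∣ z).card := by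
    refine Finset.card_le_card ?_
    intro z hz
    simp only [Finset.mem_union, Finset.mem_filter, Finset.mem_univ, true_and] at hz ⊢
    rcases hz with hz | hz
    · exact hsub _ hx hx' _ hz
    · exact hsub _ hy hy' _ hz
  omega

/-- the fibre set -/
def SS (D : (ZMod (p ^ n)) → κ) (u : ℕ) (z : (ZMod (p ^ n))) : Set (ZMod (p ^ n)) := {w | (p : (ZMod (p ^ n))) ^ u ∣ w ∧ D (z + w) = D z}

lemma SR.SS_card (S : SR D) (X : Xg D u) {z z' : (ZMod (p ^ n))} (h : D z = D z') :
    (SS D u z).ncard ≤ (SS D u z').ncard := by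
  obtain ⟨e, he⟩ := S.shift h
  refine ncard_le_ncard_of_injOn e ?_ e.injective.injOn (toFinite _)
  rintro w ⟨hw, hw'⟩
  exact ⟨X _ _ (he w).1.symm hw, by rw [add_comm, (he w).2, add_comm, hw', h]⟩

lemma SR.rad_eq (S : SR D) (L : Level D a u l) (h2 : a + 2 ≤ u) : l = u := by
  by_contra hlu
  have hul := L.ul
  have hl : u < l := by omega
  have hln := L.ln
  have hun := L.un
  have h1 : ∀ k z : (ZMod (p ^ n)), IsUnit k → (p : (ZMod (p ^ n))) ^ (l - u + 1) ∣ k - 1 → (p : (ZMod (p ^ n))) ^ a ∣ z →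
      ¬ (p : (ZMod (p ^ n))) ^ u ∣ z → D (k * z) = D z := by
    intro k z hk hk1 hz hz'
    obtain ⟨z1, h0, hV⟩ := S.allval L hz hz' (v := u - 1) (by omega) (by omega)
    rw [← (S.mult hk).2 h0, ← h0]
    have e : k * z1 = z1 + (k - 1) * z1 := by ring
    rw [e]
    refine L.rad _ _ (hV.in_H (by omega)) (hV.not_U (by omega)) ?_
    have : l = (l - u + 1) + (u - 1) := by omega
    rw [this, pow_add]
    exact mul_dvd_mul hk1 hV.1
  have hunit : ∀ {v : ℕ} {z w k : (ZMod (p ^ n))}, V v z → z + w = k * z → (p : (ZMod (p ^ n))) ^ (v + 1) ∣ w → IsUnit k := by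
    intro v z w k hV hk hw
    have h3 : V v (k * z) := by rw [← hk]; exact hV.add hw (by omega)
    rw [isUnit_iff (by omega)]
    rintro ⟨t, rfl⟩
    apply h3.2
    have : (p : (ZMod (p ^ n))) * t * z = z * p * t := by ring
    rw [this, pow_succ]
    exact (mul_dvd_mul hV.1 dvd_rfl).mul_right _
  have h1' : ∀ v z w, V v z → a ≤ v → v < u → (p : (ZMod (p ^ n))) ^ (v + (l - u + 1)) ∣ w →
      D (z + w) = D z := by
    intro v z w hV hav hvu hw
    obtain ⟨s, hs⟩ := hV.ratio_mul hw
    have e : z + w = (1 + p ^ (l - u + 1) * s) * z := by rw [hs]; ring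
    rw [e]
    exact h1 _ _ (hunit hV e ((pow_dvd_pow _ (by omega)).trans hw)) (by simp) (hV.in_H hav)
      (hV.not_U hvu)
  have hP2 : ∀ y : (ZMod (p ^ n)), V (u - 1) y → ∃ t : (ZMod (p ^ n)), D (y + (p : (ZMod (p ^ n))) ^ (l - 1) * t) ≠ D y := by
    intro y hV
    by_contra hcon
    push Not at hcon
    have := L.min (l - 1) (by omega) (by
      intro z w hz hz' hw
      obtain ⟨v, hav, hvu, hVz⟩ := exists_V hz hz'
      rcases Nat.lt_or_ge v (u - 1) with h | h
      · exact h1' v z w hVz hav hvu ((pow_dvd_pow _ (by omega)).trans hw)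
      · obtain rfl : v = u - 1 := by omega
        obtain ⟨k, hk, rfl⟩ := hV.ratio_unit hVz
        obtain ⟨t, rfl⟩ := hw
        obtain ⟨k, rfl⟩ := hk
        have e : (k : (ZMod (p ^ n))) * y + p ^ (l - 1) * t = k * (y + p ^ (l - 1) * (↑k⁻¹ * t)) := by
          rw [mul_add]
          congr 1
          calc _ = (p : (ZMod (p ^ n))) ^ (l - 1) * ((k * ↑k⁻¹ : (ZMod (p ^ n))) * t) := by simp
            _ = _ := by ring
        rw [e, S.mult k.isUnit, hcon])
    omega
  set y : (ZMod (p ^ n)) := p ^ (u - 1) with hy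
  have hVy : V (u - 1) y := V_pow (by omega)
  have hyH : (p : (ZMod (p ^ n))) ^ a ∣ y := hVy.in_H (by omega)
  have hyU : ¬ (p : (ZMod (p ^ n))) ^ u ∣ y := hVy.not_U (by omega)
  have hKL : ∀ k : (ZMod (p ^ n)), IsUnit k → D (k * y) = D y → (p : (ZMod (p ^ n))) ^ (nu p) ∣ k - 1 → (p : (ZMod (p ^ n))) ^ (l - u + 1) ∣ k - 1 := by
    intro k hk hD hk1
    have := S.KL L hVy (by omega) (by omega) (hP2 y hVy) hk hD hk1
    have e : l - (u - 1) = l - u + 1 := by omega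
    rwa [e] at this
  -- elements of S_z
  have hS : ∀ v z w, V v z → D z = D y → a ≤ v → v < u → v + nu p ≤ u → (p : (ZMod (p ^ n))) ^ u ∣ w →
      D (z + w) = D z → (p : (ZMod (p ^ n))) ^ (v + (l - u + 1)) ∣ w := by
    intro v z w hV hzy hav hvu hvn hw hD
    obtain ⟨s, hs⟩ := hV.ratio_mul ((pow_dvd_pow _ hvn).trans hw)
    have e : z + w = (1 + p ^ (nu p) * s) * z := by rw [hs]; ring
    have hk := hunit hV e ((pow_dvd_pow _ (by omega)).trans hw)
    rw [e] at hD
    have hDy : D ((1 + p ^ (nu p) * s) * y) = D y := by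
      rw [← hzy, ← hD, (S.mult hk).2 hzy.symm]
    have := hKL _ hk hDy (by simp)
    rw [add_sub_cancel_left] at this
    rw [hs, add_comm v, pow_add]
    exact mul_dvd_mul this hV.1
  have hle : ∀ {b c : ℕ}, b ≤ n → c ≤ n → p ^ (n - b) ≤ p ^ (n - c) → c ≤ b := by
    intro b c hb hc h
    have := (Nat.pow_le_pow_iff_right hp.out.one_lt).1 h
    omega
  have hcmp : ∀ v v' z z', V v z → V v' z' → D z = D y → D z' = D y → a ≤ v → v < u → a ≤ v' → v' < u →
      v + nu p ≤ u → u ≤ v' + (l - u + 1) → v ≤ v' := by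
    intro v v' z z' hV hV' hz hz' h3 h4 h5 h6 h7 h8
    have hc1 : (SS D u z).ncard ≤ p ^ (n - (v + (l - u + 1))) := by
      rw [← card_dvd (p := p) (by omega)]
      exact ncard_le_ncard (fun w hw => hS v z w hV hz h3 h4 h7 hw.1 hw.2) (toFinite _)
    have hc2 : p ^ (n - (v' + (l - u + 1))) ≤ (SS D u z').ncard := by
      rw [← card_dvd (p := p) (by omega)]
      refine ncard_le_ncard (fun w hw => ?_) (toFinite _)
      exact ⟨(pow_dvd_pow _ h8).trans hw, h1' v' z' w hV' h5 h6 hw⟩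
    have hc3 := S.SS_card L.xu (hz'.trans hz.symm)
    have := hle (by omega) (by omega) (hc2.trans (hc3.trans hc1))
    omega
  obtain ⟨z2, hz2, hV2⟩ := S.allval L hyH hyU (v := u - 2) (by omega) (by omega)
  by_cases hp2 : p = 2
  swap
  · have hnu : nu p = 1 := by simp [nu, hp2]
    have := hcmp (u - 1) (u - 2) y z2 hVy hV2 rfl hz2 (by omega) (by omega) (by omega) (by omega)
      (by omega) (by omega)
    omega
  have hnu : nu p = 2 := by simp [nu, hp2]
  rcases Nat.lt_or_ge (u + 1) l with hl2 | hl2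
  swap
  · obtain rfl : l = u + 1 := by omega
    obtain ⟨t, ht⟩ := hP2 y hVy
    apply ht
    have hc1 : {w : (ZMod (p ^ n)) | (p : (ZMod (p ^ n))) ^ u ∣ w} ⊆ SS D u z2 := fun w hw =>
      ⟨hw, h1' _ z2 w hV2 (by omega) (by omega) ((pow_dvd_pow _ (by omega)).trans hw)⟩
    have hc2 : SS D u y ⊆ {w : (ZMod (p ^ n)) | (p : (ZMod (p ^ n))) ^ u ∣ w} := fun w hw => hw.1
    have := eq_of_subset_of_ncard_le hc2 ((ncard_le_ncard hc1 (toFinite _)).trans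
      (S.SS_card L.xu hz2)) (toFinite _)
    have h3 : (p : (ZMod (p ^ n))) ^ (u + 1 - 1) * t ∈ SS D u y := by
      rw [this]; exact dvd_mul_right _ _
    exact h3.2
  rcases Nat.lt_or_ge (a + 2) u with h3 | h3
  · obtain ⟨z3, hz3, hV3⟩ := S.allval L hyH hyU (v := u - 3) (by omega) (by omega)
    have := hcmp (u - 2) (u - 3) z2 z3 hV2 hV3 hz2 hz3 (by omega) (by omega) (by omega) (by omega)
      (by omega) (by omega)
    omega
  obtain rfl : u = a + 2 := by omega
  have ea : a + 2 - 2 = a := by omega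
  have ea1 : a + 2 - 1 = a + 1 := by omega
  rw [ea] at hV2
  rw [ea1] at hVy hP2
  have hg1 : (p : (ZMod (p ^ n))) ^ (a + 2) ∣ (p : (ZMod (p ^ n))) ^ (l - 1) := pow_dvd_pow _ (by omega)
  have hVg : V (l - 1) ((p : (ZMod (p ^ n))) ^ (l - 1)) := V_pow (by omega)
  -- the class of g
  have hclass : ∀ w', D w' = D ((p : (ZMod (p ^ n))) ^ (l - 1)) → (p : (ZMod (p ^ n))) ^ (l - 1) ∣ w' := by
    intro w' hw'
    by_contra hne
    have hw'U := L.xu _ _ hw'.symm hg1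
    obtain ⟨e, he⟩ := S.shift hw'.symm
    -- count
    have hc1 : {v | D v = D y ∧ D (v + w') = D y}.ncard ≤ (SS D (a + 2) y).ncard := by
      refine ncard_le_ncard_of_injOn (fun v => v - y) ?_ (sub_left_injective.injOn) (toFinite _)
      rintro v ⟨hv1, hv2⟩
      have hvH := L.xa _ _ hv1.symm hyH
      have hvU : ¬ (p : (ZMod (p ^ n))) ^ (a + 2) ∣ v := fun h => hyU (L.xu _ _ hv1 h)
      obtain ⟨w, hw1, hw2, hw⟩ := exists_V hvH hvU
      have hwa : w = a + 1 := by
        by_contra hwa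
        obtain rfl : w = a := by omega
        apply hne
        have := hS _ v w' hw hv1 (by omega) (by omega) (by omega) hw'U (by rw [hv2, hv1])
        exact (pow_dvd_pow _ (by omega)).trans this
      subst hwa
      refine ⟨two_V hp2 hw hVy, ?_⟩
      simp only [add_sub_cancel, hv1]
    obtain ⟨w2, hw2, hw2'⟩ : Ap D (a + 2) (-z2) z2 :=
      S.one_class L h2 (hV2.neg.in_H le_rfl) (hV2.neg.not_U (by omega)) (hV2.in_H le_rfl)
        (hV2.not_U (by omega))
    set z3 := -z2 + w2 with hz3
    have hV3 : V a z3 := hV2.neg.add hw2 (by omega)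
    have hD3 : D z3 = D y := hw2'.trans hz2
    have hgood : ∀ z, V a z → D z = D y → (fun w => z + w) '' (SS D (a + 2) z) ⊆
        {v | D v = D y ∧ D (v + p ^ (l - 1)) = D y} := by
      rintro z hV hz _ ⟨w, hw, rfl⟩
      have h5 : D (z + w) = D y := hw.2.trans hz
      refine ⟨h5, ?_⟩
      have hV5 : V a (z + w) := hV.add hw.1 (by omega)
      rw [← h5]
      exact h1' a _ _ hV5 le_rfl (by omega) (pow_dvd_pow _ (by omega))
    have hdisj : Disjoint ((fun w => z2 + w) '' (SS D (a + 2) z2)) ((fun w => z3 + w) '' (SS D (a + 2) z3)) := by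
      rw [Set.disjoint_left]
      rintro _ ⟨w, hw, rfl⟩ ⟨w3, hw3, h5⟩
      simp only [] at h5
      have h6 : (p : (ZMod (p ^ n))) * z2 = w2 + w3 - w := by
        have : (p : (ZMod (p ^ n))) = 1 + 1 := by rw [hp2]; norm_num
        rw [this]
        rw [hz3] at h5
        linear_combination -h5
      have h7 : (p : (ZMod (p ^ n))) ^ (a + 2) ∣ p * z2 := by
        rw [h6]
        exact dvd_sub (dvd_add hw2 hw3.1) hw.1
      obtain ⟨k, hk, hzk⟩ := hV2.eq_unit
      rw [hzk] at h7
      have h8 : (p : (ZMod (p ^ n))) ^ (a + 2) ∣ k * p ^ (a + 1) := by convert h7 using 1; ring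
      rw [dvd_unit_mul hk, pow_dvd_pow_iff' (by omega)] at h8
      omega
    have hc2 := ncard_le_ncard (union_subset (hgood z2 hV2 hz2) (hgood z3 hV3 hD3)) (toFinite _)
    rw [ncard_union_eq hdisj (toFinite _) (toFinite _), ncard_image_of_injective _ (add_right_injective _),
      ncard_image_of_injective _ (add_right_injective _)] at hc2
    have hc3 := S.SS_card L.xu hz2.symm
    have hc4 := S.SS_card L.xu hD3.symm
    have hc5 : {v | D v = D y ∧ D (v + p ^ (l - 1)) = D y}.ncard ≤
        {v | D v = D y ∧ D (v + w') = D y}.ncard := by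
      refine ncard_le_ncard_of_injOn e ?_ e.injective.injOn (toFinite _)
      rintro v ⟨hv1, hv2⟩
      exact ⟨(he v).1.trans hv1, (he v).2.trans hv2⟩
    have hc6 : 0 < (SS D (a + 2) y).ncard := by
      rw [ncard_pos (toFinite _)]
      exact ⟨0, dvd_zero _, by rw [add_zero]⟩
    omega
  have hgL : ∀ w', D w' = D ((p : (ZMod (p ^ n))) ^ (l - 1)) → (p : (ZMod (p ^ n))) ^ l ∣ w' - p ^ (l - 1) := by
    intro w' hw'
    have hX := S.Xg_l L
    have hV : V (l - 1) w' := ⟨hclass w' hw', by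
      have e : l - 1 + 1 = l := by omega
      rw [e]
      intro h
      have := hX _ _ hw' h
      rw [hVg.dvd_iff] at this
      omega⟩
    have := two_V hp2 hV hVg
    have e : l - 1 + 1 = l := by omega
    rwa [e] at this
  have hzg : D (z2 + p ^ (l - 1)) = D z2 :=
    h1' a _ _ hV2 le_rfl (by omega) (pow_dvd_pow _ (by omega))
  obtain ⟨w', hw', hw2⟩ := S.ext hz2 ((p : (ZMod (p ^ n))) ^ (l - 1))
  have hyg : D (y + p ^ (l - 1)) = D y := by
    have e : y + w' = (y + p ^ (l - 1)) + (w' - p ^ (l - 1)) := by ring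
    rw [e, L.rad _ _ (dvd_add hyH ((pow_dvd_pow _ (by omega)).trans hg1))
      (by rw [dvd_add_left hg1]; exact hyU) (hgL w' hw')] at hw2
    rw [hw2, hzg, hz2]
  obtain ⟨t, ht⟩ := hP2 y hVy
  apply ht
  by_cases htu : IsUnit t
  · have e : y + p ^ (l - 1) * t = (y + p ^ (l - 1)) + p ^ (l - 1) * (t - 1) := by ring
    rw [e, L.rad _ _ (dvd_add hyH ((pow_dvd_pow _ (by omega)).trans hg1))
      (by rw [dvd_add_left hg1]; exact hyU), hyg]
    have : l = (l - 1) + 1 := by omega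
    rw [this, pow_succ, ← this]
    exact mul_dvd_mul dvd_rfl (two_unit hp2 (by omega) htu)
  · rw [isUnit_iff (by omega), not_not] at htu
    refine L.rad _ _ hyH hyU ?_
    have : l = (l - 1) + 1 := by omega
    rw [this, pow_succ, ← this]
    exact mul_dvd_mul dvd_rfl htu

/-- The classification of levels. -/
theorem SR.class_thm (S : SR D) (L : Level D a u l) : u = a + 1 ∨ (l = u ∧
    ∀ z z', (p : (ZMod (p ^ n))) ^ a ∣ z → ¬ (p : (ZMod (p ^ n))) ^ u ∣ z → (p : (ZMod (p ^ n))) ^ a ∣ z' → ¬ (p : (ZMod (p ^ n))) ^ u ∣ z' → D z = D z') := by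
  by_cases h : u = a + 1
  · exact Or.inl h
  · right
    have := L.lt
    have hl := S.rad_eq L (by omega)
    refine ⟨hl, fun z z' h1 h2 h3 h4 => ?_⟩
    have := S.one_class L (by omega) h1 h2 h3 h4
    rw [← hl] at this
    exact L.ap_eq this h1 h2

end ClassSec
end Circ

namespace Circ

section Disc
variable {p n : ℕ} [hp : Fact p.Prime] {κ : Type*}
variable {D : (ZMod (p ^ n)) → κ} {a u l : ℕ}

lemma p_of_sub {k : (ZMod (p ^ n))} (hn : 0 < n) (h2 : p = 2) (hk : IsUnit k) {z : (ZMod (p ^ n))} {b : ℕ} (hz : (p : (ZMod (p ^ n))) ^ b ∣ z) :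
    (p : (ZMod (p ^ n))) ^ (b + 1) ∣ (k - 1) * z := by
  rw [pow_succ, mul_comm (k - 1)]
  exact mul_dvd_mul hz (two_unit h2 hn hk)

/-- multipliers fixing one valuation-`a` element fix all of them -/
lemma SR.mult_all (S : SR D) {k x z : (ZMod (p ^ n))} (hk : IsUnit k) (hx : V a x) (hz : V a z) (h : D (k * x) = D x) :
    D (k * z) = D z := by
  obtain ⟨m, hm, rfl⟩ := hx.ratio_unit hz
  rw [mul_left_comm, S.mult hm, h]

lemma SR.tA (S : SR D) (L : Level D a (a + 1) l) (hl : a + 2 ≤ l) {y : (ZMod (p ^ n))} (hV : V a y) :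
    ∃ t : (ZMod (p ^ n)), D (y + (p : (ZMod (p ^ n))) ^ (l - 1) * t) ≠ D y := by
  by_contra hcon
  push Not at hcon
  have := L.min (l - 1) (by omega) (by
    intro z w hz hz' hw
    obtain ⟨v, hav, hvu, hVz⟩ := exists_V hz hz'
    obtain rfl : v = a := by omega
    obtain ⟨k, hk, rfl⟩ := hV.ratio_unit hVz
    obtain ⟨t, rfl⟩ := hw
    obtain ⟨k, rfl⟩ := hk
    have e : (k : (ZMod (p ^ n))) * y + p ^ (l - 1) * t = k * (y + p ^ (l - 1) * (↑k⁻¹ * t)) := by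
      rw [mul_add]
      congr 1
      calc _ = (p : (ZMod (p ^ n))) ^ (l - 1) * ((k * ↑k⁻¹ : (ZMod (p ^ n))) * t) := by simp
        _ = _ := by ring
    rw [e, S.mult k.isUnit, hcon])
  omega

lemma SR.KA (S : SR D) (L : Level D a (a + 1) l) (hl : a + 2 ≤ l) {y : (ZMod (p ^ n))} (hV : V a y) {k k' : (ZMod (p ^ n))}
    (hk : IsUnit k) (hk' : IsUnit k') (hD : D (k * y) = D y) (hD' : D (k' * y) = D y)
    (h1 : (p : (ZMod (p ^ n))) ^ (nu p) ∣ k - k') : (p : (ZMod (p ^ n))) ^ (l - a) ∣ k - k' :=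
  S.KLc L hV le_rfl (by omega) (S.tA L hl hV) hk hk' hD hD' h1

lemma SR.KA1 (S : SR D) (L : Level D a (a + 1) l) (hl : a + 2 ≤ l) {y : (ZMod (p ^ n))} (hV : V a y) {k : (ZMod (p ^ n))}
    (hk : IsUnit k) (hD : D (k * y) = D y)
    (h1 : (p : (ZMod (p ^ n))) ^ (nu p) ∣ k - 1) : (p : (ZMod (p ^ n))) ^ (l - a) ∣ k - 1 :=
  S.KA L hl hV hk isUnit_one hD (by rw [one_mul]) h1

lemma SR.KA0 (S : SR D) (L : Level D a (a + 1) l) (hl : a + 2 ≤ l) {y : (ZMod (p ^ n))} (hV : V a y) {k : (ZMod (p ^ n))}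
    (hk : IsUnit k) (hD : D (k * y) = D y)
    (h1 : (p : (ZMod (p ^ n))) ^ (l - a - 1) ∣ k - 1) : (p : (ZMod (p ^ n))) ^ (l - a) ∣ k - 1 :=
  S.KL0 L hV le_rfl (by omega) (S.tA L hl hV) hk hD hl h1

lemma V_of_not {z : (ZMod (p ^ n))} (h : (p : (ZMod (p ^ n))) ^ a ∣ z) (h' : ¬ (p : (ZMod (p ^ n))) ^ (a + 1) ∣ z) : V a z := ⟨h, h'⟩

lemma Level.V_of_eq (L : Level D a (a + 1) l) {z z' : (ZMod (p ^ n))} (h : D z = D z') (hV : V a z) : V a z' :=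
  ⟨L.xa _ _ h hV.1, fun h2 => hV.2 (L.xu _ _ h.symm h2)⟩

lemma SR.N2 (S : SR D) (L : Level D a (a + 1) l) (hl : a + 2 ≤ l) (h2 : p = 2) {z z' : (ZMod (p ^ n))}
    (hz : V (a + 1) z) (hz' : (p : (ZMod (p ^ n))) ^ (a + 2) ∣ z') (h : D z = D z') : False := by
  have hln := L.ln
  have e2 : (p : (ZMod (p ^ n))) = 1 + 1 := by rw [h2]; norm_num
  obtain ⟨x1, rfl⟩ : ∃ x1, z = x1 + x1 := by
    obtain ⟨c, hc⟩ := hz.1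
    refine ⟨(p : (ZMod (p ^ n))) ^ a * c, ?_⟩
    rw [hc, pow_succ, e2]; ring
  have hx1 : V a x1 := by
    have e : x1 + x1 = p * x1 := by rw [e2]; ring
    rw [e] at hz
    constructor
    · have := V.cancel (V_pow (p := p) (n := n) (v := 1) (by omega)) (j := a) (by omega)
        (k := x1) (by rw [pow_one, mul_comm x1, add_comm]; exact hz.1)
      exact this
    · intro h3
      apply hz.2
      rw [pow_succ, mul_comm]
      exact mul_dvd_mul dvd_rfl h3
  obtain ⟨v1, v2, hv, hD1, hD2⟩ := S.split h.symm
  obtain ⟨e, he⟩ := S.bij _ _ h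
  have hsub : ∀ v, D v = D x1 → D (x1 + x1 - v) = D x1 → (p : (ZMod (p ^ n))) ^ l ∣ v - x1 := by
    intro v hv hv'
    have hVv := L.V_of_eq hv.symm hx1
    have hVv' := L.V_of_eq hv'.symm hx1
    obtain ⟨k, hk, rfl⟩ := hx1.ratio_unit hVv
    obtain ⟨k', hk', hkk⟩ := hx1.ratio_unit hVv'
    have h3 : (p : (ZMod (p ^ n))) ^ (l - a) ∣ k - (2 - k) := by
      have e3 : (2 - k) * x1 = k' * x1 := by rw [← hkk]; ring
      have hV2 : V a ((2 - k) * x1) := by rw [e3]; exact hx1.mul hk'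
      have hu : IsUnit (2 - k) := by
        obtain ⟨q, hq, hq2⟩ := hx1.ratio_unit hV2
        rw [isUnit_iff (by omega)]
        rintro ⟨t, ht⟩
        apply hV2.2
        rw [ht, pow_succ, mul_assoc, mul_comm (p : (ZMod (p ^ n))) (t * x1)]
        exact mul_dvd_mul (hx1.1.mul_left _) dvd_rfl
      refine S.KA L hl hx1 hk hu hv (by rw [e3, ← hkk, hv']) ?_
      have e4 : k - (2 - k) = p * (k - 1) := by rw [e2]; ring
      have e5 : nu p = 2 := by simp [nu, h2]
      rw [e4, e5, pow_two]
      exact mul_dvd_mul dvd_rfl (two_unit h2 (by omega) hk)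
    have h4 : (p : (ZMod (p ^ n))) ^ (l - a - 1) ∣ k - 1 := by
      refine V.cancel (V_pow (p := p) (n := n) (v := 1) (by omega)) (by omega) ?_
      have e5 : 1 + (l - a - 1) = l - a := by omega
      rw [e5, pow_one]
      convert h3 using 1
      rw [e2]; ring
    have h5 := S.KA0 L hl hx1 hk hv h4
    have e6 : k * x1 - x1 = (k - 1) * x1 := by ring
    have e7 : l = (l - a) + a := by omega
    rw [e6, e7, pow_add]
    exact mul_dvd_mul h5 hx1.1
  have hV1 : V a v1 := L.V_of_eq hD1.symm hx1
  have hV2 : V a v2 := L.V_of_eq hD2.symm hx1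
  have hin : ∀ t, (p : (ZMod (p ^ n))) ^ l ∣ t → (p : (ZMod (p ^ n))) ^ l ∣ e.symm (v1 + t) - x1 ∧ (p : (ZMod (p ^ n))) ^ l ∣ e.symm (v2 + t) - x1 := by
    intro t ht
    have hr1 : ∀ t, (p : (ZMod (p ^ n))) ^ l ∣ t → D (v1 + t) = D x1 := fun t ht =>
      (L.rad _ _ hV1.1 hV1.2 ht).trans hD1
    have hr2 : ∀ t, (p : (ZMod (p ^ n))) ^ l ∣ t → D (v2 + t) = D x1 := fun t ht =>
      (L.rad _ _ hV2.1 hV2.2 ht).trans hD2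
    constructor
    · have := he (e.symm (v1 + t))
      rw [e.apply_symm_apply] at this
      refine hsub _ (this.1.symm.trans (hr1 t ht)) ?_
      rw [← this.2, hv]
      have : v1 + v2 - (v1 + t) = v2 + (-t) := by ring
      rw [this]
      exact hr2 _ ((dvd_neg).2 ht)
    · have := he (e.symm (v2 + t))
      rw [e.apply_symm_apply] at this
      refine hsub _ (this.1.symm.trans (hr2 t ht)) ?_
      rw [← this.2, hv]
      have : v1 + v2 - (v2 + t) = v1 + (-t) := by ring
      rw [this]
      exact hr1 _ ((dvd_neg).2 ht)
  have hi : (fun t => e.symm (v1 + t) - x1) '' {t : (ZMod (p ^ n)) | (p : (ZMod (p ^ n))) ^ l ∣ t} ⊆ {t : (ZMod (p ^ n)) | (p : (ZMod (p ^ n))) ^ l ∣ t} := by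
    rintro _ ⟨t, ht, rfl⟩
    exact (hin t ht).1
  have hinj : Function.Injective (fun t => e.symm (v1 + t) - x1) := by
    intro t t' htt
    simpa using htt
  have heq := eq_of_subset_of_ncard_le hi (by rw [ncard_image_of_injective _ hinj]) (toFinite _)
  have hm : e.symm (v2 + 0) - x1 ∈ {t : (ZMod (p ^ n)) | (p : (ZMod (p ^ n))) ^ l ∣ t} := (hin 0 (dvd_zero _)).2
  rw [← heq] at hm
  obtain ⟨t, ht, htt⟩ := hm
  simp only [add_zero, sub_left_inj, e.symm.injective.eq_iff] at htt
  have ht' : (p : (ZMod (p ^ n))) ^ l ∣ t := ht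
  have h7 : (p : (ZMod (p ^ n))) ^ (a + 2) ∣ p * v1 := by
    have e8 : (p : (ZMod (p ^ n))) * v1 = z' - t := by rw [e2, hv, ← htt]; ring
    rw [e8]
    exact dvd_sub hz' ((pow_dvd_pow _ hl).trans ht')
  have := V.cancel hV1 (j := 2) (by omega) h7
  have h9 : (p : (ZMod (p ^ n))) ^ 2 ∣ (p : (ZMod (p ^ n))) ^ 1 := by rwa [pow_one]
  rw [pow_dvd_pow_iff' (by omega)] at h9
  omega

lemma SR.NN (S : SR D) (L : Level D a (a + 1) l) (hl : a + 2 ≤ l) {z z' : (ZMod (p ^ n))}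
    (hz : (p : (ZMod (p ^ n))) ^ (a + 1) ∣ z) (h : Ap D l z z') :
    (p : (ZMod (p ^ n))) ^ (a + nu p) ∣ z - z' := by
  obtain ⟨w, hw, h⟩ := h
  have hw1 : (p : (ZMod (p ^ n))) ^ (a + 1) ∣ w := (pow_dvd_pow _ (by omega)).trans hw
  have hz' := L.xu _ _ h (dvd_add hz hw1)
  by_cases h2 : p = 2
  swap
  · have : nu p = 1 := by simp [nu, h2]
    rw [this]
    exact dvd_sub hz hz'
  have e : nu p = 2 := by simp [nu, h2]
  rw [e]
  have hw2 : (p : (ZMod (p ^ n))) ^ (a + 2) ∣ w := (pow_dvd_pow _ (by omega)).trans hw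
  have hzz := dvd_add hz hw1
  suffices hs : (p : (ZMod (p ^ n))) ^ (a + 2) ∣ (z + w) - z' by
    have := dvd_sub hs hw2
    convert this using 1; ring
  by_cases h3 : (p : (ZMod (p ^ n))) ^ (a + 2) ∣ z + w
  · by_cases h4 : (p : (ZMod (p ^ n))) ^ (a + 2) ∣ z'
    · exact dvd_sub h3 h4
    · exact (S.N2 L hl h2 ⟨hz', h4⟩ h3 h.symm).elim
  · by_cases h4 : (p : (ZMod (p ^ n))) ^ (a + 2) ∣ z'
    · exact (S.N2 L hl h2 ⟨hzz, h3⟩ h4 h).elim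
    · exact two_V h2 (v := a + 1) ⟨hzz, h3⟩ ⟨hz', h4⟩

lemma nu_of {k x y : (ZMod (p ^ n))} (hn : a + nu p ≤ n) (hx : V a x) (h : (p : (ZMod (p ^ n))) ^ (a + nu p) ∣ k * x) :
    (p : (ZMod (p ^ n))) ^ (nu p) ∣ k := hx.cancel hn h

lemma mul_dvd_l {k y : (ZMod (p ^ n))} (hal : a ≤ l) (hk : (p : (ZMod (p ^ n))) ^ (l - a) ∣ k) (hy : (p : (ZMod (p ^ n))) ^ a ∣ y) :
    (p : (ZMod (p ^ n))) ^ l ∣ k * y := by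
  have e7 : l = (l - a) + a := by omega
  rw [e7, pow_add]
  exact mul_dvd_mul hk hy

lemma nu_mul {k z : (ZMod (p ^ n))} (hn : 0 < n) (hz : (p : (ZMod (p ^ n))) ^ (a + 1) ∣ z) (hk : IsUnit k) :
    (p : (ZMod (p ^ n))) ^ (a + nu p) ∣ (k - 1) * z := by
  by_cases h2 : p = 2
  · have e : nu p = 2 := by simp [nu, h2]
    rw [e]
    exact p_of_sub hn h2 hk hz
  · have : nu p = 1 := by simp [nu, h2]
    rw [this]
    exact hz.mul_left _

lemma SR.mulAut (S : SR D) (L : Level D a (a + 1) l) {k x z : (ZMod (p ^ n))} (hk : IsUnit k) (hx : V a x)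
    (hD : D (k * x) = D x) (hz : (p : (ZMod (p ^ n))) ^ a ∣ z) : Ap D l (k * z) z := by
  by_cases hz1 : (p : (ZMod (p ^ n))) ^ (a + 1) ∣ z
  swap
  · exact Ap.of_eq (S.mult_all hk hx ⟨hz, hz1⟩ hD)
  by_cases hl : a + 2 ≤ l
  swap
  · have := L.ul
    obtain rfl : l = a + 1 := by omega
    exact Ap.of_dvd (dvd_sub hz1 (hz1.mul_left _))
  have hxz : V a (x + z) := hx.add hz1 (by omega)
  have h1 := S.mult_all hk hx hxz hD
  obtain ⟨b, z', hb, hDb, hDz⟩ := S.split h1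
  have hVb := L.V_of_eq hDb.symm hx
  obtain ⟨k2, hk2, rfl⟩ := hx.ratio_unit hVb
  have hln := L.ln
  have hnu := nu_le p
  have h3 := S.NN L hl hz1 (Ap.of_eq hDz.symm)
  have h4 := nu_mul (by omega) hz1 hk
  have h5 : (p : (ZMod (p ^ n))) ^ (nu p) ∣ k2 - k := by
    refine hx.cancel (by omega) ?_
    have := dvd_add h3 h4
    convert this using 1
    linear_combination -hb
  have h6 := S.KA L hl hx hk2 hk hDb hD h5
  refine ⟨z' - k * z, ?_, by rw [← hDz]; ring_nf⟩
  have h7 := mul_dvd_l (by omega) h6 hx.1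
  rw [← dvd_neg]
  convert h7 using 1
  linear_combination hb

lemma SR.rigid (S : SR D) (L : Level D a (a + 1) l) (hl : a + 2 ≤ l) {w : (ZMod (p ^ n))} (hw : V a w)
    (Rel : (ZMod (p ^ n)) → (ZMod (p ^ n)) → Prop)
    (h1 : ∀ y y', Rel y y' → (p : (ZMod (p ^ n))) ^ a ∣ y →
      (p : (ZMod (p ^ n))) ^ a ∣ y' ∧ Ap D l y y' ∧ Ap D l (y - w) (y' - w))
    (h2 : ∀ y y' v, Rel y y' → (p : (ZMod (p ^ n))) ^ a ∣ y → (p : (ZMod (p ^ n))) ^ a ∣ v →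
      ∃ v', Rel v v' ∧ Ap D l (v - y) (v' - y')) {y y' : (ZMod (p ^ n))} (hR : Rel y y') (hy : (p : (ZMod (p ^ n))) ^ a ∣ y) :
    (p : (ZMod (p ^ n))) ^ l ∣ y' - y := by
  have hln := L.ln
  have hnu := nu_le p
  have stepA : ∀ y y', Rel y y' → (p : (ZMod (p ^ n))) ^ (a + 1) ∣ y - w → (p : (ZMod (p ^ n))) ^ l ∣ y' - y := by
    intro y y' hR hyw
    have hVy : V a y := by
      have := hw.add hyw (by omega)
      rwa [add_sub_cancel] at this
    obtain ⟨g1, g2, g3⟩ := h1 _ _ hR hVy.1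
    have hD := L.ap_eq g2 hVy.1 hVy.2
    obtain ⟨k, hk, rfl⟩ := hVy.ratio_unit (L.V_of_eq hD hVy)
    have h3 := S.NN L hl hyw g3
    have h4 : (p : (ZMod (p ^ n))) ^ (nu p) ∣ k - 1 := by
      refine hVy.cancel (by omega) ?_
      rw [← dvd_neg]
      convert h3 using 1; ring
    have h5 := S.KA1 L hl hVy hk hD.symm h4
    have := mul_dvd_l (by omega) h5 hVy.1
    convert this using 1; ring
  by_cases hyw : (p : (ZMod (p ^ n))) ^ (a + 1) ∣ y - w
  · exact stepA _ _ hR hyw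
  have hVyw : V a (y - w) := ⟨dvd_sub hy hw.1, hyw⟩
  obtain ⟨g1, g2, g3⟩ := h1 _ _ hR hy
  have hD := L.ap_eq g3 hVyw.1 hVyw.2
  obtain ⟨k, hk, hk1⟩ := hVyw.ratio_unit (L.V_of_eq hD hVyw)
  have hpw : (p : (ZMod (p ^ n))) ^ (a + 1) ∣ p * w := by rw [pow_succ, mul_comm]; exact mul_dvd_mul dvd_rfl hw.1
  obtain ⟨v', hRv, hv'⟩ := h2 y y' (w + p * w) hR hy (dvd_add hw.1 (hw.1.mul_left _))
  have hvv := stepA _ _ hRv (by rwa [add_sub_cancel_left])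
  have hVv : V a (w + (p : (ZMod (p ^ n))) * w - y) := by
    have := (hVyw.neg).add hpw (by omega)
    convert this using 1; ring
  have hD2 := L.ap_eq hv' hVv.1 hVv.2
  obtain ⟨k', hk', hk1'⟩ := hVv.ratio_unit (L.V_of_eq hD2 hVv)
  have hDk : D (k * (y - w)) = D (y - w) := by rw [← hk1, hD]
  have hDk' : D (k' * (y - w)) = D (y - w) := S.mult_all hk' hVv hVyw (by rw [← hk1', hD2])
  have key : (p : (ZMod (p ^ n))) ^ l ∣ (k' - 1) * (p * w) - (k' - k) * (y - w) := by
    convert hvv using 1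
    linear_combination -hk1 - hk1'
  have h3 : (p : (ZMod (p ^ n))) ^ (nu p) ∣ k' - k := by
    refine hVyw.cancel (by omega) ?_
    have := dvd_sub (nu_mul (by omega) hpw hk') ((pow_dvd_pow _ (by omega)).trans key)
    convert this using 1; ring
  have h4 := S.KA L hl hVyw hk' hk hDk' hDk h3
  have h5 := mul_dvd_l (by omega) h4 hVyw.1
  have hVpw : V (a + 1) ((p : (ZMod (p ^ n))) * w) := by
    obtain ⟨s, hs, rfl⟩ := hw.eq_unit
    have := (V_pow (p := p) (n := n) (v := a + 1) (by omega)).mul hs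
    convert this using 1; ring
  have h6 : (p : (ZMod (p ^ n))) ^ (l - a - 1) ∣ k' - 1 := by
    refine hVpw.cancel (by omega) ?_
    have e : a + 1 + (l - a - 1) = l := by omega
    rw [e]
    have := dvd_add key h5
    convert this using 1; ring
  have h7 := S.KA0 L hl hVyw hk' hDk' h6
  have h8 := mul_dvd_l (by omega) (dvd_sub h7 h4) hVyw.1
  convert h8 using 1
  linear_combination hk1

end Disc
end Circ

namespace Circ

section Poly
open Polynomial
variable {p : ℕ} [hp : Fact p.Prime]

/-- coefficientwise product -/
noncomputable def had (f g : (ZMod p)[X]) : (ZMod p)[X] :=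
  ∑ i ∈ Finset.range (p - 1), C (f.coeff i * g.coeff i) * X ^ i

lemma had_coeff (f g : (ZMod p)[X]) (i : ℕ) :
    (had f g).coeff i = if i < p - 1 then f.coeff i * g.coeff i else 0 := by
  unfold had
  simp only [Polynomial.finset_sum_coeff, Polynomial.coeff_C_mul, Polynomial.coeff_X_pow, mul_ite,
    mul_one, mul_zero]
  rw [Finset.sum_ite_eq]
  simp

theorem X_mem (A : Subalgebra (ZMod p) (ZMod p)[X]) (d : ℕ) (hd : 1 ≤ d) (hdp : 2 * d ≤ p - 1)
    (h1 : (X ^ d : (ZMod p)[X]) ∈ A) (h2 : ((1 - X) ^ d : (ZMod p)[X]) ∈ A)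
    (h3 : ∀ f g, f ∈ A → g ∈ A → f.natDegree < p - 1 → g.natDegree < p - 1 → had f g ∈ A) :
    (X : (ZMod p)[X]) ∈ A := by
  rcases Nat.eq_or_lt_of_le hd with hd1 | hd2
  · rw [← hd1, pow_one] at h1; exact h1
  set E : (ZMod p)[X] := (1 - X) ^ d with hE
  have hEc : ∀ i, E.coeff i = (-1) ^ i * (d.choose i : ZMod p) := by
    intro i
    have e : E = (C (-1)  * X + 1) ^ d := by rw [hE]; congr 1; simp; ring
    rw [e]
    have : (C (-1 : ZMod p) * X + 1) ^ d = ((X + 1) ^ d : (ZMod p)[X]).comp (C (-1) * X) := by simp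
    rw [this, comp_C_mul_X_coeff, coeff_X_add_one_pow, mul_comm]
  have hE0 : ∀ i ≤ d, E.coeff i ≠ 0 := by
    intro i hi
    rw [hEc]
    refine mul_ne_zero (pow_ne_zero _ (by simp)) ?_
    rw [Ne, ZMod.natCast_eq_zero_iff]
    intro h
    have h4 : p ∣ d.factorial := by
      rw [← Nat.choose_mul_factorial_mul_factorial hi]
      exact (h.mul_right _).mul_right _
    rw [hp.out.dvd_factorial] at h4
    have := hp.out.two_le
    omega
  have hEd : ∀ i, d < i → E.coeff i = 0 := by
    intro i hi
    rw [hEc, Nat.choose_eq_zero_of_lt hi]; simp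
  have hEn : E.natDegree ≤ d := natDegree_le_iff_coeff_eq_zero.2 hEd
  set h : (ZMod p)[X] := E - 1 - C (E.coeff d) * X ^ d with hh
  have hhA : h ∈ A := by
    refine sub_mem (sub_mem h2 (one_mem _)) ?_
    rw [← smul_eq_C_mul]
    exact A.smul_mem h1 _
  have hhd : h.natDegree ≤ d - 1 := by
    refine natDegree_le_iff_coeff_eq_zero.2 fun i hi => ?_
    rw [hh]
    simp only [coeff_sub, coeff_one, coeff_C_mul, coeff_X_pow]
    rcases Nat.lt_or_ge d i with h5 | h5
    · rw [hEd i h5, if_neg (by omega), if_neg (by omega)]; simp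
    · obtain rfl : i = d := by omega
      rw [if_neg (by omega)]; simp
  have hX : (X : (ZMod p)[X]) ^ 1 ∣ h := by
    rw [X_pow_dvd_iff]
    intro i hi
    obtain rfl : i = 0 := by omega
    rw [hh]
    simp only [coeff_sub, coeff_one, coeff_C_mul, coeff_X_pow]
    have hd0 : ¬ 0 = d := by omega
    rw [if_neg hd0, hEc]; simp
  obtain ⟨h', hh'⟩ := hX
  have hh1 : h'.coeff 0 ≠ 0 := by
    have e : h'.coeff 0 = h.coeff 1 := by rw [hh', pow_one]; exact (coeff_X_mul h' 0).symm
    rw [e, hh]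
    simp only [coeff_sub, coeff_one, coeff_C_mul, coeff_X_pow]
    rw [if_neg (by omega), if_neg (by omega)]
    simpa using hE0 1 (by omega)
  have step : ∀ i ≤ d, ∃ g ∈ A, g.natDegree ≤ d ∧ X ^ i ∣ g ∧ g.coeff i ≠ 0 := by
    intro i
    induction i with
    | zero => exact fun _ => ⟨E, h2, hEn, by simp, hE0 0 (by omega)⟩
    | succ i ih =>
      intro hi
      obtain ⟨g, hgA, hgd, ⟨g', hg'⟩, hgi⟩ := ih (by omega)
      have hgh : g * h = X ^ (i + 1) * (g' * h') := by rw [hg', hh']; ring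
      have hc : (g * h).coeff (i + 1) ≠ 0 := by
        rw [hgh]
        have := coeff_X_pow_mul (g' * h') (i + 1) 0
        rw [zero_add] at this
        rw [this, mul_coeff_zero]
        refine mul_ne_zero ?_ hh1
        have := coeff_X_pow_mul g' i 0
        rw [zero_add, ← hg'] at this
        rwa [← this]
      refine ⟨had (g * h) E, h3 _ _ (mul_mem hgA hhA) h2 ?_ (by omega), ?_, ?_, ?_⟩
      · have := natDegree_mul_le (p := g) (q := h)
        omega
      · refine natDegree_le_iff_coeff_eq_zero.2 fun j hj => ?_
        rw [had_coeff, hEd j hj]; simp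
      · rw [X_pow_dvd_iff]
        intro j hj
        have : (g * h).coeff j = 0 := X_pow_dvd_iff.1 ⟨_, hgh⟩ j hj
        rw [had_coeff, this]; simp
      · rw [had_coeff, if_pos (by omega)]
        exact mul_ne_zero hc (hE0 _ hi)
  have fin : ∀ k i, i + k = d → (X ^ i : (ZMod p)[X]) ∈ A := by
    intro k
    induction k using Nat.strong_induction_on with
    | _ k ih =>
      intro i hik
      obtain ⟨g, hgA, hgd, hgX, hgi⟩ := step i (by omega)
      have e : g = C (g.coeff i) * X ^ i + ∑ j ∈ Finset.Ioc i d, C (g.coeff j) * X ^ j := by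
        ext m
        simp only [coeff_add, coeff_C_mul, coeff_X_pow, finset_sum_coeff, mul_ite, mul_one, mul_zero]
        rw [Finset.sum_ite_eq]
        rcases lt_trichotomy m i with hm | hm | hm
        · rw [X_pow_dvd_iff.1 hgX m hm, if_neg (by omega), if_neg (by simp; omega)]; simp
        · subst hm; simp
        · rw [if_neg (by omega)]
          by_cases hmd : m ≤ d
          · rw [if_pos (by simp; omega)]; simp
          · rw [if_neg (by simp; omega), natDegree_le_iff_coeff_eq_zero.1 hgd m (by omega)]; simp
      have h5 : C (g.coeff i) * X ^ i ∈ A := by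
        have : C (g.coeff i) * X ^ i = g - ∑ j ∈ Finset.Ioc i d, C (g.coeff j) * X ^ j := by
          linear_combination -e
        rw [this]
        refine sub_mem hgA (sum_mem fun j hj => ?_)
        rw [Finset.mem_Ioc] at hj
        rw [← smul_eq_C_mul]
        exact A.smul_mem (ih (d - j) (by omega) j (by omega)) _
      have := A.smul_mem h5 (g.coeff i)⁻¹
      rw [smul_eq_C_mul, ← mul_assoc, ← C_mul, inv_mul_cancel₀ hgi] at this
      simpa using this
  simpa using fin (d - 1) 1 (by omega)

lemma sum_eq_units (φ : ZMod p → ZMod p) (h0 : φ 0 = 0) : ∑ z, φ z = ∑ u : (ZMod p)ˣ, φ u := by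
  classical
  have h1 : ∑ z, φ z = ∑ z ∈ Finset.univ.filter (fun z : ZMod p => z ≠ 0), φ z := by
    rw [Finset.sum_filter]
    refine Finset.sum_congr rfl fun z _ => ?_
    split_ifs with h
    · rfl
    · push Not at h; rw [h, h0]
  rw [h1]
  symm
  refine Finset.sum_bij (fun u _ => (u : ZMod p)) ?_ ?_ ?_ ?_
  · intro u _; simp
  · intro u _ v _ h; exact Units.ext h
  · intro z hz
    have : z ≠ 0 := by simpa using hz
    exact ⟨Units.mk0 z this, Finset.mem_univ _, rfl⟩
  · intro u _; rfl

lemma conv_eval (f g : (ZMod p)[X]) (hf : f.natDegree < p - 1) (hg : g.natDegree < p - 1) (r : ZMod p) :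
    ∑ t : (ZMod p)ˣ, f.eval (t : ZMod p) * g.eval (r * (↑t⁻¹ : ZMod p)) = - (had f g).eval r := by
  classical
  have h1 : ∀ t : (ZMod p)ˣ, f.eval (t : ZMod p) * g.eval (r * (↑t⁻¹ : ZMod p)) =
      ∑ i ∈ Finset.range (p - 1), ∑ j ∈ Finset.range (p - 1), f.coeff i * g.coeff j * r ^ j *
        ((t ^ (i + (p - 1 - j)) : (ZMod p)ˣ) : ZMod p) := by
    intro t
    rw [eval_eq_sum_range' hf, eval_eq_sum_range' hg, Finset.sum_mul_sum]
    refine Finset.sum_congr rfl fun i _ => Finset.sum_congr rfl fun j hj => ?_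
    rw [Finset.mem_range] at hj
    have e : ((t ^ (i + (p - 1 - j)) : (ZMod p)ˣ)) = t ^ i * (t⁻¹) ^ j := by
      rw [pow_add]
      congr 1
      rw [inv_pow, eq_inv_iff_mul_eq_one, ← pow_add, Nat.sub_add_cancel hj.le]
      exact ZMod.units_pow_card_sub_one_eq_one p t
    rw [e]
    push_cast
    ring
  rw [Finset.sum_congr rfl fun t _ => h1 t, Finset.sum_comm]
  unfold had
  rw [eval_finset_sum, ← Finset.sum_neg_distrib]
  refine Finset.sum_congr rfl fun i hi => ?_
  rw [Finset.sum_comm]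
  have h2 : ∀ j ∈ Finset.range (p - 1), ∑ t : (ZMod p)ˣ, f.coeff i * g.coeff j * r ^ j *
        ((t ^ (i + (p - 1 - j)) : (ZMod p)ˣ) : ZMod p) =
        if j = i then - (f.coeff i * g.coeff i * r ^ i) else 0 := by
    intro j hj
    rw [Finset.mem_range] at hi hj
    rw [← Finset.mul_sum]
    have := FiniteField.sum_pow_units (ZMod p) (i + (p - 1 - j))
    rw [ZMod.card] at this
    push_cast
    rw [this]
    by_cases hij : j = i
    · subst hij
      have e : j + (p - 1 - j) = p - 1 := by omega
      rw [e]; simp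
    · rw [if_neg hij, if_neg, mul_zero]
      rintro ⟨c, hc⟩
      rcases Nat.lt_or_ge c 1 with h | h
      · obtain rfl : c = 0 := by omega
        omega
      · rcases Nat.lt_or_ge c 2 with h | h
        · obtain rfl : c = 1 := by omega
          omega
        · have := Nat.mul_le_mul_left (p - 1) h
          omega
  rw [Finset.sum_congr rfl h2, Finset.sum_ite_eq', if_pos hi]
  simp

end Poly
end Circ

namespace Circ

section Ex
variable {p n : ℕ} [hp : Fact p.Prime] {κ : Type*} {Ω' : Type*} [Finite Ω']
variable {D : (ZMod (p ^ n)) → κ} {a u l : ℕ}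

/-- extension data -/
structure Ext (D : (ZMod (p ^ n)) → κ) (c' : Ω' → Ω' → κ) (α : (ZMod (p ^ n))) (α' : Ω') {κY : Type*}
    (cY : (ZMod (p ^ n)) → (ZMod (p ^ n)) → κY) (cY' : Ω' → Ω' → κY) : Prop where
  self : Match cY cY
  cross : Match cY cY'
  ref : ∀ a b a1 b1, cY a b = cY a1 b1 → D (b - a) = D (b1 - a1)
  ref' : ∀ a b a' b', cY a b = cY' a' b' → c' a' b' = D (b - a)
  inv : ∀ a b a1 b1, cY a b = cY a1 b1 → cY b a = cY b1 a1
  inv' : ∀ a b a1 b1, cY a b = cY' a1 b1 → cY b a = cY' b1 a1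
  base : cY α α = cY' α' α'
  pt : ∀ a b, cY a b = cY α α → a = α ∧ b = α
  pt' : ∀ a b, cY' a b = cY α α → a = α' ∧ b = α'

variable {c' : Ω' → Ω' → κ} {α : (ZMod (p ^ n))} {α' : Ω'} {κY : Type*} {cY : (ZMod (p ^ n)) → (ZMod (p ^ n)) → κY} {cY' : Ω' → Ω' → κY}

instance : Finite (ZMod (p ^ n)) := by
  have : NeZero (p ^ n) := ⟨pow_ne_zero _ hp.out.ne_zero⟩
  infer_instance

lemma Ext.tri (E : Ext D c' α α' cY cY') {x y x2 y2 : (ZMod (p ^ n))} (h : cY x y = cY x2 y2) (z : (ZMod (p ^ n))) :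
    ∃ z2, cY x z = cY x2 z2 ∧ cY z y = cY z2 y2 := by
  obtain ⟨e, he⟩ := E.self.equiv h
  exact ⟨e z, (he z).1.symm, (he z).2.symm⟩

lemma Ext.tri' (E : Ext D c' α α' cY cY') {x y : (ZMod (p ^ n))} {x2 y2 : Ω'} (h : cY x y = cY' x2 y2) (z : (ZMod (p ^ n))) :
    ∃ z2, cY x z = cY' x2 z2 ∧ cY z y = cY' z2 y2 := by
  obtain ⟨e, he⟩ := E.cross.equiv h
  exact ⟨e z, (he z).1.symm, (he z).2.symm⟩

lemma Ext.tri'' (E : Ext D c' α α' cY cY') {x y : (ZMod (p ^ n))} {x2 y2 : Ω'} (h : cY x y = cY' x2 y2) (z2 : Ω') :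
    ∃ z, cY x z = cY' x2 z2 ∧ cY z y = cY' z2 y2 := by
  obtain ⟨e, he⟩ := E.cross.equiv h
  refine ⟨e.symm z2, ?_⟩
  have := he (e.symm z2)
  rw [e.apply_symm_apply] at this
  exact ⟨this.1.symm, this.2.symm⟩

lemma Ext.base_eq (E : Ext D c' α α' cY cY') {x y x2 y2 : (ZMod (p ^ n))} (h : cY x y = cY x2 y2) :
    cY α x = cY α x2 ∧ cY α y = cY α y2 := by
  obtain ⟨z, h1, h2⟩ := E.tri h α
  obtain ⟨z2, h3, h4⟩ := E.tri h1 α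
  obtain ⟨-, rfl⟩ := E.pt _ _ h4.symm
  exact ⟨E.inv _ _ _ _ h1, h2⟩

lemma Ext.base_eq' (E : Ext D c' α α' cY cY') {x y : (ZMod (p ^ n))} {x2 y2 : Ω'} (h : cY x y = cY' x2 y2) :
    cY α x = cY' α' x2 ∧ cY α y = cY' α' y2 := by
  obtain ⟨z, h1, h2⟩ := E.tri' h α
  obtain ⟨z2, h3, h4⟩ := E.tri' h1 α
  obtain ⟨-, rfl⟩ := E.pt' _ _ h4.symm
  exact ⟨E.inv' _ _ _ _ h1, h2⟩

lemma Ext.D_eq (E : Ext D c' α α' cY cY') {x y x2 y2 : (ZMod (p ^ n))} (h : cY x y = cY x2 y2) :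
    D (x - α) = D (x2 - α) ∧ D (y - α) = D (y2 - α) ∧ D (y - x) = D (y2 - x2) :=
  ⟨E.ref _ _ _ _ (E.base_eq h).1, E.ref _ _ _ _ (E.base_eq h).2, E.ref _ _ _ _ h⟩

lemma Ext.disc_big (E : Ext D c' α α' cY cY') (S : SR D) (L : Level D a (a + 1) l) (hl : a + 2 ≤ l)
    {w y y2 : (ZMod (p ^ n))} (hw : V a (w - α)) (hy : (p : (ZMod (p ^ n))) ^ a ∣ y - α) (h : cY w y = cY w y2) :
    (p : (ZMod (p ^ n))) ^ l ∣ y2 - y := by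
  have := S.rigid L hl hw (fun s t => cY w (α + s) = cY w (α + t)) ?_ ?_ (y := y - α) (y' := y2 - α)
    (by simpa using h) hy
  · simpa using this
  · intro s t hst hs
    obtain ⟨-, h2, h3⟩ := E.D_eq hst
    simp only [add_sub_cancel_left] at h2
    refine ⟨L.xa _ _ h2 hs, Ap.of_eq h2, Ap.of_eq ?_⟩
    convert h3 using 2 <;> ring
  · intro s t v hst hs hv
    obtain ⟨v2, h1, h2⟩ := E.tri hst (α + v)
    refine ⟨v2 - α, by simpa using h1, Ap.of_eq ?_⟩
    have := E.ref _ _ _ _ (E.inv _ _ _ _ h2)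
    convert this using 2 <;> ring

/-- reduction mod `p` -/
noncomputable def redp (h : n ≠ 0) : (ZMod (p ^ n)) →+* ZMod p := ZMod.castHom (dvd_pow_self p h) (ZMod p)

lemma redp_zero (h : n ≠ 0) (s : (ZMod (p ^ n))) : redp h s = 0 ↔ (p : (ZMod (p ^ n))) ∣ s := by
  obtain ⟨z, rfl⟩ := ZMod.intCast_surjective s
  have := dvd_val (p := p) (n := n) (a := 1) (by omega) z
  rw [pow_one, pow_one] at this
  rw [map_intCast, ZMod.intCast_zmod_eq_zero_iff_dvd, this]

lemma redp_eq (h : n ≠ 0) (s t : (ZMod (p ^ n))) : redp h s = redp h t ↔ (p : (ZMod (p ^ n))) ∣ s - t := by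
  rw [← redp_zero h, map_sub, sub_eq_zero]

lemma redp_surj (h : n ≠ 0) (i : ZMod p) : ∃ s : (ZMod (p ^ n)), redp h s = i := by
  obtain ⟨z, rfl⟩ := ZMod.intCast_surjective i
  exact ⟨z, by rw [map_intCast]⟩

lemma redp_unit (h : n ≠ 0) (s : (ZMod (p ^ n))) : IsUnit s ↔ redp h s ≠ 0 := by
  rw [isUnit_iff (by omega), Ne, redp_zero]

/-- exponent -/
lemma SR.exists_d (S : SR D) (L : Level D a (a + 1) (a + 1)) (hn : n ≠ 0) {z z' : (ZMod (p ^ n))} (hz : V a z) (hz' : V a z')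
    (hzz : D z ≠ D z') : ∃ d, 1 ≤ d ∧ 2 * d ≤ p - 1 ∧
      ∀ s t : (ZMod (p ^ n)), D ((p : (ZMod (p ^ n))) ^ a * s) = D ((p : (ZMod (p ^ n))) ^ a * t) → redp hn s ^ d = redp hn t ^ d := by
  classical
  have hun := L.un
  have hrad : ∀ s t : (ZMod (p ^ n)), IsUnit s → redp hn s = redp hn t → D ((p : (ZMod (p ^ n))) ^ a * s) = D ((p : (ZMod (p ^ n))) ^ a * t) := by
    intro s t hs hst
    rw [redp_eq] at hst
    have hV : V a ((p : (ZMod (p ^ n))) ^ a * s) := by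
      rw [mul_comm]; exact (V_pow (by omega)).mul hs
    have := L.rad ((p : (ZMod (p ^ n))) ^ a * s) ((p : (ZMod (p ^ n))) ^ a * (t - s)) hV.1 hV.2 (by
      rw [pow_succ]
      refine mul_dvd_mul dvd_rfl ?_
      rw [← dvd_neg]; simpa using hst)
    rw [← this]
    ring_nf
  let K : Subgroup (ZMod p)ˣ :=
    { carrier := {k | ∃ s : (ZMod (p ^ n)), redp hn s = k ∧ D ((p : (ZMod (p ^ n))) ^ a * s) = D ((p : (ZMod (p ^ n))) ^ a)}
      mul_mem' := by
        rintro k1 k2 ⟨s1, h1, h1'⟩ ⟨s2, h2, h2'⟩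
        refine ⟨s1 * s2, by simp [h1, h2], ?_⟩
        have hu : IsUnit s1 := by rw [redp_unit hn, h1]; simp
        have e : (p : (ZMod (p ^ n))) ^ a * (s1 * s2) = s1 * (p ^ a * s2) := by ring
        rw [e, (S.mult hu).2 h2', mul_comm, h1']
      one_mem' := ⟨1, by simp, by rw [mul_one]⟩
      inv_mem' := by
        rintro k ⟨s, h1, h1'⟩
        have hu : IsUnit s := by rw [redp_unit hn, h1]; simp
        obtain ⟨s, rfl⟩ := hu
        refine ⟨↑s⁻¹, ?_, ?_⟩
        · rw [eq_comm, Units.inv_eq_of_mul_eq_one_right]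
          rw [← h1, ← map_mul]; simp
        · have := (S.mult (s⁻¹).isUnit).2 h1'
          have e : ((s⁻¹ : ((ZMod (p ^ n)))ˣ) : (ZMod (p ^ n))) * ((p : (ZMod (p ^ n))) ^ a * s) = (p : (ZMod (p ^ n))) ^ a := by
            calc _ = (p : (ZMod (p ^ n))) ^ a * (((s⁻¹ : ((ZMod (p ^ n)))ˣ) : (ZMod (p ^ n))) * s) := by ring
              _ = _ := by simp
          rw [e] at this
          rw [mul_comm, this] }
  have hKt : K ≠ ⊤ := by
    intro hK
    obtain ⟨k, hk, rfl⟩ := hz.eq_unit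
    obtain ⟨k', hk', rfl⟩ := hz'.eq_unit
    have h1 := (redp_unit hn k).1 hk
    have h2 := (redp_unit hn k').1 hk'
    have h3 : Units.mk0 _ h2 / Units.mk0 _ h1 ∈ K := by rw [hK]; trivial
    obtain ⟨s, h4, h5⟩ := h3
    apply hzz
    have h6 : redp hn k' = redp hn (k * s) := by
      rw [map_mul, h4]
      simp
      field_simp
    rw [hrad _ _ hk' h6]
    have e : (p : (ZMod (p ^ n))) ^ a * (k * s) = k * (p ^ a * s) := by ring
    rw [e, mul_comm _ k, S.mult hk, h5]
  refine ⟨Nat.card K, Nat.card_pos, ?_, ?_⟩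
  · have h1 := K.card_mul_index
    rw [Nat.card_eq_fintype_card (α := (ZMod p)ˣ), ZMod.card_units] at h1
    have h2 : K.index ≠ 1 := fun h => hKt (Subgroup.index_eq_one.1 h)
    have h3 : K.index ≠ 0 := Subgroup.index_ne_zero_of_finite
    have : 2 ≤ K.index := by omega
    have := Nat.mul_le_mul_left (Nat.card K) this
    omega
  · intro s t hst
    have hX : ∀ s : (ZMod (p ^ n)), redp hn s = 0 ↔ (p : (ZMod (p ^ n))) ^ (a + 1) ∣ (p : (ZMod (p ^ n))) ^ a * s := by
      intro s
      rw [redp_zero, pow_succ]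
      constructor
      · exact fun h => mul_dvd_mul dvd_rfl h
      · intro h
        have := (V_pow (p := p) (n := n) (v := a) (by omega)).cancel (j := 1) (k := s) (by omega)
          (by rw [mul_comm s, pow_succ]; exact h)
        simpa using this
    by_cases hs : redp hn s = 0
    · have ht : redp hn t = 0 := by
        rw [hX] at hs ⊢
        exact L.xu _ _ hst hs
      rw [hs, ht]
    · have ht : redp hn t ≠ 0 := by
        intro h
        rw [hX] at hs h
        exact hs (L.xu _ _ hst.symm h)
      obtain ⟨t, rfl⟩ := (redp_unit hn t).2 ht
      have hm : D ((p : (ZMod (p ^ n))) ^ a * (s * ↑t⁻¹)) = D ((p : (ZMod (p ^ n))) ^ a) := by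
        have := (S.mult (t⁻¹).isUnit).2 hst
        have e : ((t⁻¹ : ((ZMod (p ^ n)))ˣ) : (ZMod (p ^ n))) * ((p : (ZMod (p ^ n))) ^ a * t) = (p : (ZMod (p ^ n))) ^ a := by
          calc _ = (p : (ZMod (p ^ n))) ^ a * (((t⁻¹ : ((ZMod (p ^ n)))ˣ) : (ZMod (p ^ n))) * t) := by ring
            _ = _ := by simp
        rw [e] at this
        rw [← this]; ring_nf
      have hms : redp hn (s * ((t⁻¹ : ((ZMod (p ^ n)))ˣ) : (ZMod (p ^ n)))) ≠ 0 := by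
        rw [← redp_unit]
        exact ((redp_unit hn s).2 hs).mul (t⁻¹).isUnit
      have hK : Units.mk0 _ hms ∈ K := ⟨s * ↑t⁻¹, rfl, hm⟩
      have h1 : (⟨_, hK⟩ : K) ^ Nat.card K = 1 := pow_card_eq_one'
      have h2 := congrArg (fun x : K => ((x : (ZMod p)ˣ) : ZMod p)) h1
      simp only [SubmonoidClass.coe_pow, Units.val_pow_eq_pow_val, Units.val_mk0, OneMemClass.coe_one,
        Units.val_one] at h2
      have e : s = (s * ↑t⁻¹) * t := by rw [mul_assoc]; simp
      rw [e, map_mul, mul_pow, h2, one_mul]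

end Ex
end Circ

namespace Circ

section Ex
variable {p n : ℕ} [hp : Fact p.Prime] {κ : Type*} {Ω' : Type*} [Finite Ω']
variable {D : (ZMod (p ^ n)) → κ} {a u l : ℕ}
variable {c' : Ω' → Ω' → κ} {α : (ZMod (p ^ n))} {α' : Ω'} {κY : Type*} {cY : (ZMod (p ^ n)) → (ZMod (p ^ n)) → κY} {cY' : Ω' → Ω' → κY}

open Classical in
/-- the residue of a point -/
noncomputable def qq (hn : n ≠ 0) (a : ℕ) (α z : (ZMod (p ^ n))) : ZMod p :=
  if h : (p : (ZMod (p ^ n))) ^ a ∣ z - α then redp hn h.choose else 0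

lemma qq_eq (hn : n ≠ 0) (han : a + 1 ≤ n) (α s : (ZMod (p ^ n))) : qq hn a α (α + (p : (ZMod (p ^ n))) ^ a * s) = redp hn s := by
  have h : (p : (ZMod (p ^ n))) ^ a ∣ α + (p : (ZMod (p ^ n))) ^ a * s - α := by simp
  unfold qq
  rw [dif_pos h, redp_eq]
  have h1 := h.choose_spec
  have := (V_pow (p := p) (n := n) (v := a) (by omega)).cancel (j := 1) (k := h.choose - s) (by omega) (by
    have e : (h.choose - s) * (p : (ZMod (p ^ n))) ^ a = 0 := by linear_combination -h1
    rw [e]; exact dvd_zero _)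
  simpa using this

lemma qq_count (hn : n ≠ 0) (han : a + 1 ≤ n) (α : (ZMod (p ^ n))) (P : Set (ZMod p)) :
    {z : (ZMod (p ^ n)) | (p : (ZMod (p ^ n))) ^ a ∣ z - α ∧ qq hn a α z ∈ P}.ncard =
      P.ncard * {z : (ZMod (p ^ n)) | (p : (ZMod (p ^ n))) ^ a ∣ z - α ∧ qq hn a α z = 0}.ncard := by
  classical
  have hne : NeZero (p ^ n) := ⟨pow_ne_zero _ hp.out.ne_zero⟩
  have hf : ∀ i : ZMod p, {z : (ZMod (p ^ n)) | (p : (ZMod (p ^ n))) ^ a ∣ z - α ∧ qq hn a α z = i}.ncard =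
      {z : (ZMod (p ^ n)) | (p : (ZMod (p ^ n))) ^ a ∣ z - α ∧ qq hn a α z = 0}.ncard := by
    intro i
    obtain ⟨t, rfl⟩ := redp_surj hn i
    have e : {z : (ZMod (p ^ n)) | (p : (ZMod (p ^ n))) ^ a ∣ z - α ∧ qq hn a α z = redp hn t} = (fun z => z + (p : (ZMod (p ^ n))) ^ a * t) ''
        {z : (ZMod (p ^ n)) | (p : (ZMod (p ^ n))) ^ a ∣ z - α ∧ qq hn a α z = 0} := by
      ext z
      simp only [mem_setOf_eq, mem_image]
      constructor
      · rintro ⟨⟨s, hs⟩, h2⟩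
        have ez : z = α + (p : (ZMod (p ^ n))) ^ a * s := by linear_combination hs
        rw [ez, qq_eq hn han] at h2
        refine ⟨α + (p : (ZMod (p ^ n))) ^ a * (s - t), ⟨by simp, ?_⟩, by rw [ez]; ring⟩
        rw [qq_eq hn han, map_sub, h2, sub_self]
      · rintro ⟨z, ⟨⟨s, hs⟩, h2⟩, rfl⟩
        have ez : z = α + (p : (ZMod (p ^ n))) ^ a * s := by linear_combination hs
        rw [ez, qq_eq hn han] at h2
        have e2 : z + (p : (ZMod (p ^ n))) ^ a * t = α + (p : (ZMod (p ^ n))) ^ a * (s + t) := by rw [ez]; ring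
        rw [e2, qq_eq hn han, map_add, h2, zero_add]
        exact ⟨by simp, rfl⟩
    rw [e, ncard_image_of_injective _ (add_left_injective _)]
  rw [ncard_eq_toFinset_card', ncard_eq_toFinset_card' P,
    Finset.card_eq_sum_card_fiberwise (f := qq hn a α) (t := P.toFinset)]
  · rw [Finset.sum_const_nat]
    intro i hi
    rw [← hf i, ncard_eq_toFinset_card']
    congr 1
    ext z
    simp only [Finset.mem_filter, mem_toFinset, mem_setOf_eq]
    rw [mem_toFinset] at hi
    constructor
    · rintro ⟨⟨h1, -⟩, h2⟩; exact ⟨h1, h2⟩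
    · rintro ⟨h1, rfl⟩; exact ⟨⟨h1, hi⟩, rfl⟩
  · intro z hz
    simp only [coe_toFinset, mem_setOf_eq] at hz ⊢
    exact hz.2

/-- functions measurable with respect to the extension -/
def Meas (hn : n ≠ 0) (a : ℕ) (α : (ZMod (p ^ n))) (cY : (ZMod (p ^ n)) → (ZMod (p ^ n)) → κY) (F : ZMod p → ZMod p → ZMod p) : Prop :=
  ∀ s t s' t' : (ZMod (p ^ n)), cY (α + (p : (ZMod (p ^ n))) ^ a * s) (α + (p : (ZMod (p ^ n))) ^ a * t) =
    cY (α + (p : (ZMod (p ^ n))) ^ a * s') (α + (p : (ZMod (p ^ n))) ^ a * t') →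
    F (redp hn s) (redp hn t) = F (redp hn s') (redp hn t')

lemma Ext.meas_equiv (E : Ext D c' α α' cY cY') (hn : n ≠ 0) (han : a + 1 ≤ n) (X : Xg D a)
    {F G : ZMod p → ZMod p → ZMod p} (hF : Meas hn a α cY F) (hG : Meas hn a α cY G)
    {s t s' t' : (ZMod (p ^ n))} (h : cY (α + (p : (ZMod (p ^ n))) ^ a * s) (α + (p : (ZMod (p ^ n))) ^ a * t) =
    cY (α + (p : (ZMod (p ^ n))) ^ a * s') (α + (p : (ZMod (p ^ n))) ^ a * t')) :
    ∃ e : ZMod p ≃ ZMod p, ∀ i, F (redp hn s') (e i) = F (redp hn s) i ∧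
      G (e i) (redp hn t') = G i (redp hn t) := by
  obtain ⟨e, he⟩ := E.self.equiv h
  have hH : ∀ z, (p : (ZMod (p ^ n))) ^ a ∣ z - α ↔ (p : (ZMod (p ^ n))) ^ a ∣ e z - α := fun z =>
    X.iff (E.D_eq (he z).1.symm).2.1
  have hq : ∀ z, (p : (ZMod (p ^ n))) ^ a ∣ z - α → F (redp hn s') (qq hn a α (e z)) = F (redp hn s) (qq hn a α z) ∧
      G (qq hn a α (e z)) (redp hn t') = G (qq hn a α z) (redp hn t) := by
    intro z hz
    have hz' := (hH z).1 hz
    have h1 := he z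
    obtain ⟨i, hi⟩ := hz
    obtain ⟨j, hj⟩ := hz'
    rw [sub_eq_iff_eq_add'] at hi hj
    rw [hj, hi] at h1
    rw [hj, hi, qq_eq hn han, qq_eq hn han]
    exact ⟨hF _ _ _ _ h1.1, hG _ _ _ _ h1.2⟩
  obtain ⟨e2, he2⟩ := exists_equiv_of_fibers (fun i => (F (redp hn s) i, G i (redp hn t)))
    (fun i => (F (redp hn s') i, G i (redp hn t'))) (by
      rintro r
      have h1 := qq_count hn han α {z | (F (redp hn s) z, G z (redp hn t)) = r}
      have h2 := qq_count hn han α {z | (F (redp hn s') z, G z (redp hn t')) = r}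
      have h3 : {z : (ZMod (p ^ n)) | (p : (ZMod (p ^ n))) ^ a ∣ z - α ∧ qq hn a α z ∈ {z | (F (redp hn s') z, G z (redp hn t')) = r}} =
          e '' {z : (ZMod (p ^ n)) | (p : (ZMod (p ^ n))) ^ a ∣ z - α ∧ qq hn a α z ∈ {z | (F (redp hn s) z, G z (redp hn t)) = r}} := by
        ext z
        simp only [mem_setOf_eq, mem_image]
        constructor
        · rintro ⟨g1, g2⟩
          have g3 : (p : (ZMod (p ^ n))) ^ a ∣ e.symm z - α := by rw [hH, e.apply_symm_apply]; exact g1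
          refine ⟨e.symm z, ⟨g3, ?_⟩, e.apply_symm_apply z⟩
          rw [← (hq _ g3).1, ← (hq _ g3).2, e.apply_symm_apply, g2]
        · rintro ⟨z, ⟨g1, g2⟩, rfl⟩
          exact ⟨(hH z).1 g1, by rw [(hq _ g1).1, (hq _ g1).2, g2]⟩
      have h4 := ncard_image_of_injective {z : (ZMod (p ^ n)) | (p : (ZMod (p ^ n))) ^ a ∣ z - α ∧ qq hn a α z ∈ {z | (F (redp hn s) z, G z (redp hn t)) = r}} e.injective
      rw [← h3, h1, h2] at h4
      refine (Nat.eq_of_mul_eq_mul_right ?_ h4).symm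
      rw [ncard_pos]
      refine ⟨α, by simp, ?_⟩
      have := qq_eq hn han α (0 : (ZMod (p ^ n)))
      rw [mul_zero, add_zero, map_zero] at this
      exact this)
  refine ⟨e2, fun i => ?_⟩
  simpa [Prod.ext_iff] using he2 i

lemma Ext.meas_conv (E : Ext D c' α α' cY cY') (hn : n ≠ 0) (han : a + 1 ≤ n) (X : Xg D a)
    {F G : ZMod p → ZMod p → ZMod p} (hF : Meas hn a α cY F) (hG : Meas hn a α cY G) :
    Meas hn a α cY (fun x y => ∑ z, F x z * G z y) := by
  intro s t s' t' h
  obtain ⟨e, he⟩ := E.meas_equiv hn han X hF hG h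
  symm
  simp only
  rw [← e.sum_comp]
  exact Finset.sum_congr rfl fun i _ => by rw [(he i).1, (he i).2]

open Polynomial in
lemma Ext.disc_small (E : Ext D c' α α' cY cY') (S : SR D) (L : Level D a (a + 1) (a + 1))
    {z z' : (ZMod (p ^ n))} (hz : V a z) (hz' : V a z') (hzz : D z ≠ D z')
    {w y y2 : (ZMod (p ^ n))} (hw : V a (w - α)) (hy : (p : (ZMod (p ^ n))) ^ a ∣ y - α) (h : cY w y = cY w y2) :
    (p : (ZMod (p ^ n))) ^ (a + 1) ∣ y2 - y := by
  have han := L.un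
  have hn : n ≠ 0 := by omega
  obtain ⟨d, hd1, hd2, hd⟩ := S.exists_d L hn hz hz' hzz
  have hm : ∀ s t s' t' : (ZMod (p ^ n)), cY (α + (p : (ZMod (p ^ n))) ^ a * s) (α + (p : (ZMod (p ^ n))) ^ a * t) =
    cY (α + (p : (ZMod (p ^ n))) ^ a * s') (α + (p : (ZMod (p ^ n))) ^ a * t') → redp hn s ^ d = redp hn s' ^ d ∧
      redp hn t ^ d = redp hn t' ^ d ∧ (redp hn t - redp hn s) ^ d = (redp hn t' - redp hn s') ^ d ∧
      (redp hn s = 0 ↔ redp hn s' = 0) ∧ (redp hn t = 0 ↔ redp hn t' = 0) := by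
    intro s t s' t' h
    obtain ⟨h1, h2, h3⟩ := E.D_eq h
    simp only [add_sub_cancel_left] at h1 h2
    have h1 := hd _ _ h1
    have h2 := hd _ _ h2
    have h3' : D ((p : (ZMod (p ^ n))) ^ a * (t - s)) = D ((p : (ZMod (p ^ n))) ^ a * (t' - s')) := by
      convert h3 using 2 <;> ring
    have h3 := hd _ _ h3'
    rw [map_sub, map_sub] at h3
    refine ⟨h1, h2, h3, ?_, ?_⟩
    · rw [← pow_eq_zero_iff (n := d) (by omega), h1, pow_eq_zero_iff (by omega)]
    · rw [← pow_eq_zero_iff (n := d) (by omega), h2, pow_eq_zero_iff (by omega)]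
  let A : Subalgebra (ZMod p) (ZMod p)[X] :=
    { carrier := {f | Meas hn a α cY (fun x y => if x = 0 ∨ y = 0 then 0 else f.eval (y / x))}
      mul_mem' := by
        intro f g hf hg s t s' t' h
        have h1 := hf _ _ _ _ h
        have h2 := hg _ _ _ _ h
        obtain ⟨-, -, -, g1, g2⟩ := hm _ _ _ _ h
        simp only [g1, g2] at h1 h2 ⊢
        split_ifs with h3
        · rfl
        · rw [if_neg h3, if_neg h3] at h1 h2
          rw [eval_mul, eval_mul, h1, h2]
      add_mem' := by
        intro f g hf hg s t s' t' h
        have h1 := hf _ _ _ _ h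
        have h2 := hg _ _ _ _ h
        obtain ⟨-, -, -, g1, g2⟩ := hm _ _ _ _ h
        simp only [g1, g2] at h1 h2 ⊢
        split_ifs with h3
        · rfl
        · rw [if_neg h3, if_neg h3] at h1 h2
          rw [eval_add, eval_add, h1, h2]
      algebraMap_mem' := by
        intro r s t s' t' h
        obtain ⟨-, -, -, g1, g2⟩ := hm _ _ _ _ h
        simp only [g1, g2]
        simp [Polynomial.algebraMap_apply] }
  have hX : (X : (ZMod p)[X]) ∈ A := by
    refine X_mem A d hd1 hd2 ?_ ?_ ?_
    · intro s t s' t' h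
      obtain ⟨h1, h2, -, g1, g2⟩ := hm _ _ _ _ h
      simp only [g1, g2, eval_pow, eval_X, div_pow, h1, h2]
    · intro s t s' t' h
      obtain ⟨h1, h2, h3, g1, g2⟩ := hm _ _ _ _ h
      simp only [g1, g2]
      split_ifs with h4
      · rfl
      · have hs' : redp hn s' ≠ 0 := fun h => h4 (Or.inl h)
        have hs : redp hn s ≠ 0 := fun h => hs' (g1.1 h)
        have e : ∀ x y : ZMod p, x ≠ 0 → eval (y / x) ((1 - X) ^ d : (ZMod p)[X]) = (-1) ^ d * (y - x) ^ d / x ^ d := by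
          intro x y hx
          rw [← mul_pow, ← div_pow]
          simp only [eval_pow, eval_sub, eval_one, eval_X]
          congr 1
          field_simp
          ring
        rw [e _ _ hs, e _ _ hs', h1, h3]
    · intro f g hf hg hfd hgd
      have hf' : Meas hn a α cY (fun x y => if x = 0 ∨ y = 0 then 0 else f.eval (y / x)) := hf
      have hg' : Meas hn a α cY (fun x y => if x = 0 ∨ y = 0 then 0 else g.eval (y / x)) := hg
      have := E.meas_conv hn han L.xa hf' hg'
      have e : (fun x y => ∑ z, (if x = 0 ∨ z = 0 then 0 else f.eval (z / x)) *
          (if z = 0 ∨ y = 0 then 0 else g.eval (y / z))) = fun x y : ZMod p =>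
          if x = 0 ∨ y = 0 then 0 else - (had f g).eval (y / x) := by
        funext x y
        split_ifs with h
        · refine Finset.sum_eq_zero fun z _ => ?_
          rcases h with rfl | rfl <;> simp
        · push Not at h
          rw [sum_eq_units _ (by simp), ← conv_eval f g hfd hgd]
          rw [← Equiv.sum_comp (Equiv.mulLeft (Units.mk0 x h.1))]
          refine Finset.sum_congr rfl fun t _ => ?_
          have hx := h.1
          have ht : (t : ZMod p) ≠ 0 := t.ne_zero
          simp only [Equiv.coe_mulLeft, Units.val_mul, Units.val_mk0, h.1, h.2, ht, mul_eq_zero, or_self,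
            if_false, Units.val_inv_eq_inv_val]
          congr 2 <;> field_simp
      rw [e] at this
      intro s t s' t' h
      have h1 := this _ _ _ _ h
      obtain ⟨-, -, -, g1, g2⟩ := hm _ _ _ _ h
      simp only [g1, g2] at h1 ⊢
      split_ifs with h3
      · rfl
      · rw [if_neg h3, if_neg h3] at h1
        exact neg_injective h1
  obtain ⟨s, hs⟩ := hw.1
  have hs' := hs
  rw [sub_eq_iff_eq_add'] at hs'
  have hy2 : (p : (ZMod (p ^ n))) ^ a ∣ y2 - α := L.xa _ _ (E.D_eq h).2.1 hy
  obtain ⟨t, ht⟩ := hy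
  obtain ⟨t2, ht2⟩ := hy2
  rw [sub_eq_iff_eq_add'] at ht ht2
  rw [hs', ht, ht2] at h
  have h1 := hX _ _ _ _ h
  obtain ⟨-, -, -, g1, g2⟩ := hm _ _ _ _ h
  have hs0 : redp hn s ≠ 0 := by
    intro h0
    rw [redp_zero] at h0
    apply hw.2
    rw [hs, pow_succ]
    exact mul_dvd_mul dvd_rfl h0
  have h2 : redp hn t2 = redp hn t := by
    by_cases h0 : redp hn t = 0
    · rw [h0, g2.1 h0]
    · have h0' : redp hn t2 ≠ 0 := fun h => h0 (g2.2 h)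
      simp only [hs0, h0, h0', or_self, if_false, eval_X] at h1
      field_simp at h1
      exact h1.symm
  rw [redp_eq] at h2
  have e : y2 - y = (p : (ZMod (p ^ n))) ^ a * (t2 - t) := by rw [ht, ht2]; ring
  rw [e, pow_succ]
  exact mul_dvd_mul dvd_rfl h2

/-- disc-type levels -/
def DT (D : (ZMod (p ^ n)) → κ) (a l : ℕ) : Prop := a + 2 ≤ l ∨ ∃ z z' : (ZMod (p ^ n)), V a z ∧ V a z' ∧ D z ≠ D z'

lemma Ext.disc (E : Ext D c' α α' cY cY') (S : SR D) (L : Level D a (a + 1) l) (h0 : DT D a l)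
    {w y y2 : (ZMod (p ^ n))} (hw : V a (w - α)) (hy : (p : (ZMod (p ^ n))) ^ a ∣ y - α) (h : cY w y = cY w y2) :
    (p : (ZMod (p ^ n))) ^ l ∣ y2 - y := by
  by_cases hl : a + 2 ≤ l
  · exact E.disc_big S L hl hw hy h
  · have := L.ul
    obtain rfl : l = a + 1 := by omega
    rcases h0 with h0 | ⟨z, z', hz, hz', hzz⟩
    · omega
    · exact E.disc_small S L hz hz' hzz hw hy h

end Ex
end Circ

namespace Circ

lemma exists_map_of_classes {A B M : Type*} [Finite A] [Finite B] [Nonempty M]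
    (s : Setoid A) (t : Setoid B) (hs : ∀ x, Nonempty ({y // s x y} ≃ M))
    (ht : ∀ x, Nonempty ({y // t x y} ≃ M)) (hAB : Nonempty (A ≃ B)) (x0 : A) (y0 : B) :
    ∃ g : A → B, g x0 = y0 ∧ ∀ x y, s x y ↔ t (g x) (g y) := by
  classical
  have key : ∀ {A : Type _} [Finite A] (s : Setoid A) (hs : ∀ x, Nonempty ({y // s x y} ≃ M)),
      Nonempty (A ≃ Quotient s × M) := by
    intro A _ s hs
    refine ⟨(Equiv.sigmaFiberEquiv (Quotient.mk s)).symm.trans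
      ((Equiv.sigmaCongrRight fun q => ?_).trans (Equiv.sigmaEquivProd _ _))⟩
    refine Equiv.trans ?_ (hs q.out).some
    refine Equiv.subtypeEquivRight fun y => ?_
    constructor
    · intro h
      have : s y q.out := Quotient.exact (h.trans q.out_eq.symm)
      exact s.symm this
    · intro h
      have := Quotient.sound (s := s) h
      rw [Quotient.out_eq] at this
      exact this.symm
  obtain ⟨e1⟩ := key s hs
  haveI : Finite M := Finite.of_injective (fun m : M => ((hs x0).some.symm m).1)
    (fun a b h => (hs x0).some.symm.injective (Subtype.ext h))
  have e2 : Nonempty (B ≃ Quotient t × M) := by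
    refine ⟨(Equiv.sigmaFiberEquiv (Quotient.mk t)).symm.trans
      ((Equiv.sigmaCongrRight fun q => ?_).trans (Equiv.sigmaEquivProd _ _))⟩
    refine Equiv.trans ?_ (ht q.out).some
    refine Equiv.subtypeEquivRight fun y => ?_
    constructor
    · intro h
      have : t y q.out := Quotient.exact (h.trans q.out_eq.symm)
      exact t.symm this
    · intro h
      have := Quotient.sound (s := t) h
      rw [Quotient.out_eq] at this
      exact this.symm
  obtain ⟨e2⟩ := e2
  have hc : Nat.card (Quotient s) = Nat.card (Quotient t) := by
    have h1 := Nat.card_congr (e1.symm.trans (hAB.some.trans e2))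
    rw [Nat.card_prod, Nat.card_prod] at h1
    exact Nat.eq_of_mul_eq_mul_right Nat.card_pos h1
  let q : Quotient s ≃ Quotient t := (Finite.equivFin _).trans ((finCongr hc).trans (Finite.equivFin _).symm)
  let q' : Quotient s ≃ Quotient t := q.trans (Equiv.swap (q (Quotient.mk s x0)) (Quotient.mk t y0))
  have hq' : q' (Quotient.mk s x0) = Quotient.mk t y0 := by
    simp [q']
  let g : A → B := fun x => if x = x0 then y0 else (q' (Quotient.mk s x)).out
  have hg : ∀ x, Quotient.mk t (g x) = q' (Quotient.mk s x) := by
    intro x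
    by_cases h : x = x0
    · simp only [g, h, if_true]; rw [hq']
    · simp only [g, h, if_false]; rw [Quotient.out_eq]
  refine ⟨g, by simp [g], fun x y => ?_⟩
  constructor
  · intro h
    refine Quotient.exact (s := t) ?_
    rw [hg, hg, Quotient.sound (s := s) h]
  · intro h
    have := Quotient.sound (s := t) h
    rw [hg, hg] at this
    exact Quotient.exact (q'.injective this)

section Im
variable {p n : ℕ} [hp : Fact p.Prime] {κ : Type*} {Ω' : Type*} [Finite Ω']
variable {D : (ZMod (p ^ n)) → κ} {a u l : ℕ} {c' : Ω' → Ω' → κ}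

structure Img (D : (ZMod (p ^ n)) → κ) (c' : Ω' → Ω' → κ) : Prop where
  mt : Match (fun a b => D (b - a)) c'
  sur : ∀ a b, ∃ z, c' a b = D z
  diag : ∀ a b, c' a b = D 0 ↔ a = b
  inv : ∀ a b z, c' a b = D z → c' b a = D (-z)

def Apx (D : (ZMod (p ^ n)) → κ) (c' : Ω' → Ω' → κ) (l : ℕ) (y z : Ω') (v : (ZMod (p ^ n))) : Prop :=
  ∃ w, (p : (ZMod (p ^ n))) ^ l ∣ w ∧ c' y z = D (v + w)

lemma Img.comp (I : Img D c') {x y z : Ω'} {r s : (ZMod (p ^ n))} (h1 : c' x y = D r) (h2 : c' y z = D s) :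
    ∃ r1 s1, D r1 = D r ∧ D s1 = D s ∧ c' x z = D (r1 + s1) := by
  obtain ⟨v, hv⟩ := I.sur x z
  obtain ⟨e, he⟩ := I.mt.equiv (a := 0) (b := v) (a' := x) (b' := z) (by simp [hv])
  obtain ⟨g1, g2⟩ := he (e.symm y)
  rw [e.apply_symm_apply] at g1 g2
  refine ⟨e.symm y, v - e.symm y, ?_, ?_, ?_⟩
  · rw [← h1, g1]; simp
  · rw [← h2, g2]
  · rw [hv]; congr 1; ring

lemma Img.eqv (I : Img D c') (x : Ω') : ∃ e : (ZMod (p ^ n)) ≃ Ω', ∀ v, c' x (e v) = D v := by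
  obtain ⟨e, he⟩ := I.mt.equiv (a := 0) (b := 0) (a' := x) (b' := x) (by simp [(I.diag x x).2 rfl])
  exact ⟨e, fun v => by rw [(he v).1]; simp⟩

lemma Apx.right (S : SR D) (I : Img D c') (X : Xg D l) {y z z2 : Ω'} {v : (ZMod (p ^ n))} (h : Apx D c' l y z v)
    (h2 : Apx D c' l z z2 0) : Apx D c' l y z2 v := by
  obtain ⟨w, hw, h⟩ := h
  obtain ⟨m, hm, h2⟩ := h2
  rw [zero_add] at h2
  obtain ⟨r1, s1, g1, g2, g3⟩ := I.comp h h2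
  obtain ⟨t, k1, k2⟩ := S.ext g1 s1
  refine ⟨w + t, dvd_add hw (X _ _ k1.symm (X _ _ g2.symm hm)), ?_⟩
  rw [g3, ← k2]; congr 1; ring

lemma Apx.inv (I : Img D c') {y z : Ω'} {v : (ZMod (p ^ n))} (h : Apx D c' l y z v) : Apx D c' l z y (-v) := by
  obtain ⟨w, hw, h⟩ := h
  refine ⟨-w, dvd_neg.2 hw, ?_⟩
  rw [I.inv _ _ _ h]; congr 1; ring

lemma Apx.symm (I : Img D c') {y z : Ω'} (h : Apx D c' l y z 0) : Apx D c' l z y 0 := by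
  simpa using h.inv I

lemma Apx.left (S : SR D) (I : Img D c') (X : Xg D l) {y z y2 : Ω'} {v : (ZMod (p ^ n))} (h : Apx D c' l y z v)
    (h2 : Apx D c' l y2 y 0) : Apx D c' l y2 z v := by
  have := ((h.inv I).right S I X (h2.symm I)).inv I
  simpa using this

lemma Apx.refl (I : Img D c') (y : Ω') : Apx D c' l y y 0 :=
  ⟨0, dvd_zero _, by rw [add_zero]; exact (I.diag y y).2 rfl⟩

lemma Apx.ap (S : SR D) (X : Xg D l) {y z : Ω'} {v v' : (ZMod (p ^ n))} (h : Apx D c' l y z v)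
    (h2 : Ap D l v v') : Apx D c' l y z v' := by
  obtain ⟨w, hw, h⟩ := h
  have h3 : Ap D l (v + w) v' := (Ap.of_dvd (by simpa using hw)).trans S X h2
  obtain ⟨t, ht, h4⟩ := h3.symm S X
  exact ⟨t, ht, by rw [h, h4]⟩

lemma Apx.uniq (S : SR D) (X : Xg D l) {y z : Ω'} {v v' : (ZMod (p ^ n))} (h : Apx D c' l y z v)
    (h2 : Apx D c' l y z v') : Ap D l v v' := by
  obtain ⟨w, hw, h⟩ := h
  obtain ⟨w', hw', h2⟩ := h2
  have : Ap D l (v' + w') v' := Ap.of_dvd (by simpa using hw')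
  exact Ap.trans S X ⟨w, hw, by rw [← h, h2]⟩ this

lemma Apx.of_eq {y z : Ω'} {v : (ZMod (p ^ n))} (h : c' y z = D v) : Apx D c' l y z v :=
  ⟨0, dvd_zero _, by rw [add_zero, h]⟩

lemma Apx.zero_of_dvd {y z : Ω'} {v : (ZMod (p ^ n))} (h : Apx D c' l y z v) (hv : (p : (ZMod (p ^ n))) ^ l ∣ v) :
    Apx D c' l y z 0 := by
  obtain ⟨w, hw, h⟩ := h
  exact ⟨v + w, dvd_add hv hw, by rw [zero_add, h]⟩

lemma Apx.mono {l l' : ℕ} (h : l ≤ l') {y z : Ω'} {v : (ZMod (p ^ n))} (h1 : Apx D c' l' y z v) : Apx D c' l y z v := by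
  obtain ⟨w, hw, h1⟩ := h1
  exact ⟨w, (pow_dvd_pow _ h).trans hw, h1⟩

lemma Apx.dvd (X : Xg D l) {y z : Ω'} {v : (ZMod (p ^ n))} (h : Apx D c' l y z 0) (hv : c' y z = D v) :
    (p : (ZMod (p ^ n))) ^ l ∣ v := by
  obtain ⟨w, hw, h⟩ := h
  rw [zero_add, hv] at h
  exact X _ _ h.symm hw

lemma Level.apx_eq (L : Level D a u l) {y z : Ω'} {v : (ZMod (p ^ n))} (h : Apx D c' l y z v) (h1 : (p : (ZMod (p ^ n))) ^ a ∣ v)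
    (h2 : ¬ (p : (ZMod (p ^ n))) ^ u ∣ v) : c' y z = D v := by
  obtain ⟨w, hw, h⟩ := h
  rw [h, L.rad _ _ h1 h2 hw]

def Good (D : (ZMod (p ^ n)) → κ) (c' : Ω' → Ω' → κ) (a l : ℕ) (α : (ZMod (p ^ n))) (g : (ZMod (p ^ n)) → Ω') : Prop :=
  ∀ y z, (p : (ZMod (p ^ n))) ^ a ∣ y - α → (p : (ZMod (p ^ n))) ^ a ∣ z - α → Apx D c' l (g y) (g z) (z - y)

variable {α : (ZMod (p ^ n))} {α' : Ω'} {κY : Type*} {cY : (ZMod (p ^ n)) → (ZMod (p ^ n)) → κY} {cY' : Ω' → Ω' → κY}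

lemma Ext.disc' (E : Ext D c' α α' cY cY') (S : SR D) (L : Level D a (a + 1) l) (h0 : DT D a l)
    {w y z : (ZMod (p ^ n))} {w' y' z' : Ω'} (hw : V a (w - α)) (hy : (p : (ZMod (p ^ n))) ^ a ∣ y - α)
    (h1 : cY w y = cY' w' y') (h2 : cY w z = cY' w' z') : Apx D c' l y' z' (z - y) := by
  obtain ⟨y2, h3, h4⟩ := E.tri'' h2 y'
  have h5 := E.disc S L h0 hw hy (h1.trans h3.symm)
  refine ⟨y - y2, ?_, ?_⟩
  · rw [← dvd_neg]; simpa using h5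
  · rw [E.ref' _ _ _ _ h4]; congr 1; ring

lemma Ext.good (E : Ext D c' α α' cY cY') (S : SR D) (L : Level D a (a + 1) l) (h0 : DT D a l) :
    ∃ g, g α = α' ∧ Good D c' a l α g := by
  have han : a < n := by have := L.un; omega
  obtain ⟨w', h1, -⟩ := E.tri' E.base (α + (p : (ZMod (p ^ n))) ^ a)
  have h2 := E.inv' _ _ _ _ h1
  have : ∀ y, ∃ y', cY (α + (p : (ZMod (p ^ n))) ^ a) y = cY' w' y' ∧ (y = α → y' = α') := by
    intro y
    by_cases hy : y = α
    · exact ⟨α', by rw [hy, h2], fun _ => rfl⟩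
    · obtain ⟨y', h3, -⟩ := E.tri' h2 y
      exact ⟨y', h3, fun h => absurd h hy⟩
  choose g hg hg2 using this
  refine ⟨g, hg2 _ rfl, fun y z hy hz => ?_⟩
  exact E.disc' S L h0 (by simpa using V_pow (p := p) han) hy (hg y) (hg z)

lemma good_C (S : SR D) (I : Img D c') (xa : Xg D a) (xu : Xg D u) (hau : a ≤ u)
    (hC : ∀ z z', (p : (ZMod (p ^ n))) ^ a ∣ z → ¬ (p : (ZMod (p ^ n))) ^ u ∣ z → (p : (ZMod (p ^ n))) ^ a ∣ z' → ¬ (p : (ZMod (p ^ n))) ^ u ∣ z' → D z = D z')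
    (α : (ZMod (p ^ n))) (α' : Ω') : ∃ g, g α = α' ∧ Good D c' a u α g := by
  classical
  have near_trans : ∀ {b : ℕ}, Xg D b → ∀ {x y z : Ω'}, Apx D c' b x y 0 → Apx D c' b y z 0 → Apx D c' b x z 0 :=
    fun X _ _ _ h h' => h.right S I X h'
  let A := {y : (ZMod (p ^ n)) // (p : (ZMod (p ^ n))) ^ a ∣ y - α}
  let B := {y : Ω' // Apx D c' a α' y 0}
  let s : Setoid A := ⟨fun x y => (p : (ZMod (p ^ n))) ^ u ∣ y.1 - x.1, fun _ => by simp,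
    fun {x y} h => by rw [← dvd_neg]; simpa using h,
    fun {x y z} h h' => by have := dvd_add h h'; ring_nf at this ⊢; exact this⟩
  let t : Setoid B := ⟨fun x y => Apx D c' u x.1 y.1 0, fun _ => Apx.refl I _,
    fun {x y} h => h.symm I, fun {x y z} h h' => near_trans xu h h'⟩
  have hne : Nonempty {v : (ZMod (p ^ n)) // (p : (ZMod (p ^ n))) ^ u ∣ v} := ⟨⟨0, dvd_zero _⟩⟩
  have hiff : ∀ b, Xg D b → ∀ {x y : Ω'} {v : (ZMod (p ^ n))}, c' x y = D v → (Apx D c' b x y 0 ↔ (p : (ZMod (p ^ n))) ^ b ∣ v) :=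
    fun b X x y v h => ⟨fun h1 => h1.dvd X h, fun h1 => ⟨v, h1, by rw [zero_add, h]⟩⟩
  have q1 : ∀ x, Nonempty ({y // s x y} ≃ {v : (ZMod (p ^ n)) // (p : (ZMod (p ^ n))) ^ u ∣ v}) := by
    intro x
    refine ⟨⟨fun y => ⟨y.1.1 - x.1, y.2⟩, fun v => ⟨⟨x.1 + v.1, ?_⟩, ?_⟩, ?_, ?_⟩⟩
    · have := dvd_add x.2 ((pow_dvd_pow _ hau).trans v.2)
      convert this using 1; ring
    · change (p : (ZMod (p ^ n))) ^ u ∣ x.1 + v.1 - x.1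
      simpa using v.2
    · intro y; ext; simp
    · intro v; ext; simp
  have q2 : ∀ x, Nonempty ({y // t x y} ≃ {v : (ZMod (p ^ n)) // (p : (ZMod (p ^ n))) ^ u ∣ v}) := by
    intro x
    obtain ⟨e, he⟩ := I.eqv x.1
    refine ⟨Equiv.symm ⟨fun v => ⟨⟨e v.1, ?_⟩, ?_⟩, fun y => ⟨e.symm y.1.1, ?_⟩, ?_, ?_⟩⟩
    · refine near_trans xa x.2 ((hiff a xa (he _)).2 ((pow_dvd_pow _ hau).trans v.2))
    · exact (hiff u xu (he _)).2 v.2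
    · have := y.2
      refine (hiff u xu (he _)).1 ?_ 
      rw [e.apply_symm_apply]
      exact y.2
    · intro v; ext; simp
    · intro y; ext; simp
  have q3 : Nonempty (A ≃ B) := by
    obtain ⟨e, he⟩ := I.eqv α'
    refine ⟨⟨fun y => ⟨e (y.1 - α), ?_⟩, fun y => ⟨α + e.symm y.1, ?_⟩, ?_, ?_⟩⟩
    · exact (hiff a xa (he _)).2 y.2
    · rw [add_sub_cancel_left]
      refine (hiff a xa (he _)).1 ?_
      rw [e.apply_symm_apply]; exact y.2
    · intro v; ext; simp
    · intro y; ext; simp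
  obtain ⟨g, hg0, hg⟩ := exists_map_of_classes s t q1 q2 q3 ⟨α, by simp⟩ ⟨α', Apx.refl I _⟩
  refine ⟨fun y => if h : (p : (ZMod (p ^ n))) ^ a ∣ y - α then (g ⟨y, h⟩).1 else α', ?_, ?_⟩
  · simp [hg0]
  · intro y z hy hz
    simp only [hy, hz, dif_pos]
    have hh := hg ⟨y, hy⟩ ⟨z, hz⟩
    change ((p : (ZMod (p ^ n))) ^ u ∣ z - y) ↔ Apx D c' u (g ⟨y, hy⟩).1 (g ⟨z, hz⟩).1 0 at hh
    by_cases h : (p : (ZMod (p ^ n))) ^ u ∣ z - y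
    · obtain ⟨w, hw, h1⟩ := hh.1 h
      exact ⟨w - (z - y), dvd_sub hw h, by rw [h1]; congr 1; ring⟩
    · have h1 := fun h2 => h (hh.2 h2)
      obtain ⟨v, hv⟩ := I.sur (g ⟨y, hy⟩).1 (g ⟨z, hz⟩).1
      rw [hiff u xu hv] at h1
      have h2 : Apx D c' a (g ⟨y, hy⟩).1 (g ⟨z, hz⟩).1 0 :=
        near_trans xa ((g ⟨y, hy⟩).2.symm I) (g ⟨z, hz⟩).2
      rw [hiff a xa hv] at h2
      refine Apx.of_eq ?_
      rw [hv]
      refine hC _ _ h2 h1 ?_ h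
      have := dvd_sub hz hy
      simpa using this

def Ses (D : (ZMod (p ^ n)) → κ) (c' : Ω' → Ω' → κ) : Prop :=
  ∀ α α', ∃ (κY : Type u) (cY : (ZMod (p ^ n)) → (ZMod (p ^ n)) → κY) (cY' : Ω' → Ω' → κY), Ext D c' α α' cY cY'

lemma exists_good (S : SR D) (I : Img D c') (Q : Ses.{u} D c') (L : Level D a u l) (α : (ZMod (p ^ n))) (α' : Ω') :
    ∃ g, g α = α' ∧ Good D c' a l α g := by
  have hC : (l = u ∧ ∀ z z', (p : (ZMod (p ^ n))) ^ a ∣ z → ¬ (p : (ZMod (p ^ n))) ^ u ∣ z → (p : (ZMod (p ^ n))) ^ a ∣ z' →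
      ¬ (p : (ZMod (p ^ n))) ^ u ∣ z' → D z = D z') → ∃ g, g α = α' ∧ Good D c' a l α g := by
    rintro ⟨rfl, h⟩
    exact good_C S I L.xa L.xu L.lt.le h α α'
  rcases S.class_thm L with rfl | h
  · by_cases h0 : DT D a l
    · obtain ⟨κY, cY, cY', E⟩ := Q α α'
      exact E.good S L h0
    · unfold DT at h0
      push Not at h0
      have := L.ul
      refine hC ⟨by omega, fun z z' h1 h2 h3 h4 => h0.2 _ _ ⟨h1, h2⟩ ⟨h3, h4⟩⟩
  · exact hC h

end Im
end Circ

namespace Circ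

section Key
variable {p n : ℕ} [hp : Fact p.Prime] {κ : Type*} {Ω' : Type*} [Finite Ω']
variable {D : (ZMod (p ^ n)) → κ} {a u l : ℕ} {c' : Ω' → Ω' → κ}

lemma Good.mono {b l' : ℕ} (hab : a ≤ b) (hl : l' ≤ l) {α : (ZMod (p ^ n))} {g : (ZMod (p ^ n)) → Ω'} (h : Good D c' a l α g) :
    Good D c' b l' α g :=
  fun y z hy hz => (h y z ((pow_dvd_pow _ hab).trans hy) ((pow_dvd_pow _ hab).trans hz)).mono hl

lemma key (S : SR D) (I : Img D c') (Q : Ses.{u} D c') (L : Level D a (a + 1) l) (hl : a + 2 ≤ l)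
    {b ub lb : ℕ} (hab : a < b) (hbl : b < l) (Lb : Level D b ub lb) (hlb : l ≤ lb) {α : (ZMod (p ^ n))} {g : (ZMod (p ^ n)) → Ω'}
    (hg : Good D c' a l α g) :
    ∃ g1, Good D c' b lb α g1 ∧ ∀ y, (p : (ZMod (p ^ n))) ^ b ∣ y - α → Apx D c' l (g1 y) (g y) 0 := by
  have han : a < n := by have := L.un; omega
  have hbn : b < n := by have := L.ln; omega
  have Xl := S.Xg_l L
  have Xlb := S.Xg_l Lb
  rcases hlb.eq_or_lt with rfl | hlb'
  · refine ⟨g, hg.mono hab.le le_rfl, fun y hy => ?_⟩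
    have hy := (pow_dvd_pow _ hab.le).trans hy
    simpa using hg y y hy hy
  obtain rfl : ub = b + 1 := by
    rcases S.class_thm Lb with h | h
    · exact h
    · exact absurd Xl (Lb.nxt l hbl (by omega))
  have T : DT D a l := Or.inl hl
  have Tb : DT D b lb := Or.inl (by omega)
  obtain ⟨κY, cY, cY', E⟩ := Q α (g α)
  set x : (ZMod (p ^ n)) := (p : (ZMod (p ^ n))) ^ a with hx
  set xb : (ZMod (p ^ n)) := (p : (ZMod (p ^ n))) ^ b with hxb
  have Vx : V a x := V_pow han
  have Vxb : V b xb := V_pow hbn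
  have Vx' : V a (α + x - α) := by simpa using Vx
  have Vxb' : V b (α + xb - α) := by simpa using Vxb
  obtain ⟨w', h1, -⟩ := E.tri' E.base (α + x)
  have h2 := E.inv' _ _ _ _ h1
  obtain ⟨x1', h3, h4⟩ := E.tri' h2 (α + xb)
  have : ∀ y, ∃ t, cY (α + x) t = cY' w' (g y) := by
    intro y
    obtain ⟨t, h, -⟩ := E.tri'' h2 (g y)
    exact ⟨t, h⟩
  choose t ht using this
  have hαα : (p : (ZMod (p ^ n))) ^ a ∣ α - α := by simp
  have tα : ∀ y, (p : (ZMod (p ^ n))) ^ a ∣ y - α → Ap D l (y - α) (t y - α) := by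
    intro y hy
    have k1 := E.ref' _ _ _ _ (E.base_eq' (ht y)).2
    exact (hg α y hαα hy).uniq S Xl (Apx.of_eq k1)
  have td : ∀ y, (p : (ZMod (p ^ n))) ^ a ∣ y - α → (p : (ZMod (p ^ n))) ^ a ∣ t y - α :=
    fun y hy => (tα y hy).dvd (by omega) L.xa hy
  have tt : ∀ y z, (p : (ZMod (p ^ n))) ^ a ∣ y - α → (p : (ZMod (p ^ n))) ^ a ∣ z - α → Ap D l (z - y) (t z - t y) := by
    intro y z hy hz
    exact (hg y z hy hz).uniq S Xl (E.disc' S L T Vx' (td y hy) (ht y) (ht z))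
  have hxx : (p : (ZMod (p ^ n))) ^ a ∣ α + x - α := by simp [hx]
  have k1 := tα (α + x) hxx
  rw [add_sub_cancel_left] at k1
  have k2 := L.ap_eq k1 Vx.1 Vx.2
  obtain ⟨k, hk, hkx⟩ := Vx.ratio_unit (L.V_of_eq k2 Vx)
  have hDk : D (k * x) = D x := by rw [← hkx, k2]
  -- rigidity
  have rig : ∀ s, (p : (ZMod (p ^ n))) ^ a ∣ s → (p : (ZMod (p ^ n))) ^ l ∣ t (α + s) - α - k * s := by
    intro s hs
    obtain ⟨ki, rfl⟩ := hk
    have inv_ap : ∀ z Z, (p : (ZMod (p ^ n))) ^ a ∣ Z → Ap D l z Z → Ap D l z (((ki⁻¹ : ((ZMod (p ^ n)))ˣ) : (ZMod (p ^ n))) * Z) := by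
      intro z Z hZ h
      refine h.trans S Xl ?_
      have := S.mulAut L ki.isUnit Vx hDk (z := ((ki⁻¹ : ((ZMod (p ^ n)))ˣ) : (ZMod (p ^ n))) * Z) (hZ.mul_left _)
      rwa [← mul_assoc, Units.mul_inv, one_mul] at this
    have dd : ∀ s, (p : (ZMod (p ^ n))) ^ a ∣ s → (p : (ZMod (p ^ n))) ^ a ∣ α + s - α := fun s hs => by simpa using hs
    have := S.rigid L hl Vx (fun y y' => y' = ((ki⁻¹ : ((ZMod (p ^ n)))ˣ) : (ZMod (p ^ n))) * (t (α + y) - α)) ?_ ?_ (y := s) rfl hs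
    · have h5 := this.mul_left (ki : (ZMod (p ^ n)))
      have e : (ki : (ZMod (p ^ n))) * (((ki⁻¹ : ((ZMod (p ^ n)))ˣ) : (ZMod (p ^ n))) * (t (α + s) - α) - s) = t (α + s) - α - ki * s := by
        rw [mul_sub, ← mul_assoc, Units.mul_inv, one_mul]
      rwa [e] at h5
    · rintro y y' rfl hy
      refine ⟨(td _ (dd y hy)).mul_left _, ?_, ?_⟩
      · refine inv_ap _ _ (td _ (dd y hy)) ?_
        simpa using tα _ (dd y hy)
      · have e : ((ki⁻¹ : ((ZMod (p ^ n)))ˣ) : (ZMod (p ^ n))) * (t (α + y) - α) - x = ((ki⁻¹ : ((ZMod (p ^ n)))ˣ) : (ZMod (p ^ n))) * (t (α + y) - t (α + x)) := by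
          have : t (α + x) = α + ki * x := by rw [← hkx]; ring
          rw [this, mul_sub, mul_sub, mul_add, ← mul_assoc _ (ki : (ZMod (p ^ n))), Units.inv_mul, one_mul]; ring
        rw [e]
        refine inv_ap _ _ ?_ ?_
        · have := dvd_sub (td _ (dd y hy)) (td _ hxx); simpa using this
        · have := tt _ _ hxx (dd y hy)
          simpa using this
    · rintro y y' v rfl hy hv
      refine ⟨_, rfl, ?_⟩
      have e : ((ki⁻¹ : ((ZMod (p ^ n)))ˣ) : (ZMod (p ^ n))) * (t (α + v) - α) - ((ki⁻¹ : ((ZMod (p ^ n)))ˣ) : (ZMod (p ^ n))) * (t (α + y) - α)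
        = ((ki⁻¹ : ((ZMod (p ^ n)))ˣ) : (ZMod (p ^ n))) * (t (α + v) - t (α + y)) := by ring
      rw [e]
      refine inv_ap _ _ ?_ ?_
      · have := dvd_sub (td _ (dd v hv)) (td _ (dd y hy)); simpa using this
      · have := tt _ _ (dd y hy) (dd v hv)
        simpa using this
  -- multiplier at b
  obtain ⟨m, hm, hDm⟩ := S.mulAut L hk Vx hDk (z := xb) ((pow_dvd_pow _ hab.le).trans Vxb.1)
  obtain ⟨k1, hk1, hk1x⟩ := Vxb.ratio_unit (Lb.V_of_eq hDm.symm Vxb)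
  rw [hk1x] at hDm
  have hkk : ∀ z, (p : (ZMod (p ^ n))) ^ b ∣ z → (p : (ZMod (p ^ n))) ^ l ∣ k * z - k1 * z := by
    rintro z ⟨s, rfl⟩
    have e : k * ((p : (ZMod (p ^ n))) ^ b * s) - k1 * ((p : (ZMod (p ^ n))) ^ b * s) = - (m * s) := by
      have : k1 * (p : (ZMod (p ^ n))) ^ b = k * (p : (ZMod (p ^ n))) ^ b + m := by rw [← hxb, ← hk1x]
      rw [← mul_assoc, ← mul_assoc, this]; ring
    rw [e, dvd_neg]
    exact hm.mul_right _
  have hB := E.inv' _ _ _ _ (E.base_eq' h3).2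
  have : ∀ y, ∃ y', cY (α + xb) (α + k1 * (y - α)) = cY' x1' y' := by
    intro y
    obtain ⟨y', h, -⟩ := E.tri' hB (α + k1 * (y - α))
    exact ⟨y', h⟩
  choose g1 hg1 using this
  refine ⟨g1, fun y z hy hz => ?_, fun y hy => ?_⟩
  · have h5 := E.disc' S Lb Tb Vxb' (y := α + k1 * (y - α)) (by simpa using hy.mul_left k1) (hg1 y) (hg1 z)
    refine h5.ap S Xlb ?_
    have e : α + k1 * (z - α) - (α + k1 * (y - α)) = k1 * (z - y) := by ring
    rw [e]
    refine S.mulAut Lb hk1 Vxb hDm ?_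
    have := dvd_sub hz hy; simpa using this
  · obtain ⟨y2, h5, h6⟩ := E.tri'' h3 (g1 y)
    have h7 : cY (α + xb) y2 = cY' x1' (g1 y) := E.inv' _ _ _ _ h6
    have h8 := E.disc S Lb Tb Vxb' (y := α + k1 * (y - α)) (by simpa using hy.mul_left k1)
      ((hg1 y).trans h7.symm)
    have hya := (pow_dvd_pow (p : (ZMod (p ^ n))) hab.le).trans hy
    have h9 := (E.disc' S L T Vx' (td y hya) (ht y) h5).inv I
    have h10 : (p : (ZMod (p ^ n))) ^ l ∣ -(y2 - t y) := by
      have r := rig (y - α) hya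
      have e : -(y2 - t y) = (t (α + (y - α)) - α - k * (y - α)) + (k * (y - α) - k1 * (y - α))
        - (y2 - (α + k1 * (y - α))) := by
        rw [add_sub_cancel]; ring
      rw [e]
      exact dvd_sub (dvd_add r (hkk _ hy)) ((pow_dvd_pow _ hlb).trans h8)
    exact h9.zero_of_dvd h10

end Key
end Circ

namespace Circ

section Main
variable {p n : ℕ} [hp : Fact p.Prime] {κ : Type*} {Ω' : Type*} [Finite Ω']
variable {D : (ZMod (p ^ n)) → κ} {a u l : ℕ} {c' : Ω' → Ω' → κ}

lemma exists_rep (b : ℕ) : ∃ ρ : (ZMod (p ^ n)) → (ZMod (p ^ n)), (∀ y, (p : (ZMod (p ^ n))) ^ b ∣ y - ρ y) ∧ ∀ y z, (p : (ZMod (p ^ n))) ^ b ∣ z - y → ρ y = ρ z := by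
  let s : Setoid (ZMod (p ^ n)) := ⟨fun x y => (p : (ZMod (p ^ n))) ^ b ∣ y - x, fun _ => by simp,
    fun {x y} h => by rw [← dvd_neg]; simpa using h,
    fun {x y z} h h' => by have := dvd_add h h'; ring_nf at this ⊢; exact this⟩
  refine ⟨fun y => (Quotient.mk s y).out, fun y => ?_, fun y z h => ?_⟩
  · exact Quotient.exact (s := s) (Quotient.out_eq (Quotient.mk s y))
  · have : Quotient.mk s y = Quotient.mk s z := Quotient.sound (s := s) h
    simp only [this]

lemma SR.find_level (S : SR D) {a b : ℕ} (xa : Xg D a) (hbn : b ≤ n) {v : (ZMod (p ^ n))} (h1 : (p : (ZMod (p ^ n))) ^ a ∣ v)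
    (h2 : ¬ (p : (ZMod (p ^ n))) ^ b ∣ v) : ∃ a2 u2 l2, a ≤ a2 ∧ a2 < b ∧ Level D a2 u2 l2 ∧
      (p : (ZMod (p ^ n))) ^ a2 ∣ v ∧ ¬ (p : (ZMod (p ^ n))) ^ u2 ∣ v := by
  classical
  have hab : a < b := by
    by_contra h
    exact h2 ((pow_dvd_pow _ (by omega)).trans h1)
  let P : ℕ → Prop := fun c => Xg D c ∧ (p : (ZMod (p ^ n))) ^ c ∣ v
  have hP : P (Nat.findGreatest P b) := Nat.findGreatest_spec (P := P) hab.le ⟨xa, h1⟩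
  have ha : a ≤ Nat.findGreatest P b := Nat.le_findGreatest hab.le ⟨xa, h1⟩
  have hb : Nat.findGreatest P b < b := by
    rcases (Nat.findGreatest_le (P := P) b).lt_or_eq with h | h
    · exact h
    · exact absurd (h ▸ hP.2) h2
  obtain ⟨u2, l2, L⟩ := S.exists_level hP.1 (by omega)
  refine ⟨_, u2, l2, ha, hb, L, hP.2, fun h => ?_⟩
  by_cases hub : u2 ≤ b
  · have := Nat.le_findGreatest (P := P) hub ⟨L.xu, h⟩
    have := L.lt
    omega
  · exact h2 ((pow_dvd_pow _ (by omega)).trans h)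

lemma glue (S : SR D) (I : Img D c') {b : ℕ} (Xl : Xg D l) (hab : a ≤ b) {α : (ZMod (p ^ n))} {g : (ZMod (p ^ n)) → Ω'}
    (hg : Good D c' a l α g) (F : (ZMod (p ^ n)) → (ZMod (p ^ n)) → Ω')
    (hF : ∀ β, (p : (ZMod (p ^ n))) ^ a ∣ β - α → Good D c' b n β (F β))
    (hF2 : ∀ β y, (p : (ZMod (p ^ n))) ^ a ∣ β - α → (p : (ZMod (p ^ n))) ^ b ∣ y - β → Apx D c' l (F β y) (g y) 0)
    (hv : ∀ v, (p : (ZMod (p ^ n))) ^ a ∣ v → ¬ (p : (ZMod (p ^ n))) ^ b ∣ v → ∃ a2 u2 l2, Level D a2 u2 l2 ∧ l2 ≤ l ∧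
      (p : (ZMod (p ^ n))) ^ a2 ∣ v ∧ ¬ (p : (ZMod (p ^ n))) ^ u2 ∣ v) :
    ∃ f, Good D c' a n α f ∧ ∀ y, (p : (ZMod (p ^ n))) ^ a ∣ y - α → Apx D c' l (f y) (g y) 0 := by
  obtain ⟨ρ, h1, h2⟩ := exists_rep (p := p) (n := n) b
  have h3 : ∀ y, (p : (ZMod (p ^ n))) ^ a ∣ y - α → (p : (ZMod (p ^ n))) ^ a ∣ ρ y - α := by
    intro y hy
    have := dvd_sub hy ((pow_dvd_pow _ hab).trans (h1 y))
    simpa using this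
  have h4 : ∀ y, (p : (ZMod (p ^ n))) ^ a ∣ y - α → Apx D c' l (F (ρ y) y) (g y) 0 :=
    fun y hy => hF2 _ _ (h3 y hy) (h1 y)
  refine ⟨fun y => F (ρ y) y, fun y z hy hz => ?_, h4⟩
  by_cases h : (p : (ZMod (p ^ n))) ^ b ∣ z - y
  · have e := h2 y z h
    simp only []
    rw [← e]
    refine hF _ (h3 y hy) y z (h1 y) ?_
    rw [e]; exact h1 z
  · have h5 : (p : (ZMod (p ^ n))) ^ a ∣ z - y := by have := dvd_sub hz hy; simpa using this
    obtain ⟨a2, u2, l2, L, hl, h6, h7⟩ := hv _ h5 h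
    have h8 := ((hg y z hy hz).left S I Xl (h4 y hy)).right S I Xl ((h4 z hz).symm I)
    exact Apx.of_eq (L.apx_eq (h8.mono hl) h6 h7)

lemma main_ind (S : SR D) (I : Img D c') (Q : Ses.{u} D c') : ∀ (m a u l : ℕ), n - a ≤ m → Level D a u l →
    ∀ α g, Good D c' a l α g → ∃ f, Good D c' a n α f ∧ ∀ y, (p : (ZMod (p ^ n))) ^ a ∣ y - α → Apx D c' l (f y) (g y) 0 := by
  classical
  intro m
  induction m with
  | zero =>
    intro a u l hm L
    have := L.lt
    have := L.un
    omega
  | succ m ih =>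
    intro a u l hm L α g hg
    have hau := L.lt
    have hun := L.un
    have hln := L.ln
    have Xl := S.Xg_l L
    rcases L.ul.eq_or_lt with rfl | hul
    · -- l = u
      have : ∀ β, ∃ f, (p : (ZMod (p ^ n))) ^ a ∣ β - α → Good D c' u n β f ∧ ∀ y, (p : (ZMod (p ^ n))) ^ u ∣ y - β → Apx D c' u (f y) (g y) 0 := by
        intro β
        by_cases hβ : (p : (ZMod (p ^ n))) ^ a ∣ β - α
        swap
        · exact ⟨g, fun h => absurd h hβ⟩
        have hgβ : ∀ y, (p : (ZMod (p ^ n))) ^ u ∣ y - β → Apx D c' u (g β) (g y) 0 := by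
          intro y hy
          refine (hg β y hβ ?_).zero_of_dvd hy
          have := dvd_add hβ ((pow_dvd_pow _ hau.le).trans hy)
          convert this using 1; ring
        rcases hun.eq_or_lt with rfl | hun'
        · refine ⟨fun _ => g β, fun _ => ⟨fun y z hy hz => ?_, fun y hy => hgβ y hy⟩⟩
          have h1 : z - y = 0 := by
            have := dvd_sub hz hy
            exact pow_dvd_zero le_rfl (by simpa using this)
          rw [h1]; exact Apx.refl I _
        · obtain ⟨u2, l2, L2⟩ := S.exists_level L.xu hun'
          obtain ⟨g2, k1, k2⟩ := exists_good S I Q L2 β (g β)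
          obtain ⟨f, k3, k4⟩ := ih u u2 l2 (by omega) L2 β g2 k2
          refine ⟨f, fun _ => ⟨k3, fun y hy => ?_⟩⟩
          have hul2 : u ≤ l2 := by have := L2.lt; have := L2.ul; omega
          have hββ : (p : (ZMod (p ^ n))) ^ u ∣ β - β := by simp
          have j1 : Apx D c' u (f y) (f β) 0 := by
            refine ((k3 y β hy hββ).mono hun).zero_of_dvd ?_
            rw [← dvd_neg]; simpa using hy
          have j2 : Apx D c' u (f β) (g β) 0 := by
            rw [← k1]; exact (k4 β hββ).mono hul2
          exact (j1.right S I Xl j2).right S I Xl (hgβ y hy)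
      choose F hF using this
      refine glue S I Xl hau.le hg F (fun β hβ => (hF β hβ).1) (fun β y hβ => (hF β hβ).2 y) ?_
      intro v h1 h2
      exact ⟨a, u, u, L, le_rfl, h1, h2⟩
    · obtain rfl : u = a + 1 := by
        rcases S.class_thm L with h | h
        · exact h
        · omega
      have hex : ∃ b, a < b ∧ b < l ∧ ∃ ub lb, Level D b ub lb ∧ l ≤ lb := by
        let P : ℕ → Prop := fun c => Xg D c
        have hP : P (Nat.findGreatest P (l - 1)) := Nat.findGreatest_spec (P := P) (m := a + 1) (by omega) L.xu
        have h1 : a + 1 ≤ Nat.findGreatest P (l - 1) := Nat.le_findGreatest (by omega) L.xu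
        have h2 := Nat.findGreatest_le (P := P) (l - 1)
        obtain ⟨ub, lb, Lb⟩ := S.exists_level hP (by omega)
        refine ⟨_, by omega, by omega, ub, lb, Lb, ?_⟩
        by_contra h
        have h3 := Lb.ul
        have h4 := Lb.lt
        have := Nat.le_findGreatest (P := P) (n := l - 1) (m := ub) (by omega) Lb.xu
        omega
      obtain ⟨hab, hbl, ub, lb, Lb, hlb⟩ := Nat.find_spec hex
      have hmin : ∀ b2, b2 < Nat.find hex → ¬ _ := fun b2 h => Nat.find_min hex h
      generalize Nat.find hex = b at *
      have : ∀ β, ∃ f, (p : (ZMod (p ^ n))) ^ a ∣ β - α → Good D c' b n β f ∧ ∀ y, (p : (ZMod (p ^ n))) ^ b ∣ y - β → Apx D c' l (f y) (g y) 0 := by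
        intro β
        by_cases hβ : (p : (ZMod (p ^ n))) ^ a ∣ β - α
        swap
        · exact ⟨g, fun h => absurd h hβ⟩
        have hgβ : Good D c' a l β g := by
          intro y z hy hz
          refine hg y z ?_ ?_
          · have := dvd_add hβ hy
            convert this using 1; ring
          · have := dvd_add hβ hz
            convert this using 1; ring
        obtain ⟨g1, k1, k2⟩ := key S I Q L (by omega) hab hbl Lb hlb hgβ
        obtain ⟨f, k3, k4⟩ := ih b ub lb (by omega) Lb β g1 k1
        exact ⟨f, fun _ => ⟨k3, fun y hy => ((k4 y hy).mono hlb).right S I Xl (k2 y hy)⟩⟩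
      choose F hF using this
      refine glue S I Xl hab.le hg F (fun β hβ => (hF β hβ).1) (fun β y hβ => (hF β hβ).2 y) ?_
      intro v h1 h2
      by_cases h3 : (p : (ZMod (p ^ n))) ^ (a + 1) ∣ v
      · obtain ⟨a2, u2, l2, q1, q2, L2, q3, q4⟩ := S.find_level L.xu (by omega) h3 h2
        refine ⟨a2, u2, l2, L2, ?_, q3, q4⟩
        by_contra h
        exact hmin a2 q2 ⟨by omega, by omega, u2, l2, L2, by omega⟩
      · exact ⟨a, a + 1, l, L, le_rfl, h1, h3⟩

theorem main (hn : 1 ≤ n) (S : SR D) (I : Img D c') (Q : Ses.{u} D c') [Nonempty Ω'] :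
    ∃ f : (ZMod (p ^ n)) → Ω', ∀ y z, c' (f y) (f z) = D (z - y) := by
  obtain ⟨u, l, L⟩ := S.exists_level Xg_zero (by omega)
  obtain ⟨g, -, hg⟩ := exists_good S I Q L 0 (Classical.arbitrary Ω')
  obtain ⟨f, hf, -⟩ := main_ind S I Q _ 0 u l le_rfl L 0 g hg
  refine ⟨f, fun y z => ?_⟩
  obtain ⟨w, hw, h⟩ := hf y z (by simp) (by simp)
  rw [h, pow_dvd_zero le_rfl hw, add_zero]

end Main
end Circ

namespace Circ
open CohCfg

lemma Match.comp {A B Ω Ω' κ : Type*} {c : Ω → Ω → κ} {c' : Ω' → Ω' → κ} (h : Match c c') (e : A ≃ Ω)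
    (d : B ≃ Ω') : Match (fun a b => c (e a) (e b)) (fun a b => c' (d a) (d b)) := by
  intro a b a' b' hab r s
  have h1 := h _ _ _ _ hab r s
  have k1 := Set.ncard_image_of_injective {z | c (e a) (e z) = r ∧ c (e z) (e b) = s} e.injective
  have k2 := Set.ncard_image_of_injective {z | c' (d a') (d z) = r ∧ c' (d z) (d b') = s} d.injective
  rw [← k1, ← k2]
  convert h1 using 2
  · ext x
    constructor
    · rintro ⟨y, hy, rfl⟩; exact hy
    · intro hx; exact ⟨e.symm x, by simpa using hx, by simp⟩
  · ext x
    constructor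
    · rintro ⟨y, hy, rfl⟩; exact hy
    · intro hx; exact ⟨d.symm x, by simpa using hx, by simp⟩

section Tr
variable {Ω Ω' : Type u}

noncomputable def col (X : CohCfg Ω) (x y : Ω) : Set (Ω × Ω) := (X.cover (x, y)).choose

lemma col_mem (X : CohCfg Ω) (x y : Ω) : col X x y ∈ X.S := (X.cover (x, y)).choose_spec.1

lemma mem_col (X : CohCfg Ω) (x y : Ω) : (x, y) ∈ col X x y := (X.cover (x, y)).choose_spec.2

lemma col_iff (X : CohCfg Ω) {x y : Ω} {s : Set (Ω × Ω)} (hs : s ∈ X.S) : col X x y = s ↔ (x, y) ∈ s := by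
  constructor
  · rintro rfl; exact mem_col X x y
  · intro h
    by_contra hne
    have := X.disj _ (col_mem X x y) _ hs hne
    have h2 : (x, y) ∈ col X x y ∩ s := ⟨mem_col X x y, h⟩
    rw [this] at h2
    exact h2

lemma col_diag (X : CohCfg Ω) (a b x : Ω) (h : col X a b = col X x x) : a = b := by
  refine X.diag _ (col_mem X x x) ⟨(x, x), mem_col X x x, rfl⟩ (a, b) ?_
  rw [← h]; exact mem_col X a b

lemma col_inv (X : CohCfg Ω) (a b a1 b1 : Ω) (h : col X a b = col X a1 b1) : col X b a = col X b1 a1 := by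
  have h1 := X.conv _ (col_mem X a b)
  have h2 : col X b a = {p : Ω × Ω | (p.2, p.1) ∈ col X a b} := (col_iff X h1).2 (mem_col X a b)
  have h3 : col X b1 a1 = {p : Ω × Ω | (p.2, p.1) ∈ col X a b} := (col_iff X h1).2 (by
    change (a1, b1) ∈ col X a b
    rw [h]; exact mem_col X a1 b1)
  rw [h2, h3]

lemma col_match (X : CohCfg Ω) : Match (col X) (col X) := by
  intro a b a' b' h r s
  by_cases hr : r ∈ X.S
  · by_cases hs : s ∈ X.S
    · simp only [col_iff X hr, col_iff X hs]
      exact X.inum r hr s hs _ (col_mem X a b) (a, b) (mem_col X a b) (a', b') (by rw [h]; exact mem_col X a' b')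
    · have : ∀ x y, col X x y ≠ s := fun x y h => hs (h ▸ col_mem X x y)
      simp [this]
  · have : ∀ x y, col X x y ≠ r := fun x y h => hr (h ▸ col_mem X x y)
    simp [this]

variable {X : CohCfg Ω} {X' : CohCfg Ω'} {φ : Set (Ω × Ω) → Set (Ω' × Ω')}

noncomputable def icol (h : IsAlgIso X X' φ) (x y : Ω') : Set (Ω × Ω) :=
  (h.bijOn.surjOn (col_mem X' x y)).choose

lemma icol_mem (h : IsAlgIso X X' φ) (x y : Ω') : icol h x y ∈ X.S :=
  (h.bijOn.surjOn (col_mem X' x y)).choose_spec.1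

lemma icol_eq (h : IsAlgIso X X' φ) (x y : Ω') : φ (icol h x y) = col X' x y :=
  (h.bijOn.surjOn (col_mem X' x y)).choose_spec.2

lemma icol_iff (h : IsAlgIso X X' φ) {x y : Ω'} {s : Set (Ω × Ω)} (hs : s ∈ X.S) :
    icol h x y = s ↔ (x, y) ∈ φ s := by
  rw [← col_iff X' (h.bijOn.mapsTo hs), ← icol_eq h]
  exact (h.bijOn.injOn.eq_iff (icol_mem h x y) hs).symm

lemma icol_diag (h : IsAlgIso X X' φ) (a b x : Ω') (hh : icol h a b = icol h x x) : a = b := by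
  refine col_diag X' a b x ?_
  rw [← icol_eq h, hh, icol_eq h]

lemma icol_match (h : IsAlgIso X X' φ) : Match (col X) (icol h) := by
  intro a b a' b' hab r s
  by_cases hr : r ∈ X.S
  · by_cases hs : s ∈ X.S
    · simp only [col_iff X hr, col_iff X hs, icol_iff h hr, icol_iff h hs]
      exact h.cnum_eq r hr s hs _ (col_mem X a b) (a, b) (mem_col X a b) (a', b')
        ((icol_iff h (col_mem X a b)).1 hab.symm)
    · have h1 : ∀ x y, col X x y ≠ s := fun x y h => hs (h ▸ col_mem X x y)
      have h2 : ∀ x y, icol h x y ≠ s := fun x y hh => hs (hh ▸ icol_mem h x y)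
      simp [h1, h2]
  · have h1 : ∀ x y, col X x y ≠ r := fun x y h => hr (h ▸ col_mem X x y)
    have h2 : ∀ x y, icol h x y ≠ r := fun x y hh => hr (hh ▸ icol_mem h x y)
    simp [h1, h2]

lemma icol_inv (h : IsAlgIso X X' φ) {a b : Ω} {a' b' : Ω'} (hab : col X a b = icol h a' b') :
    col X b a = icol h b' a' := by
  haveI := X.finite
  haveI := X'.finite
  exact (icol_match h).inv (col_diag X) (icol_diag h) (col_inv X) hab

end Tr

theorem final {G : Type u} [CommGroup G] [IsCyclic G] [Fintype G]
    (p n : ℕ) (hp : p.Prime) (hn : 1 ≤ n) (hcard : Fintype.card G = p ^ n)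
    (X : CohCfg G) (hs : IsScheme X) (hc : IsCirculant X) :
    Sesquiseparable X := by
  intro Ω'' X' φ ⟨hφ, hses⟩
  haveI : Fact p.Prime := ⟨hp⟩
  haveI := X'.finite
  have hcard' : Nat.card G = p ^ n := by rw [Nat.card_eq_fintype_card, hcard]
  let e0 : Multiplicative (ZMod (p ^ n)) ≃* G := hcard' ▸ zmodCyclicMulEquiv (inferInstance : IsCyclic G)
  let e : ZMod (p ^ n) ≃ G := Multiplicative.ofAdd.trans e0.toEquiv
  have e_add : ∀ x y, e (x + y) = e x * e y := fun x y => map_mul e0 (Multiplicative.ofAdd x) (Multiplicative.ofAdd y)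
  let D : ZMod (p ^ n) → Set (G × G) := fun z => col X (e 0) (e z)
  have hD : ∀ a b, col X (e a) (e b) = D (b - a) := by
    intro a b
    rw [col_iff X (col_mem X _ _), ← hc (e a) _ (col_mem X _ _)]
    refine ⟨(e 0, e (b - a)), mem_col X _ _, ?_⟩
    simp only [← e_add]
    rw [zero_add, sub_add_cancel]
  have mS : Match (fun a b => D (b - a)) (fun a b => D (b - a)) := by
    have := (col_match X).comp e e
    simpa only [hD] using this
  have mC : Match (fun a b => D (b - a)) (icol hφ) := by
    have := (icol_match hφ).comp e (Equiv.refl _)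
    simpa only [hD, Equiv.refl_apply] using this
  have D0 : ∀ z, D z = D 0 → z = 0 := fun z h => (e.injective (col_diag X _ _ _ h)).symm
  have hneg : ∀ z z', D z = D z' → D (-z) = D (-z') := by
    intro z z' h
    have h1 := col_inv X _ _ _ _ h
    rw [hD, hD, zero_sub, zero_sub] at h1
    exact h1
  have S : SR D := by
    refine ⟨fun z z' h => ?_, hneg, D0⟩
    obtain ⟨f, hf⟩ := mS.equiv (a := 0) (b := z) (a' := 0) (b' := z') (by simpa using h)
    exact ⟨f, fun v => by simpa using hf v⟩
  have hsur : ∀ a b, ∃ z, icol hφ a b = D z := by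
    intro a b
    obtain ⟨⟨x, y⟩, hxy⟩ := X.nonemp _ (icol_mem hφ a b)
    refine ⟨e.symm y - e.symm x, ?_⟩
    rw [← hD]
    simpa using ((col_iff X (icol_mem hφ a b)).2 hxy).symm
  have hdg : ∀ a b, icol hφ a b = D 0 → a = b := by
    intro a b h
    exact (icol_match hφ).diag (col_diag X) (icol_diag hφ) (e 0) a b h.symm
  have I : Img D (icol hφ) := by
    refine ⟨mC, hsur, fun a b => ⟨hdg a b, ?_⟩, ?_⟩
    · rintro rfl
      obtain ⟨z, hz⟩ := hsur a a
      obtain ⟨f, hf⟩ := mC.equiv (a := 0) (b := z) (a' := a) (b' := a) (by simpa using hz.symm)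
      have h1 := (hf 0).1
      simp only [sub_self] at h1
      have h2 := hdg _ _ h1
      rw [← h2] at h1
      exact h1
    · intro a b z h
      have h1 := icol_inv hφ (a := e 0) (b := e z) h.symm
      rw [hD, zero_sub] at h1
      exact h1.symm
  have hD0 : D 0 = {q : G × G | q.1 = q.2} := (col_iff X hs).2 rfl
  have hU : diagRel (Set.univ : Set G) = D 0 := by
    rw [hD0]; ext q; simp [diagRel]
  have Q : Ses.{u} D (icol hφ) := by
    intro α α'
    obtain ⟨Y, Y', ψ, hY, hY', hψ, halg, hpt⟩ := hses Set.univ (by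
      unfold IsFiber; rw [hU]; exact col_mem X _ _) (e α) (Set.mem_univ _) α' (by
      change (α', α') ∈ φ (diagRel Set.univ)
      rw [hU]
      exact (icol_iff hφ (col_mem X _ _)).1 ((I.diag α' α').2 rfl))
    have ref : ∀ a b, col Y a b ⊆ col X a b := fun a b =>
      hY.1 _ (col_mem X a b) _ (col_mem Y a b) ⟨(a, b), mem_col Y a b, mem_col X a b⟩
    have hαα : col Y (e α) (e α) = {(e α, e α)} := (col_iff Y hY.2.1).2 rfl
    refine ⟨Set (G × G), fun a b => col Y (e a) (e b), icol hψ, ?_⟩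
    refine ⟨(col_match Y).comp e e, by simpa using (icol_match hψ).comp e (Equiv.refl _), ?_, ?_, ?_, ?_, ?_, ?_, ?_⟩
    · intro a b a1 b1 h
      rw [← hD, ← hD, eq_comm, col_iff X (col_mem X _ _)]
      refine ref _ _ ?_
      rw [h]; exact mem_col Y _ _
    · intro a b a' b' h
      rw [← hD, icol_iff hφ (col_mem X _ _), ← halg _ (col_mem X _ _)]
      exact ⟨ψ (col Y (e a) (e b)), ⟨_, ⟨col_mem Y _ _, ref _ _⟩, rfl⟩, (icol_iff hψ (col_mem Y _ _)).1 h.symm⟩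
    · intro a b a1 b1 h
      exact col_inv Y _ _ _ _ h
    · intro a b a1 b1 h
      exact icol_inv hψ h
    · rw [hαα, eq_comm, icol_iff hψ hY.2.1, hpt]; rfl
    · intro a b h
      simp only [hαα] at h
      rw [col_iff Y hY.2.1] at h
      have := Prod.ext_iff.1 (Set.mem_singleton_iff.1 h)
      exact ⟨e.injective this.1, e.injective this.2⟩
    · intro a b h
      simp only [hαα] at h
      rw [icol_iff hψ hY.2.1, hpt] at h
      exact Prod.ext_iff.1 (Set.mem_singleton_iff.1 h)
  haveI : Nonempty Ω'' := by
    obtain ⟨q, -⟩ := X'.nonemp _ (hφ.bijOn.mapsTo (col_mem X (e 0) (e 0)))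
    exact ⟨q.1⟩
  obtain ⟨f, hf⟩ := main hn S I Q
  have finj : Function.Injective f := by
    intro y z h
    have h1 := hf y z
    rw [(I.diag _ _).2 h] at h1
    exact (sub_eq_zero.1 (D0 _ h1.symm)).symm
  have fbij : Function.Bijective f := by
    obtain ⟨d, -⟩ := I.eqv (Classical.arbitrary Ω'')
    have h1 : Function.Injective (f ∘ d.symm) := finj.comp d.symm.injective
    have h2 := Finite.injective_iff_surjective.1 h1
    exact ⟨finj, h2.of_comp⟩
  have Fbij : Function.Bijective (f ∘ e.symm) := fbij.comp e.symm.bijective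
  refine ⟨f ∘ e.symm, Fbij, fun s hs => ?_⟩
  have hF : ∀ a b, icol hφ ((f ∘ e.symm) a) ((f ∘ e.symm) b) = col X a b := by
    intro a b
    rw [Function.comp_apply, Function.comp_apply, hf, ← hD]; simp
  ext ⟨a', b'⟩
  rw [← icol_iff hφ hs]
  constructor
  · obtain ⟨a, rfl⟩ := Fbij.2 a'
    obtain ⟨b, rfl⟩ := Fbij.2 b'
    intro h
    rw [hF, col_iff X hs] at h
    exact ⟨(a, b), h, rfl⟩
  · rintro ⟨⟨a, b⟩, h, heq⟩
    obtain ⟨rfl, rfl⟩ := Prod.ext_iff.1 heq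
    rw [← col_iff X hs, ← hF] at h
    exact h

end Circ

open CohCfg in
/-- Theorem: every circulant scheme of prime power degree is sesquiseparable. -/
theorem stmt_18 {G : Type u} [CommGroup G] [IsCyclic G] [Fintype G]
    (p n : ℕ) (hp : p.Prime) (hn : 1 ≤ n) (hcard : Fintype.card G = p ^ n)
    (X : CohCfg G) (hs : IsScheme X) (hc : IsCirculant X) :
    Sesquiseparable X := by
  exact Circ.final p n hp hn hcard X hs hc
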